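/- arXiv:2405.00778 — 2 statements merged into one kernel-verified Lean document; each statement's English description precedes it below -/
import Mathlib

section
/- Let p be a prime and let m, n, s, r be integers with 0 ≤ s ≤ m and 0 ≤ r ≤ n. Suppose that s ≤ 3, or m − s ≤ 1, or (m − s = 2 and n − r = 2). Then for every set E ⊆ [m]×[n], E is independent in the tensor matroid T_{m,n}(s,r,𝔽_p) (where 𝔽_p = ℤ/pℤ) if and only if E is independent in the tensor matroid T_{m,n}(s,r,ℚ); that is, the matroids T_{m,n}(s,r,p) and T_{m,n}(s,r,0) coincide. -/
open scoped Classical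

noncomputable section

/-- The field of fractions of the polynomial ring over `F` in variables
`X i k` (`i ∈ [m]`, `k ∈ [s]`) and `Y j l` (`j ∈ [n]`, `l ∈ [r]`). -/
abbrev TField (F : Type*) [Field F] (m n s r : ℕ) :=
  FractionRing (MvPolynomial ((Fin m × Fin s) ⊕ (Fin n × Fin r)) F)

/-- The vector `u_i ⊗ v_j ∈ K_F^{[s]×[r]}` with `(k,l)`-entry `X_{ik} · Y_{jl}`. -/
noncomputable def tvec (F : Type*) [Field F] (m n s r : ℕ) (e : Fin m × Fin n) :
    Fin s × Fin r → TField F m n s r := fun kl =>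
  algebraMap (MvPolynomial ((Fin m × Fin s) ⊕ (Fin n × Fin r)) F) (TField F m n s r)
      (MvPolynomial.X (Sum.inl (e.1, kl.1))) *
  algebraMap (MvPolynomial ((Fin m × Fin s) ⊕ (Fin n × Fin r)) F) (TField F m n s r)
      (MvPolynomial.X (Sum.inr (e.2, kl.2)))

/-- `E` is independent in the tensor matroid `T_{m,n}(s,r,F)`: the family
`{u_i ⊗ v_j : (i,j) ∈ E}` is linearly independent over `K_F`. -/
def TensorIndep (F : Type*) [Field F] (m n s r : ℕ) (E : Set (Fin m × Fin n)) : Prop :=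
  LinearIndependent (TField F m n s r) (fun e : E => tvec F m n s r e)

/-- `E` is spanning in the tensor matroid `T_{m,n}(s,r,F)`: the family
`{u_i ⊗ v_j : (i,j) ∈ E}` spans `K_F^{[s]×[r]}`. -/
def TensorSpanning (F : Type*) [Field F] (m n s r : ℕ) (E : Set (Fin m × Fin n)) : Prop :=
  Submodule.span (TField F m n s r) (tvec F m n s r '' E) = ⊤

theorem spec_li {R K L ι κ : Type*} [CommRing R] [Field K] [Field L] [Finite ι] [Finite κ]
    (ψ : R →+* K) (hψ : Function.Injective ψ) (φ : R →+* L) (w : ι → κ → R)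
    (h : LinearIndependent L (fun i k => φ (w i k))) :
    LinearIndependent K (fun i k => ψ (w i k)) := by
  classical
  cases nonempty_fintype ι
  cases nonempty_fintype κ
  let A : Matrix ι κ L := Matrix.of fun i k => φ (w i k)
  have hA : LinearIndependent L A.row := h
  have hspan : Submodule.span L (Set.range A.col) = ⊤ := by
    apply Submodule.eq_top_of_finrank_eq
    rw [← Matrix.rank_eq_finrank_span_cols, hA.rank_matrix]
    simp
  obtain ⟨b, hb1, hb2, hbs, hb3⟩ := exists_linearIndepOn_extension (K := L) (v := A.col)
    (s := ∅) (t := Set.univ) (by simp) (by simp)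
  have hb : Submodule.span L (Set.range (fun x : b => A.col x)) = ⊤ := by
    rw [eq_top_iff, ← hspan, Submodule.span_le]
    intro x hx
    rw [Set.image_univ] at hbs
    have h3 := hbs hx
    rwa [Set.image_eq_range] at h3
  let B : Module.Basis b L (ι → L) := Module.Basis.mk (v := fun x : b => A.col x) hb3 hb.ge
  have e : ι ≃ b := (Pi.basisFun L ι).indexEquiv B
  have hli : LinearIndependent L (fun i : ι => A.col (e i)) := hb3.comp e e.injective
  have hdet : (Matrix.of fun i j => w i (e j)).det ≠ 0 := by
    intro h0
    have h1 : LinearIndependent L (A.submatrix id (fun i => (e i : κ))).col := hli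
    rw [Matrix.linearIndependent_cols_iff_isUnit, Matrix.isUnit_iff_isUnit_det,
      isUnit_iff_ne_zero] at h1
    apply h1
    have : A.submatrix id (fun i => (e i : κ)) = φ.mapMatrix (Matrix.of fun i j => w i (e j)) := by
      ext i j; rfl
    rw [this, ← RingHom.map_det, h0, map_zero]
  have hdet2 : (ψ.mapMatrix (Matrix.of fun i j => w i (e j))).det ≠ 0 := by
    rw [← RingHom.map_det]
    exact fun h0 => hdet (hψ (by rw [h0, map_zero]))
  have h2 : LinearIndependent K (ψ.mapMatrix (Matrix.of fun i j => w i (e j))).row := by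
    rw [Matrix.linearIndependent_rows_iff_isUnit, Matrix.isUnit_iff_isUnit_det,
      isUnit_iff_ne_zero]
    exact hdet2
  refine LinearIndependent.of_comp (LinearMap.funLeft K K (fun i => (e i : κ))) ?_
  exact h2

/-- `u_i ⊗ v_j` -/
def tv {K : Type*} [Field K] {m n s r : ℕ} (u : Fin m → Fin s → K) (v : Fin n → Fin r → K)
    (e : Fin m × Fin n) : Fin s × Fin r → K := fun kl => u e.1 kl.1 * v e.2 kl.2

def genU (F : Type*) [Field F] (m n s r : ℕ) (i : Fin m) (k : Fin s) : TField F m n s r :=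
  algebraMap (MvPolynomial ((Fin m × Fin s) ⊕ (Fin n × Fin r)) F) (TField F m n s r)
    (MvPolynomial.X (Sum.inl (i, k)))

def genV (F : Type*) [Field F] (m n s r : ℕ) (j : Fin n) (l : Fin r) : TField F m n s r :=
  algebraMap (MvPolynomial ((Fin m × Fin s) ⊕ (Fin n × Fin r)) F) (TField F m n s r)
    (MvPolynomial.X (Sum.inr (j, l)))

theorem tvec_eq (F : Type*) [Field F] (m n s r : ℕ) :
    tvec F m n s r = tv (genU F m n s r) (genV F m n s r) := rfl

theorem indep_of_special {F L : Type*} [Field F] [Field L] [Algebra F L] {m n s r : ℕ}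
    (u : Fin m → Fin s → L) (v : Fin n → Fin r → L) (E : Set (Fin m × Fin n))
    (h : LinearIndependent L (fun e : E => tv u v e)) : TensorIndep F m n s r E := by
  let φ : MvPolynomial ((Fin m × Fin s) ⊕ (Fin n × Fin r)) F →+* L :=
    (MvPolynomial.aeval (R := F) (Sum.elim (fun x => u x.1 x.2) (fun x => v x.1 x.2))).toRingHom
  have := spec_li (algebraMap (MvPolynomial ((Fin m × Fin s) ⊕ (Fin n × Fin r)) F)
    (TField F m n s r)) (IsFractionRing.injective _ _) φ
    (fun (e : E) (kl : Fin s × Fin r) => MvPolynomial.X (Sum.inl (e.1.1, kl.1)) *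
      MvPolynomial.X (Sum.inr (e.1.2, kl.2))) (by
      convert h using 3
      simp [φ, tv])
  unfold TensorIndep
  have key : (fun e : E => tvec F m n s r e) = fun (e : E) (kl : Fin s × Fin r) =>
      algebraMap (MvPolynomial ((Fin m × Fin s) ⊕ (Fin n × Fin r)) F) (TField F m n s r)
      (MvPolynomial.X (Sum.inl (e.1.1, kl.1)) * MvPolynomial.X (Sum.inr (e.1.2, kl.2))) := by
    funext e kl
    simp only [tvec, map_mul]
  rw [key]
  exact this

theorem easy_dir (p : ℕ) [Fact p.Prime] (m n s r : ℕ) (E : Set (Fin m × Fin n))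
    (h : TensorIndep (ZMod p) m n s r E) : TensorIndep ℚ m n s r E := by
  let σ := ((Fin m × Fin s) ⊕ (Fin n × Fin r))
  let φ : MvPolynomial σ ℤ →+* TField (ZMod p) m n s r :=
    (algebraMap (MvPolynomial σ (ZMod p)) (TField (ZMod p) m n s r)).comp
      (MvPolynomial.map (Int.castRingHom (ZMod p)))
  let ψ : MvPolynomial σ ℤ →+* TField ℚ m n s r :=
    (algebraMap (MvPolynomial σ ℚ) (TField ℚ m n s r)).comp
      (MvPolynomial.map (Int.castRingHom ℚ))
  have hψ : Function.Injective ψ := by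
    apply (IsFractionRing.injective (MvPolynomial σ ℚ) (TField ℚ m n s r)).comp
    exact MvPolynomial.map_injective _ Int.cast_injective
  have := spec_li ψ hψ φ
    (fun (e : E) (kl : Fin s × Fin r) => MvPolynomial.X (Sum.inl (e.1.1, kl.1)) *
      MvPolynomial.X (Sum.inr (e.1.2, kl.2))) (by
      unfold TensorIndep at h
      have key : (fun e : E => tvec (ZMod p) m n s r e) = fun (e : E) (kl : Fin s × Fin r) =>
          φ (MvPolynomial.X (Sum.inl (e.1.1, kl.1)) * MvPolynomial.X (Sum.inr (e.1.2, kl.2))) := by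
        funext e kl
        simp only [tvec, map_mul, φ, RingHom.comp_apply, MvPolynomial.map_X]
        rfl
      rw [key] at h
      exact h)
  unfold TensorIndep
  have key : (fun e : E => tvec ℚ m n s r e) = fun (e : E) (kl : Fin s × Fin r) =>
      ψ (MvPolynomial.X (Sum.inl (e.1.1, kl.1)) * MvPolynomial.X (Sum.inr (e.1.2, kl.2))) := by
    funext e kl
    simp only [tvec, map_mul, ψ, RingHom.comp_apply, MvPolynomial.map_X]
    rfl
  rw [key]
  exact this

theorem genU_li (F : Type*) [Field F] (m n s r : ℕ) (A : Finset (Fin m)) (hA : A.card ≤ s) :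
    LinearIndependent (TField F m n s r) (fun i : A => genU F m n s r i) := by
  have : Nonempty (A ↪ Fin s) := by
    rw [Function.Embedding.nonempty_iff_card_le]; simpa using hA
  obtain ⟨g⟩ := this
  let φ : MvPolynomial ((Fin m × Fin s) ⊕ (Fin n × Fin r)) F →+* F :=
    (MvPolynomial.aeval (R := F) (Sum.elim
      (fun x => if h : x.1 ∈ A then (Pi.single (g ⟨x.1, h⟩) 1 : Fin s → F) x.2 else 0)
        (fun x => 0))).toRingHom
  refine spec_li (algebraMap (MvPolynomial ((Fin m × Fin s) ⊕ (Fin n × Fin r)) F)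
    (TField F m n s r)) (IsFractionRing.injective _ _) φ
    (fun (i : A) (k : Fin s) => MvPolynomial.X (Sum.inl (i.1, k))) ?_
  have h2 : LinearIndependent F (fun i : A => (Pi.single (g i) 1 : Fin s → F)) :=
    (Pi.linearIndependent_single_one (Fin s) F).comp g g.injective
  convert h2 using 3
  simp [φ]

theorem genV_li (F : Type*) [Field F] (m n s r : ℕ) (A : Finset (Fin n)) (hA : A.card ≤ r) :
    LinearIndependent (TField F m n s r) (fun i : A => genV F m n s r i) := by
  have : Nonempty (A ↪ Fin r) := by
    rw [Function.Embedding.nonempty_iff_card_le]; simpa using hA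
  obtain ⟨g⟩ := this
  let φ : MvPolynomial ((Fin m × Fin s) ⊕ (Fin n × Fin r)) F →+* F :=
    (MvPolynomial.aeval (R := F) (Sum.elim (fun x => 0)
      (fun x => if h : x.1 ∈ A then (Pi.single (g ⟨x.1, h⟩) 1 : Fin r → F) x.2 else 0)
        )).toRingHom
  refine spec_li (algebraMap (MvPolynomial ((Fin m × Fin s) ⊕ (Fin n × Fin r)) F)
    (TField F m n s r)) (IsFractionRing.injective _ _) φ
    (fun (i : A) (k : Fin r) => MvPolynomial.X (Sum.inr (i.1, k))) ?_
  have h2 : LinearIndependent F (fun i : A => (Pi.single (g i) 1 : Fin r → F)) :=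
    (Pi.linearIndependent_single_one (Fin r) F).comp g g.injective
  convert h2 using 3
  simp [φ]

def DI {K : Type*} [Field K] {m n a b : ℕ} (P : Matrix (Fin m) (Fin a) K)
    (Q : Matrix (Fin n) (Fin b) K) (G : Set (Fin m × Fin n)) : Prop :=
  ∀ R : Matrix (Fin m) (Fin n) K, (∀ e, e ∉ G → R e.1 e.2 = 0) → P.transpose * R = 0 →
    R * Q = 0 → R = 0

def SP {K : Type*} [Field K] {m n s r : ℕ} (X : Matrix (Fin m) (Fin s) K)
    (Y : Matrix (Fin n) (Fin r) K) (E : Set (Fin m × Fin n)) : Prop :=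
  ∀ B : Matrix (Fin s) (Fin r) K, (∀ e ∈ E, (X * B * Y.transpose) e.1 e.2 = 0) → B = 0

def MInj {K : Type*} [Field K] {m s : ℕ} (X : Matrix (Fin m) (Fin s) K) : Prop :=
  ∀ x, X.mulVec x = 0 → x = 0

def CK {K : Type*} [Field K] {m s a : ℕ} (X : Matrix (Fin m) (Fin s) K)
    (P : Matrix (Fin m) (Fin a) K) : Prop :=
  ∀ y : Fin m → K, P.transpose.mulVec y = 0 ↔ ∃ x, X.mulVec x = y

theorem MInj.mul {K : Type*} [Field K] {m s t : ℕ} {X : Matrix (Fin m) (Fin s) K}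
    (h : MInj X) {C : Matrix (Fin s) (Fin t) K} (hC : X * C = 0) : C = 0 := by
  ext i j
  have : X.mulVec (fun k => C k j) = 0 := by
    ext i'
    exact congrFun (congrFun hC i') j
  exact congrFun (h _ this) i

theorem CK.ex {K : Type*} [Field K] {m s a t : ℕ} {X : Matrix (Fin m) (Fin s) K}
    {P : Matrix (Fin m) (Fin a) K} (h : CK X P) {R : Matrix (Fin m) (Fin t) K}
    (hR : P.transpose * R = 0) : ∃ C : Matrix (Fin s) (Fin t) K, R = X * C := by
  have : ∀ j, ∃ x, X.mulVec x = fun i => R i j := by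
    intro j
    rw [← h]
    ext i'
    exact congrFun (congrFun hR i') j
  choose c hc using this
  refine ⟨Matrix.of fun k j => c j k, ?_⟩
  ext i j
  exact (congrFun (hc j) i).symm

theorem CK.zero {K : Type*} [Field K] {m s a : ℕ} {X : Matrix (Fin m) (Fin s) K}
    {P : Matrix (Fin m) (Fin a) K} (h : CK X P) : P.transpose * X = 0 := by
  ext i j
  have := (h (X.mulVec (Pi.single j 1))).2 ⟨_, rfl⟩
  have h2 := congrFun this i
  rw [Matrix.mulVec_mulVec] at h2
  simpa using h2

theorem duality {K : Type*} [Field K] {m n s r a b : ℕ} {X : Matrix (Fin m) (Fin s) K}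
    {Y : Matrix (Fin n) (Fin r) K} {P : Matrix (Fin m) (Fin a) K} {Q : Matrix (Fin n) (Fin b) K}
    (hX : MInj X) (hY : MInj Y) (hXP : CK X P) (hYQ : CK Y Q) (E : Set (Fin m × Fin n)) :
    SP X Y E ↔ DI P Q Eᶜ := by
  constructor
  · intro h R hR hP hQ
    obtain ⟨C, rfl⟩ := hXP.ex hP
    have h1 : C * Q = 0 := hX.mul (by rw [← Matrix.mul_assoc, hQ])
    have h2 : Q.transpose * C.transpose = 0 := by
      rw [← Matrix.transpose_mul, h1, Matrix.transpose_zero]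
    obtain ⟨D, hD⟩ := hYQ.ex h2
    have h3 : C = D.transpose * Y.transpose := by
      rw [← Matrix.transpose_mul, ← hD, Matrix.transpose_transpose]
    have h4 := h D.transpose (fun e he => by
      rw [Matrix.mul_assoc, ← h3]
      exact hR e (by simpa using he))
    rw [h3, h4]; simp
  · intro h B hB
    have h1 : X * B * Y.transpose = 0 := by
      apply h
      · intro e he
        exact hB e (by simpa using he)
      · rw [Matrix.mul_assoc, ← Matrix.mul_assoc, hXP.zero, Matrix.zero_mul]
      · rw [Matrix.mul_assoc]
        have := hYQ.zero
        have h2 : Y.transpose * Q = 0 := by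
          rw [← Matrix.transpose_transpose (Y.transpose * Q), Matrix.transpose_mul,
            Matrix.transpose_transpose, this, Matrix.transpose_zero]
        rw [h2, Matrix.mul_zero]
    rw [Matrix.mul_assoc] at h1
    have h2 := hX.mul h1
    have h3 : Y * B.transpose = 0 := by
      rw [← Matrix.transpose_transpose (Y * B.transpose), Matrix.transpose_mul,
        Matrix.transpose_transpose, h2, Matrix.transpose_zero]
    have h4 := hY.mul h3
    rw [← Matrix.transpose_transpose B, h4, Matrix.transpose_zero]

theorem MInj.rank {K : Type*} [Field K] {m s : ℕ} {X : Matrix (Fin m) (Fin s) K}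
    (h : MInj X) : X.rank = s := by
  have h1 : Function.Injective X.mulVecLin := by
    rw [← LinearMap.ker_eq_bot, LinearMap.ker_eq_bot']
    exact h
  rw [Matrix.rank, LinearMap.finrank_range_of_inj h1]
  simp

theorem finrank_ker_transpose {K : Type*} [Field K] {m a : ℕ} {P : Matrix (Fin m) (Fin a) K}
    (h : MInj P) : Module.finrank K (LinearMap.ker P.transpose.mulVecLin) + a = m := by
  have h1 := LinearMap.finrank_range_add_finrank_ker P.transpose.mulVecLin
  have h2 : P.transpose.rank = a := by rw [Matrix.rank_transpose, h.rank]
  rw [Matrix.rank] at h2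
  rw [h2] at h1
  simp at h1
  omega

theorem exists_X_of_P {K : Type*} [Field K] {m s a : ℕ} (hm : m = s + a)
    (P : Matrix (Fin m) (Fin a) K) (h : MInj P) :
    ∃ X : Matrix (Fin m) (Fin s) K, MInj X ∧ CK X P := by
  have h1 := finrank_ker_transpose h
  let B : Module.Basis (Fin s) K (LinearMap.ker P.transpose.mulVecLin) :=
    Module.finBasisOfFinrankEq K _ (by omega)
  have hmv : ∀ x, (Matrix.of fun i k => (B k : Fin m → K) i).mulVec x =
      ((∑ k, x k • B k : LinearMap.ker P.transpose.mulVecLin) : Fin m → K) := by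
    intro x
    ext i
    simp [Matrix.mulVec, dotProduct, mul_comm]
  refine ⟨Matrix.of fun i k => (B k : Fin m → K) i, ?_, ?_⟩
  · intro x hx
    rw [hmv] at hx
    have h2 : ∑ k, x k • B k = 0 := by ext1; exact hx
    funext k
    exact Fintype.linearIndependent_iff.1 B.linearIndependent x h2 k
  · intro y
    constructor
    · intro hy
      refine ⟨B.repr ⟨y, hy⟩, ?_⟩
      rw [hmv, B.sum_repr]
    · rintro ⟨x, rfl⟩
      rw [hmv]
      exact (∑ k, x k • B k : LinearMap.ker P.transpose.mulVecLin).2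

theorem exists_P_of_X {K : Type*} [Field K] {m s a : ℕ} (hm : m = s + a)
    (X : Matrix (Fin m) (Fin s) K) (h : MInj X) :
    ∃ P : Matrix (Fin m) (Fin a) K, MInj P ∧ CK X P := by
  obtain ⟨P, hP, hc⟩ := exists_X_of_P (s := a) (a := s) (by omega) X h
  refine ⟨P, hP, ?_⟩
  have h0 : P.transpose * X = 0 := by
    have := hc.zero
    rw [← Matrix.transpose_transpose (P.transpose * X), Matrix.transpose_mul,
            Matrix.transpose_transpose, this, Matrix.transpose_zero]
  have hle : LinearMap.range X.mulVecLin ≤ LinearMap.ker P.transpose.mulVecLin := by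
    rintro _ ⟨x, rfl⟩
    rw [LinearMap.mem_ker, Matrix.mulVecLin_apply, Matrix.mulVecLin_apply, Matrix.mulVec_mulVec, h0,
      Matrix.zero_mulVec]
  have heq : LinearMap.range X.mulVecLin = LinearMap.ker P.transpose.mulVecLin := by
    apply Submodule.eq_of_le_of_finrank_eq hle
    have h1 := finrank_ker_transpose hP
    have h2 := h.rank
    rw [Matrix.rank] at h2
    omega
  intro y
  have : y ∈ LinearMap.range X.mulVecLin ↔ y ∈ LinearMap.ker P.transpose.mulVecLin := by rw [heq]
  rw [LinearMap.mem_ker, Matrix.mulVecLin_apply] at this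
  exact this.symm

theorem xby {K : Type*} [Field K] {m n s r : ℕ} (X : Matrix (Fin m) (Fin s) K)
    (Y : Matrix (Fin n) (Fin r) K) (B : Matrix (Fin s) (Fin r) K) (e : Fin m × Fin n) :
    (X * B * Y.transpose) e.1 e.2 = ∑ kl : Fin s × Fin r, B kl.1 kl.2 * tv X Y e kl := by
  simp only [Matrix.mul_apply, Matrix.transpose_apply, tv, Finset.sum_mul,
    Fintype.sum_prod_type]
  rw [Finset.sum_comm]
  refine Finset.sum_congr rfl fun k _ => Finset.sum_congr rfl fun l _ => by ring

theorem SP.span {K : Type*} [Field K] {m n s r : ℕ} {X : Matrix (Fin m) (Fin s) K}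
    {Y : Matrix (Fin n) (Fin r) K} {E : Set (Fin m × Fin n)} (h : SP X Y E) :
    Submodule.span K (tv X Y '' E) = ⊤ := by
  by_contra hne
  obtain ⟨f, hf0, hf⟩ := Submodule.exists_le_ker_of_lt_top _ (lt_top_iff_ne_top.2 hne)
  have hfx : ∀ w : Fin s × Fin r → K, f w = ∑ kl, f (Pi.single kl 1) * w kl := by
    intro w
    conv_lhs => rw [pi_eq_sum_univ' w]
    rw [map_sum]
    refine Finset.sum_congr rfl fun kl _ => ?_
    rw [map_smul, smul_eq_mul, mul_comm]
  have := h (Matrix.of fun k l => f (Pi.single (k, l) 1)) (fun e he => by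
    rw [xby]
    have h1 : tv X Y e ∈ LinearMap.ker f := hf (Submodule.subset_span ⟨e, he, rfl⟩)
    rw [LinearMap.mem_ker, hfx] at h1
    simpa using h1)
  apply hf0
  ext w
  simp only [LinearMap.comp_apply, LinearMap.zero_apply]
  have h2 : f (Pi.single w 1) = 0 := congrFun (congrFun this w.1) w.2
  simpa using h2

theorem SP.li {K : Type*} [Field K] {m n s r : ℕ} {X : Matrix (Fin m) (Fin s) K}
    {Y : Matrix (Fin n) (Fin r) K} {E : Set (Fin m × Fin n)} (h : SP X Y E)
    (hE : Fintype.card E = s * r) : LinearIndependent K (fun e : E => tv X Y e) := by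
  apply linearIndependent_of_top_le_span_of_card_eq_finrank
  · rw [← Set.image_eq_range, h.span]
  · simp [hE]

theorem genU_cols (F : Type*) [Field F] (m n s r : ℕ) (A : Finset (Fin m)) (hA : A.card = s)
    (x : Fin s → TField F m n s r) (hx : ∀ i ∈ A, ∑ k, genU F m n s r i k * x k = 0) : x = 0 := by
  have h1 := genU_li F m n s r A hA.le
  have h2 := h1.span_eq_top_of_card_eq_finrank' (by simp [hA])
  let f : (Fin s → TField F m n s r) →ₗ[TField F m n s r] TField F m n s r :=
    { toFun := fun u => ∑ k, u k * x k
      map_add' := fun u v => by simp [add_mul, Finset.sum_add_distrib]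
      map_smul' := fun c u => by simp [Finset.mul_sum, mul_assoc] }
  have h3 : f = 0 := by
    apply LinearMap.ext_on_range h2
    intro i
    exact hx i i.2
  funext k
  have := LinearMap.congr_fun h3 (Pi.single k 1)
  simpa [f, Pi.single_apply] using this

theorem genV_cols (F : Type*) [Field F] (m n s r : ℕ) (A : Finset (Fin n)) (hA : A.card = r)
    (x : Fin r → TField F m n s r) (hx : ∀ i ∈ A, ∑ k, genV F m n s r i k * x k = 0) : x = 0 := by
  have h1 := genV_li F m n s r A hA.le
  have h2 := h1.span_eq_top_of_card_eq_finrank' (by simp [hA])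
  let f : (Fin r → TField F m n s r) →ₗ[TField F m n s r] TField F m n s r :=
    { toFun := fun u => ∑ k, u k * x k
      map_add' := fun u v => by simp [add_mul, Finset.sum_add_distrib]
      map_smul' := fun c u => by simp [Finset.mul_sum, mul_assoc] }
  have h3 : f = 0 := by
    apply LinearMap.ext_on_range h2
    intro i
    exact hx i i.2
  funext k
  have := LinearMap.congr_fun h3 (Pi.single k 1)
  simpa [f, Pi.single_apply] using this

def gU (F : Type*) [Field F] (m n s r : ℕ) : Matrix (Fin m) (Fin s) (TField F m n s r) :=
  Matrix.of (genU F m n s r)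

def gV (F : Type*) [Field F] (m n s r : ℕ) : Matrix (Fin n) (Fin r) (TField F m n s r) :=
  Matrix.of (genV F m n s r)

theorem genU_minj (F : Type*) [Field F] (m n s r : ℕ) (hs : s ≤ m) :
    MInj (gU F m n s r) := by
  intro x hx
  obtain ⟨A, -, hA⟩ := Finset.exists_subset_card_eq (s := (Finset.univ : Finset (Fin m)))
    (n := s) (by simpa using hs)
  exact genU_cols F m n s r A hA x (fun i _ => congrFun hx i)

theorem genV_minj (F : Type*) [Field F] (m n s r : ℕ) (hr : r ≤ n) :
    MInj (gV F m n s r) := by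
  intro x hx
  obtain ⟨A, -, hA⟩ := Finset.exists_subset_card_eq (s := (Finset.univ : Finset (Fin n)))
    (n := r) (by simpa using hr)
  exact genV_cols F m n s r A hA x (fun i _ => congrFun hx i)

theorem extend_basis (F : Type*) [Field F] (m n s r : ℕ) (hs : s ≤ m) (hr : r ≤ n)
    (E : Set (Fin m × Fin n)) (hE : TensorIndep F m n s r E) :
    ∃ E' : Set (Fin m × Fin n), E ⊆ E' ∧ Fintype.card E' = s * r ∧
      SP (gU F m n s r)
        (gV F m n s r) E' := by
  obtain ⟨b, hb1, hb2, hbs, hb3⟩ := exists_linearIndepOn_extension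
    (K := TField F m n s r) (v := tvec F m n s r)
    (s := E) (t := Set.univ) hE (by simp)
  have hsp : SP (gU F m n s r)
        (gV F m n s r) b := by
    intro B hB
    let f : (Fin s × Fin r → TField F m n s r) →ₗ[TField F m n s r] TField F m n s r :=
      { toFun := fun u => ∑ k, B k.1 k.2 * u k
        map_add' := fun u v => by simp [mul_add, Finset.sum_add_distrib]
        map_smul' := fun c u => by
          simp only [Pi.smul_apply, smul_eq_mul, Finset.mul_sum, RingHom.id_apply]
          exact Finset.sum_congr rfl fun k _ => by ring }
    have hf : Submodule.span (TField F m n s r) (tvec F m n s r '' b) ≤ LinearMap.ker f := by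
      rw [Submodule.span_le]
      rintro _ ⟨e, he, rfl⟩
      have := hB e he
      rw [xby] at this
      exact this
    have h1 : (gU F m n s r) * (B *
        (gV F m n s r).transpose) = 0 := by
      ext i j
      rw [← Matrix.mul_assoc]
      have := hf (hbs ⟨(i, j), trivial, rfl⟩)
      rw [xby _ _ B (i, j)]
      exact this
    have h2 := (genU_minj F m n s r hs).mul h1
    have h3 : (gV F m n s r) * B.transpose = 0 := by
      rw [← Matrix.transpose_transpose (_ * B.transpose), Matrix.transpose_mul,
        Matrix.transpose_transpose, h2, Matrix.transpose_zero]
    have h4 := (genV_minj F m n s r hr).mul h3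
    rw [← Matrix.transpose_transpose B, h4, Matrix.transpose_zero]
  refine ⟨b, hb2, ?_, hsp⟩
  have h1 := hsp.span
  rw [Set.image_eq_range] at h1
  have h2 := Module.finrank_eq_card_basis (Module.Basis.mk (v := fun x : b => tvec F m n s r x)
    hb3 h1.ge)
  rw [← h2]
  simp

/-- Going back. -/
theorem indep_of_DI {F L : Type*} [Field F] [Field L] [Algebra F L] {m n s r a b : ℕ}
    (hm : m = s + a) (hn : n = r + b) (P : Matrix (Fin m) (Fin a) L) (Q : Matrix (Fin n) (Fin b) L)
    (hP : MInj P) (hQ : MInj Q) (E E' : Set (Fin m × Fin n)) (hE : E ⊆ E')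
    (hc : Fintype.card E' = s * r) (h : DI P Q E'ᶜ) : TensorIndep F m n s r E := by
  obtain ⟨X, hX, hXP⟩ := exists_X_of_P hm P hP
  obtain ⟨Y, hY, hYQ⟩ := exists_X_of_P hn Q hQ
  have h1 := ((duality hX hY hXP hYQ E').2 h).li hc
  apply indep_of_special X Y
  exact h1.comp (Set.inclusion hE) (Set.inclusion_injective hE)

theorem exists_avoid {K V κ : Type*} [Field K] [Infinite K] [AddCommGroup V] [Module K V]
    [Finite κ] (W : Submodule K V) (S : κ → Submodule K V) (h : ∀ k, ¬ W ≤ S k) :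
    ∃ c ∈ W, ∀ k, c ∉ S k := by
  classical
  cases nonempty_fintype κ
  let s : Finset (Submodule K W) := Finset.univ.image fun k => (S k).comap W.subtype
  have hs : ⊤ ∉ s := by
    intro ht
    obtain ⟨k, -, hk⟩ := Finset.mem_image.1 ht
    apply h k
    intro x hx
    have : (⟨x, hx⟩ : W) ∈ (S k).comap W.subtype := by rw [hk]; trivial
    exact this
  have h1 := Subspace.biUnion_ne_univ_of_top_notMem hs
  obtain ⟨c, hc⟩ := (Set.ne_univ_iff_exists_notMem _).1 h1
  refine ⟨c, c.2, fun k hk => hc ?_⟩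
  simp only [Set.mem_iUnion]
  exact ⟨(S k).comap W.subtype, Finset.mem_image_of_mem _ (Finset.mem_univ _), hk⟩

theorem finrank_map_mk {K V : Type*} [Field K] [AddCommGroup V] [Module K V]
    [FiniteDimensional K V] (c : V) (S : Submodule K V) :
    Module.finrank K S ≤ Module.finrank K (S.map (K ∙ c).mkQ) + 1 ∧
    (c ∉ S → Module.finrank K S ≤ Module.finrank K (S.map (K ∙ c).mkQ)) := by
  have h1 := ((K ∙ c).mkQ.domRestrict S).finrank_range_add_finrank_ker
  have h2 : LinearMap.range ((K ∙ c).mkQ.domRestrict S) = S.map (K ∙ c).mkQ := by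
    rw [LinearMap.range_domRestrict]
  rw [h2] at h1
  have h3 : Module.finrank K (LinearMap.ker ((K ∙ c).mkQ.domRestrict S)) =
      Module.finrank K ((LinearMap.ker ((K ∙ c).mkQ.domRestrict S)).map S.subtype) :=
    (LinearEquiv.finrank_eq (Submodule.equivMapOfInjective _ S.injective_subtype _))
  have hsub : ∀ x ∈ (LinearMap.ker ((K ∙ c).mkQ.domRestrict S)).map S.subtype,
      x ∈ S ∧ x ∈ K ∙ c := by
    rintro _ ⟨x, hx, rfl⟩
    refine ⟨x.2, ?_⟩
    have : (K ∙ c).mkQ x = 0 := hx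
    simpa using this
  constructor
  · have h4 : Module.finrank K ((LinearMap.ker ((K ∙ c).mkQ.domRestrict S)).map S.subtype) ≤ 1 :=
      (Submodule.finrank_mono (fun x hx => (hsub x hx).2)).trans (by
        have := finrank_span_finset_le_card (R := K) ({c} : Finset V)
        rw [Finset.coe_singleton, Finset.card_singleton] at this
        exact this)
    omega
  · intro hc
    have h4 : (LinearMap.ker ((K ∙ c).mkQ.domRestrict S)).map S.subtype = ⊥ := by
      rw [eq_bot_iff]
      intro x hx
      obtain ⟨hxS, hxc⟩ := hsub x hx
      obtain ⟨a, rfl⟩ := Submodule.mem_span_singleton.1 hxc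
      by_cases ha : a = 0
      · simp [ha]
      · exact absurd ((S.smul_mem_iff ha).1 hxS) hc
    rw [h4, finrank_bot] at h3
    omega

theorem exists_inj {K V : Type*} [Field K] [AddCommGroup V] [Module K V]
    [FiniteDimensional K V] (b : ℕ) (h : Module.finrank K V ≤ b) :
    ∃ H : V →ₗ[K] (Fin b → K), Function.Injective H := by
  let B := Module.finBasis K V
  refine ⟨(Function.ExtendByZero.linearMap K (Fin.castLE h)) ∘ₗ B.equivFun.toLinearMap, ?_⟩
  rw [LinearMap.coe_comp]
  refine Function.Injective.comp ?_ B.equivFun.injective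
  intro x y hxy
  funext i
  have := congrFun hxy (Fin.castLE h i)
  have h2 : ∀ z : Fin (Module.finrank K V) → K,
      (Function.ExtendByZero.linearMap K (Fin.castLE h)) z (Fin.castLE h i) = z i := fun z =>
    (Fin.castLE_injective h).extend_apply _ _ _
  rw [h2, h2] at this
  exact this

theorem choose_base {K : Type*} [Field K] [Infinite K] (b : ℕ) {κ : Type*} [Finite κ] :
    ∀ (d : ℕ) (V : Type*) [AddCommGroup V] [Module K V] [FiniteDimensional K V]
      (_ : Module.finrank K V ≤ b + d)
      (N : κ → Submodule K V) (_ : ∀ k, Module.finrank K (N k) ≤ b),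
      ∃ H : V →ₗ[K] (Fin b → K), ∀ k, ∀ x ∈ N k, H x = 0 → x = 0 := by
  intro d
  induction d with
  | zero =>
    intro V _ _ _ hd N hN
    obtain ⟨H, hH⟩ := exists_inj (K := K) (V := V) b (by omega)
    exact ⟨H, fun k x _ hx => hH (by rw [hx, map_zero])⟩
  | succ d ih =>
    intro V _ _ _ hd N hN
    by_cases hle : Module.finrank K V ≤ b
    · obtain ⟨H, hH⟩ := exists_inj (K := K) (V := V) b (by omega)
      exact ⟨H, fun k x _ hx => hH (by rw [hx, map_zero])⟩
    obtain ⟨c, -, hc⟩ := exists_avoid (⊤ : Submodule K V) N (fun k hk => by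
      have := Submodule.finrank_mono hk
      rw [finrank_top] at this
      have := hN k
      omega)
    by_cases hk : Nonempty κ
    swap
    · exact ⟨0, fun k => absurd ⟨k⟩ hk⟩
    have hc0 : c ≠ 0 := by
      rintro rfl
      exact hc hk.some (Submodule.zero_mem _)
    have hq := (K ∙ c).finrank_quotient_add_finrank
    rw [finrank_span_singleton hc0] at hq
    obtain ⟨H, hH⟩ := ih (V ⧸ (K ∙ c)) (by omega) (fun k => (N k).map (K ∙ c).mkQ) (fun k =>
      (Submodule.finrank_map_le _ _).trans (hN k))
    refine ⟨H ∘ₗ (K ∙ c).mkQ, fun k x hx hx0 => ?_⟩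
    have h1 := hH k ((K ∙ c).mkQ x) ⟨x, hx, rfl⟩ hx0
    have h2 : x ∈ K ∙ c := by simpa using h1
    obtain ⟨a, rfl⟩ := Submodule.mem_span_singleton.1 h2
    by_cases ha : a = 0
    · simp [ha]
    · exact absurd (((N k).smul_mem_iff ha).1 hx) (hc k)

theorem choose_c {K ι : Type*} [Field K] [Infinite K] (b : ℕ) {κ : Type*} [Finite κ]
    (T : Finset ι) :
    ∀ (V : Type*) [AddCommGroup V] [Module K V] [FiniteDimensional K V]
      (F : ι → Submodule K V)
      (_ : ∀ J ⊆ T, J.Nonempty → J.card + b ≤ Module.finrank K (⨆ e ∈ J, F e : Submodule K V))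
      (N : κ → Submodule K V) (_ : ∀ k, Module.finrank K (N k) ≤ b),
      ∃ H : V →ₗ[K] (Fin b → K), (∀ k, ∀ x ∈ N k, H x = 0 → x = 0) ∧
        ∃ x : ι → V, (∀ e ∈ T, x e ∈ F e ∧ H (x e) = 0) ∧ LinearIndepOn K x (T : Set ι) := by
  classical
  induction T using Finset.induction_on with
  | empty =>
    intro V _ _ _ F _ N hN
    obtain ⟨H, hH⟩ := choose_base (K := K) b (Module.finrank K V) V (by omega) N hN
    exact ⟨H, hH, 0, by simp, by simp⟩
  | insert e0 T he0 ih =>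
    intro V _ _ _ F hF N hN
    have hF0 : b + 1 ≤ Module.finrank K (F e0) := by
      have := hF {e0} (by simp) (by simp)
      have h1 : (⨆ e ∈ ({e0} : Finset ι), F e) = F e0 := by simp
      rw [h1, Finset.card_singleton] at this
      omega
    let S : κ ⊕ {J : Finset ι // J ∈ T.powerset ∧ ¬ F e0 ≤ (⨆ e ∈ J, F e)} → Submodule K V :=
      Sum.elim N (fun J => ⨆ e ∈ J.1, F e)
    have hfin : Finite {J : Finset ι // J ∈ T.powerset ∧ ¬ F e0 ≤ (⨆ e ∈ J, F e)} :=
      Finite.of_injective (fun J => (⟨J.1, J.2.1⟩ : T.powerset)) (fun J J' h => by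
        ext1
        exact congrArg (fun x => x.1) h)
    obtain ⟨c, hcF, hc⟩ := exists_avoid (F e0) S (by
      rintro (k | J)
      · intro hle
        have : Module.finrank K (F e0) ≤ Module.finrank K (N k) := Submodule.finrank_mono hle
        have h2 := hN k
        omega
      · exact J.2.2)
    have hcN : ∀ k, c ∉ N k := fun k => hc (Sum.inl k)
    have hcJ : ∀ J ⊆ T, ¬ F e0 ≤ (⨆ e ∈ J, F e) → c ∉ (⨆ e ∈ J, F e : Submodule K V) :=
      fun J hJ hJ2 => hc (Sum.inr ⟨J, Finset.mem_powerset.2 hJ, hJ2⟩)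
    have hc0 : c ≠ 0 := by
      rintro rfl
      refine hcJ ∅ (by simp) (fun h => ?_) (Submodule.zero_mem _)
      have h1 : (⨆ e ∈ (∅ : Finset ι), F e) = ⊥ := by simp
      rw [h1] at h
      have := Submodule.finrank_mono h
      rw [finrank_bot] at this
      omega
    obtain ⟨H, hH, x, hx, hli⟩ := ih (V ⧸ (K ∙ c)) (fun e => (F e).map (K ∙ c).mkQ) (by
      intro J hJ hJn
      have h1 : (⨆ e ∈ J, (F e).map (K ∙ c).mkQ) = (⨆ e ∈ J, F e).map (K ∙ c).mkQ := by
        simp only [Submodule.map_iSup]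
      rw [h1]
      have h2 := finrank_map_mk c (⨆ e ∈ J, F e)
      have h3 := hF J (hJ.trans (Finset.subset_insert _ _)) hJn
      by_cases hle : F e0 ≤ (⨆ e ∈ J, F e)
      · have h4 := hF (insert e0 J) (Finset.insert_subset_insert _ hJ) (by simp)
        rw [Finset.card_insert_of_notMem (fun h => he0 (hJ h)), Finset.iSup_insert,
          sup_eq_right.2 hle] at h4
        omega
      · have := h2.2 (hcJ J hJ hle)
        omega) (fun k => (N k).map (K ∙ c).mkQ) (fun k =>
      (Submodule.finrank_map_le _ _).trans (hN k))
    have hlift : ∀ e, ∃ y : V, (e ∈ T → y ∈ F e ∧ (K ∙ c).mkQ y = x e) := by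
      intro e
      by_cases he : e ∈ T
      · obtain ⟨y, hy, hy2⟩ := (hx e he).1
        exact ⟨y, fun _ => ⟨hy, hy2⟩⟩
      · exact ⟨0, fun h => absurd h he⟩
    choose y hy using hlift
    refine ⟨H ∘ₗ (K ∙ c).mkQ, fun k z hz hz0 => ?_, fun e => if e = e0 then c else y e, ?_, ?_⟩
    · have h1 := hH k ((K ∙ c).mkQ z) ⟨z, hz, rfl⟩ hz0
      have h2 : z ∈ K ∙ c := by simpa using h1
      obtain ⟨a, rfl⟩ := Submodule.mem_span_singleton.1 h2
      by_cases ha : a = 0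
      · simp [ha]
      · exact absurd (((N k).smul_mem_iff ha).1 hz) (hcN k)
    · intro e he
      rcases Finset.mem_insert.1 he with rfl | heT
      · refine ⟨by simpa using hcF, ?_⟩
        have : (K ∙ c).mkQ c = 0 := by simp
        simp only [if_true, LinearMap.comp_apply]
        rw [this, map_zero]
      · have hne : e ≠ e0 := fun h => he0 (h ▸ heT)
        simp only [if_neg hne]
        refine ⟨(hy e heT).1, ?_⟩
        rw [LinearMap.comp_apply, (hy e heT).2]
        exact (hx e heT).2
    · have hyx : ∀ e : (T : Set ι), (K ∙ c).mkQ (if (e : ι) = e0 then c else y e) = x e := by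
        intro e
        have hne : (e : ι) ≠ e0 := fun h => he0 (h ▸ e.2)
        rw [if_neg hne]
        exact (hy e e.2).2
      have hli2 : LinearIndependent K ((K ∙ c).mkQ ∘
          (fun e : (T : Set ι) => if (e : ι) = e0 then c else y e)) := by
        have : ((K ∙ c).mkQ ∘
          (fun e : (T : Set ι) => if (e : ι) = e0 then c else y e)) = fun e : (T : Set ι) => x e :=
          funext hyx
        rw [this]
        exact hli
      rw [Finset.coe_insert, linearIndepOn_insert (by simpa using he0)]
      refine ⟨LinearIndependent.of_comp _ hli2, ?_⟩
      intro hmem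
      have hd := Submodule.range_ker_disjoint hli2
      rw [← Set.image_eq_range (fun e => if e = e0 then c else y e) (T : Set ι)] at hd
      rw [if_pos rfl] at hmem
      exact hc0 (Submodule.disjoint_def.1 hd c hmem (by simp))

theorem count_a1 {K : Type*} [Field K] {m n b : ℕ} (P : Matrix (Fin m) (Fin 1) K)
    (Q : Matrix (Fin n) (Fin b) K) (G : Set (Fin m × Fin n)) (h : DI P Q G)
    (hP : ∀ i, P i 0 ≠ 0) (J : Finset (Fin m × Fin n)) (hJG : ∀ e ∈ J, e ∈ G)
    (hJ : J.Nonempty) :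
    J.card + b ≤ (J.image Prod.fst).card * b + (J.image Prod.snd).card := by
  classical
  let A := J.image Prod.fst
  let B := J.image Prod.snd
  let ex : (J → K) →ₗ[K] (Fin m × Fin n → K) :=
    Function.ExtendByZero.linearMap K (Subtype.val : J → Fin m × Fin n)
  have hex : ∀ (x : J → K) (e : J), ex x e = x e := fun x e =>
    Subtype.val_injective.extend_apply _ _ _
  have hex0 : ∀ (x : J → K) (e : Fin m × Fin n), e ∉ J → ex x e = 0 := fun x e he =>
    Function.extend_apply' _ _ _ (by rintro ⟨a, rfl⟩; exact he a.2)
  let f : (J → K) →ₗ[K] ((A → Fin b → K) × (B → K)) :=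
    { toFun := fun x => (fun i c => ∑ j, ex x (i, j) * Q j c, fun j => ∑ i, P i 0 * ex x (i, j))
      map_add' := fun x y => by
        ext <;> simp [add_mul, mul_add, Finset.sum_add_distrib]
      map_smul' := fun a x => by
        ext
        · simp [Finset.mul_sum, mul_assoc]
        · simp only [map_smul, Pi.smul_apply, smul_eq_mul, RingHom.id_apply, Prod.smul_mk,
            Finset.mul_sum]
          exact Finset.sum_congr rfl fun i _ => by ring }
  let g : ((A → Fin b → K) × (B → K)) →ₗ[K] (Fin b → K) :=
    { toFun := fun x => fun c => ∑ i : A, P i 0 * x.1 i c - ∑ j : B, x.2 j * Q j c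
      map_add' := fun x y => by
        ext c; simp [add_mul, mul_add, Finset.sum_add_distrib]; ring
      map_smul' := fun a x => by
        ext c
        simp only [Prod.smul_fst, Prod.smul_snd, Pi.smul_apply, smul_eq_mul, RingHom.id_apply,
            mul_sub, Finset.mul_sum]
        congr 1
        · exact Finset.sum_congr rfl fun i _ => by ring
        · exact Finset.sum_congr rfl fun i _ => by ring }
  have hf : Function.Injective f := by
    rw [← LinearMap.ker_eq_bot, LinearMap.ker_eq_bot']
    intro x hx
    have h1 : ∀ (i : A) (c : Fin b), ∑ j, ex x (i, j) * Q j c = 0 := fun i c =>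
      congrFun (congrFun (congrArg Prod.fst hx) i) c
    have h2 : ∀ (j : B), ∑ i, P i 0 * ex x (i, j) = 0 := fun j =>
      congrFun (congrArg Prod.snd hx) j
    have h3 := h (Matrix.of fun i j => ex x (i, j)) (fun e he => hex0 x _ (fun h' => he (hJG e h')))
      (by
        ext c j
        rw [Matrix.mul_apply]
        fin_cases c
        simp only [Matrix.transpose_apply, Matrix.of_apply, Matrix.zero_apply]
        by_cases hj : j ∈ B
        · exact h2 ⟨j, hj⟩
        · apply Finset.sum_eq_zero
          intro i _
          rw [hex0, mul_zero]
          exact fun he => hj (Finset.mem_image_of_mem Prod.snd he))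
      (by
        ext i c
        rw [Matrix.mul_apply]
        simp only [Matrix.of_apply, Matrix.zero_apply]
        by_cases hi : i ∈ A
        · exact h1 ⟨i, hi⟩ c
        · apply Finset.sum_eq_zero
          intro j _
          rw [hex0, zero_mul]
          exact fun he => hi (Finset.mem_image_of_mem Prod.fst he))
    funext e
    rw [← hex x e]
    exact congrFun (congrFun h3 e.1.1) e.1.2
  have hg : Function.Surjective g := by
    intro y
    obtain ⟨e, he⟩ := hJ
    have hi : e.1 ∈ A := Finset.mem_image_of_mem Prod.fst he
    refine ⟨(Pi.single ⟨e.1, hi⟩ (fun c => (P e.1 0)⁻¹ * y c), 0), ?_⟩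
    funext c
    simp only [g, LinearMap.coe_mk, AddHom.coe_mk]
    rw [Finset.sum_eq_single ⟨e.1, hi⟩]
    · simp [hP]
    · intro i _ hne
      simp [Pi.single_eq_of_ne hne]
    · simp
  have hfg : LinearMap.range f ≤ LinearMap.ker g := by
    rintro _ ⟨x, rfl⟩
    rw [LinearMap.mem_ker]
    funext c
    simp only [g, f, LinearMap.coe_mk, AddHom.coe_mk, Pi.zero_apply]
    have h1 : ∑ i : A, P i 0 * ∑ j, ex x (i, j) * Q j c =
        ∑ i, P i 0 * ∑ j, ex x (i, j) * Q j c := by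
      rw [Finset.sum_coe_sort A (fun i => P i 0 * ∑ j, ex x (i, j) * Q j c)]
      apply Finset.sum_subset (Finset.subset_univ _)
      intro i _ hi
      rw [Finset.sum_eq_zero, mul_zero]
      intro j _
      rw [hex0, zero_mul]
      exact fun he => hi (Finset.mem_image_of_mem Prod.fst he)
    have h2 : ∑ j : B, (∑ i, P i 0 * ex x (i, j)) * Q j c =
        ∑ j, (∑ i, P i 0 * ex x (i, j)) * Q j c := by
      rw [Finset.sum_coe_sort B (fun j => (∑ i, P i 0 * ex x (i, j)) * Q j c)]
      apply Finset.sum_subset (Finset.subset_univ _)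
      intro j _ hj
      rw [Finset.sum_eq_zero, zero_mul]
      intro i _
      rw [hex0, mul_zero]
      exact fun he => hj (Finset.mem_image_of_mem Prod.snd he)
    rw [h1, h2, sub_eq_zero]
    simp only [Finset.mul_sum, Finset.sum_mul]
    rw [Finset.sum_comm]
    exact Finset.sum_congr rfl fun i _ => Finset.sum_congr rfl fun j _ => by ring
  have h1 := LinearMap.finrank_range_of_inj hf
  have h2 := Submodule.finrank_mono hfg
  have h3 := g.finrank_range_add_finrank_ker
  rw [LinearMap.range_eq_top.2 hg, finrank_top] at h3
  have h4 : Module.finrank K ((A → Fin b → K) × (B → K)) = A.card * b + B.card := by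
    rw [Module.finrank_prod, Module.finrank_pi_fintype]
    simp
  rw [h4, Module.finrank_fin_fun] at h3
  rw [Module.finrank_fintype_fun_eq_card, Fintype.card_coe] at h1
  show _ ≤ A.card * b + B.card
  omega

def bvec (K : Type*) {κ : Type*} [Field K] (x : κ) : κ → K := Pi.single x 1

theorem bvec_sum {K κ : Type*} [Field K] [Fintype κ] (y : κ → K) :
    y = ∑ z, y z • bvec K z := by
  funext w
  simp [bvec, Pi.single_apply]

theorem finrank_coord {K κ : Type*} [Field K] [Fintype κ] (S : Finset κ) :
    Module.finrank K (Submodule.span K (bvec K '' (S : Set κ))) =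
      S.card := by
  rw [Set.image_eq_range]
  have h : LinearIndependent K (fun x : (S : Set κ) => bvec K (x : κ)) :=
    (by
      have := Pi.linearIndependent_single_one κ K
      exact this.comp _ Subtype.val_injective)
  rw [finrank_span_eq_card h]
  simp

theorem mem_coord {K κ : Type*} [Field K] [Fintype κ] (S : Set κ) (y : κ → K) :
    y ∈ Submodule.span K (bvec K '' S) ↔ ∀ x, x ∉ S → y x = 0 := by
  constructor
  · intro h x hx
    have : Submodule.span K (bvec K '' S) ≤
        LinearMap.ker (LinearMap.proj x : (κ → K) →ₗ[K] K) := by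
      rw [Submodule.span_le]
      rintro _ ⟨z, hz, rfl⟩
      simp only [SetLike.mem_coe, LinearMap.mem_ker, LinearMap.proj_apply]
      exact Pi.single_eq_of_ne (fun h : x = z => hx (by rw [h]; exact hz)) _
    exact this h
  · intro h
    rw [bvec_sum y]
    apply Submodule.sum_mem
    intro x _
    by_cases hx : x ∈ S
    · exact Submodule.smul_mem _ _ (Submodule.subset_span ⟨x, hx, rfl⟩)
    · rw [h x hx, zero_smul]; exact Submodule.zero_mem _

theorem construct_a1 {K : Type*} [Field K] [Infinite K] {m n b : ℕ} (hb : b ≤ n)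
    (G : Set (Fin m × Fin n))
    (hG : ∀ J : Finset (Fin m × Fin n), (∀ e ∈ J, e ∈ G) → J.Nonempty →
      J.card + b ≤ (J.image Prod.fst).card * b + (J.image Prod.snd).card) :
    ∃ Q : Matrix (Fin n) (Fin b) K, MInj Q ∧
      DI (Matrix.of fun _ _ => 1 : Matrix (Fin m) (Fin 1) K) Q G := by
  classical
  let Se : Fin m × Fin n → Finset ((Fin m × Fin b) ⊕ Fin n) := fun e =>
    (Finset.univ.image fun c => Sum.inl (e.1, c)) ∪ {Sum.inr e.2}
  let Nk : Option (Fin m) → Finset ((Fin m × Fin b) ⊕ Fin n) := fun k => k.elim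
    (Finset.univ.image fun c : Fin b => Sum.inr (Fin.castLE hb c))
    (fun i => Finset.univ.image fun c => Sum.inl (i, c))
  obtain ⟨H, hN, x, hx, hli⟩ := choose_c (K := K) b (κ := Option (Fin m)) G.toFinset (((Fin m × Fin b) ⊕ Fin n) → K)
    (fun e => Submodule.span K (bvec K '' (Se e : Set ((Fin m × Fin b) ⊕ Fin n)))) (by
      intro J hJ hJn
      have h1 : (⨆ e ∈ J, Submodule.span K (bvec K '' (Se e : Set ((Fin m × Fin b) ⊕ Fin n)))) =
          Submodule.span K (bvec K '' ((((J.image Prod.fst) ×ˢ (Finset.univ : Finset (Fin b))).disjSum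
            (J.image Prod.snd) : Finset ((Fin m × Fin b) ⊕ Fin n)) : Set ((Fin m × Fin b) ⊕ Fin n))) := by
        apply le_antisymm
        · apply iSup₂_le
          intro e he
          apply Submodule.span_mono
          apply Set.image_mono
          intro z hz
          rcases z with ⟨i, c⟩ | j
          · have : e.1 = i := by simpa [Se] using hz
            subst this
            simp only [Finset.mem_coe, Finset.inl_mem_disjSum, Finset.mem_product,
              Finset.mem_univ, and_true]
            exact Finset.mem_image_of_mem _ he
          · have : j = e.2 := by simpa [Se] using hz
            subst this
            simp only [Finset.mem_coe, Finset.inr_mem_disjSum]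
            exact Finset.mem_image_of_mem _ he
        · rw [Submodule.span_le]
          rintro _ ⟨z, hz, rfl⟩
          rcases z with ⟨i, c⟩ | j
          · simp only [Finset.mem_coe, Finset.inl_mem_disjSum, Finset.mem_product,
              Finset.mem_univ, and_true] at hz
            obtain ⟨e, he, rfl⟩ := Finset.mem_image.1 hz
            refine (le_iSup₂_of_le e he le_rfl :
              Submodule.span K (bvec K '' (Se e : Set ((Fin m × Fin b) ⊕ Fin n))) ≤ _) (Submodule.subset_span ⟨_, ?_, rfl⟩)
            simp [Se]
          · simp only [Finset.mem_coe, Finset.inr_mem_disjSum] at hz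
            obtain ⟨e, he, rfl⟩ := Finset.mem_image.1 hz
            refine (le_iSup₂_of_le e he le_rfl :
              Submodule.span K (bvec K '' (Se e : Set ((Fin m × Fin b) ⊕ Fin n))) ≤ _) (Submodule.subset_span ⟨_, ?_, rfl⟩)
            simp [Se]
      rw [h1, finrank_coord, Finset.card_disjSum, Finset.card_product, Finset.card_fin]
      exact hG J (fun e he => by simpa using hJ he) hJn)
    (fun k => Submodule.span K (bvec K '' (Nk k : Set ((Fin m × Fin b) ⊕ Fin n)))) (by
      intro k
      rw [finrank_coord]
      rcases k with _ | i
      · exact Finset.card_image_le.trans (by simp)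
      · exact Finset.card_image_le.trans (by simp))
  have hHx : ∀ y : ((Fin m × Fin b) ⊕ Fin n) → K, H y = ∑ z, y z • H (bvec K z) := by
    intro y
    conv_lhs => rw [bvec_sum y]
    rw [map_sum]
    exact Finset.sum_congr rfl fun z _ => by rw [map_smul]
  have hN1 : ∀ i (a : Fin b → K), ∑ c, a c • H (bvec K (Sum.inl (i, c))) = 0 → a = 0 := by
    intro i a ha
    have h1 := hN (some i) (fun z => Sum.elim (fun w => if w.1 = i then a w.2 else 0) (fun _ => 0) z)
      (by
        rw [mem_coord]
        rintro (⟨i', c⟩ | j) hz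
        · simp only [Sum.elim_inl]
          rw [if_neg]
          rintro rfl
          exact hz (by simp [Nk])
        · rfl)
      (by
        rw [hHx, Fintype.sum_sum_type, Fintype.sum_prod_type, Finset.sum_eq_single i]
        · simpa using ha
        · intro i' _ hne
          simp [hne]
        · simp)
    funext c
    have := congrFun h1 (Sum.inl (i, c))
    simpa using this
  have hsup : ∀ e ∈ G, ∀ z, z ∉ Se e → x e z = 0 := fun e he =>
    (mem_coord _ _).1 (hx e (by simpa using he)).1
  have hHxe : ∀ e ∈ G, ∑ c, x e (Sum.inl (e.1, c)) • H (bvec K (Sum.inl (e.1, c))) +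
      x e (Sum.inr e.2) • H (bvec K (Sum.inr e.2)) = 0 := by
    intro e he
    have h1 := (hx e (by simpa using he)).2
    rw [hHx, Fintype.sum_sum_type, Fintype.sum_prod_type, Finset.sum_eq_single e.1,
      Finset.sum_eq_single e.2] at h1
    · exact h1
    · intro j _ hne
      rw [hsup e he _ (by simp [Se, hne]), zero_smul]
    · simp
    · intro i _ hne
      apply Finset.sum_eq_zero
      intro c _
      rw [hsup e he _ (by simp [Se, hne.symm]), zero_smul]
    · simp
  have hβ : ∀ e ∈ G, x e (Sum.inr e.2) ≠ 0 := by
    intro e he h0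
    have h1 := hHxe e he
    rw [h0, zero_smul, add_zero] at h1
    have h2 := hN1 _ _ h1
    have h3 : x e = 0 := by
      funext z
      by_cases hz : z ∈ Se e
      · simp only [Se, Finset.mem_union, Finset.mem_image, Finset.mem_univ, true_and,
          Finset.mem_singleton] at hz
        rcases hz with ⟨c, rfl⟩ | rfl
        · exact congrFun h2 c
        · exact h0
      · exact hsup e he z hz
    exact hli.ne_zero (i := e) (by simpa using he) h3
  refine ⟨Matrix.of fun j => H (bvec K (Sum.inr j)), ?_, ?_⟩
  · intro μ hμ
    have hli2 : LinearIndependent K (fun c : Fin b => H (bvec K (Sum.inr (Fin.castLE hb c)))) := by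
      rw [Fintype.linearIndependent_iff]
      intro a ha
      have h1 := hN none (∑ c, a c • bvec K (Sum.inr (Fin.castLE hb c)))
        (by
          apply Submodule.sum_mem
          intro c _
          exact Submodule.smul_mem _ _ (Submodule.subset_span ⟨_, by simp [Nk], rfl⟩))
        (by rw [map_sum]; simpa using ha)
      intro c
      have := congrFun h1 (Sum.inr (Fin.castLE hb c))
      rw [Finset.sum_apply, Finset.sum_eq_single c] at this
      · simpa [bvec] using this
      · intro c' _ hne
        simp [bvec, Pi.single_apply, hne.symm]
      · simp
    have hsp := hli2.span_eq_top_of_card_eq_finrank' (by simp)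
    let f : (Fin b → K) →ₗ[K] K :=
      { toFun := fun u => ∑ k, u k * μ k
        map_add' := fun u v => by simp [add_mul, Finset.sum_add_distrib]
        map_smul' := fun c u => by simp [Finset.mul_sum, mul_assoc] }
    have h3 : f = 0 := by
      apply LinearMap.ext_on_range hsp
      intro c
      exact congrFun hμ (Fin.castLE hb c)
    funext k
    have := LinearMap.congr_fun h3 (Pi.single k 1)
    simpa [f, Pi.single_apply] using this
  · intro R hR hP hQ
    have hc : ∀ j, ∑ i, R i j = 0 := by
      intro j
      have := congrFun (congrFun hP 0) j
      simpa [Matrix.mul_apply] using this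
    have hr : ∀ i, ∑ j, R i j • H (bvec K (Sum.inr j)) = 0 := by
      intro i
      funext c
      have := congrFun (congrFun hQ i) c
      simpa [Matrix.mul_apply] using this
    let t : Fin m × Fin n → K := fun e => R e.1 e.2 / x e (Sum.inr e.2)
    have ht0 : ∀ e, e ∉ G → t e = 0 := fun e he => by simp [t, hR e he]
    have htx : ∀ e, t e * x e (Sum.inr e.2) = R e.1 e.2 := by
      intro e
      by_cases he : e ∈ G
      · exact div_mul_cancel₀ _ (hβ e he)
      · rw [ht0 e he, hR e he, zero_mul]
    have hz0 : ∀ e z, z ∉ Se e → t e * x e z = 0 := by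
      intro e z hz
      by_cases he : e ∈ G
      · rw [hsup e he z hz, mul_zero]
      · rw [ht0 e he, zero_mul]
    have hsum : ∑ e, t e • x e = 0 := by
      funext z
      rw [Finset.sum_apply]
      simp only [Pi.smul_apply, smul_eq_mul, Pi.zero_apply]
      rcases z with ⟨i, c⟩ | j
      · have h1 : ∑ e, t e * x e (Sum.inl (i, c)) = ∑ j, t (i, j) * x (i, j) (Sum.inl (i, c)) := by
          rw [Fintype.sum_prod_type, Finset.sum_eq_single i]
          · intro i' _ hne
            apply Finset.sum_eq_zero
            intro j _
            exact hz0 _ _ (by simp [Se, hne])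
          · simp
        rw [h1]
        refine congrFun (hN1 i (fun c => ∑ j, t (i, j) * x (i, j) (Sum.inl (i, c))) ?_) c
        simp only [Finset.sum_smul]
        rw [Finset.sum_comm]
        have h2 : ∀ j, ∑ c, (t (i, j) * x (i, j) (Sum.inl (i, c))) • H (bvec K (Sum.inl (i, c))) =
            - (R i j • H (bvec K (Sum.inr j))) := by
          intro j
          by_cases he : (i, j) ∈ G
          · have h3 := congrArg (fun y => t (i, j) • y) (hHxe (i, j) he)
            simp only [smul_add, smul_zero, Finset.smul_sum, smul_smul] at h3
            rw [htx] at h3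
            exact eq_neg_of_add_eq_zero_left h3
          · rw [hR (i, j) he]
            simp [ht0 _ he]
        simp only [h2]
        rw [Finset.sum_neg_distrib, hr, neg_zero]
      · rw [Fintype.sum_prod_type_right, Finset.sum_eq_single j]
        · rw [← hc j]
          exact Finset.sum_congr rfl fun i _ => htx (i, j)
        · intro j' _ hne
          apply Finset.sum_eq_zero
          intro i _
          exact hz0 _ _ (by simp [Se, hne.symm])
        · simp
    have hsum2 : ∑ e ∈ G.toFinset, t e • x e = 0 := by
      rw [← hsum]
      apply Finset.sum_subset (Finset.subset_univ _)
      intro e _ he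
      rw [ht0 e (by simpa using he), zero_smul]
    have hfin := linearIndepOn_finset_iff.1 hli t hsum2
    ext i j
    by_cases he : (i, j) ∈ G
    · have := htx (i, j)
      rw [hfin (i, j) (by simpa using he), zero_mul] at this
      exact this.symm
    · exact hR (i, j) he

theorem case_a1 (p : ℕ) [Fact p.Prime] (m n s r : ℕ) (hm : m = s + 1) (hr : r ≤ n)
    (E : Set (Fin m × Fin n)) (h : TensorIndep ℚ m n s r E) : TensorIndep (ZMod p) m n s r E := by
  obtain ⟨E', hE, hc, hsp⟩ := extend_basis ℚ m n s r (by omega) hr E h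
  obtain ⟨b, rfl⟩ := Nat.exists_eq_add_of_le hr
  have hU := genU_minj ℚ m (r + b) s r (by omega)
  have hV := genV_minj ℚ m (r + b) s r (by omega)
  obtain ⟨P, hP, hXP⟩ := exists_P_of_X (a := 1) hm _ hU
  obtain ⟨Q, hQ, hYQ⟩ := exists_P_of_X (a := b) rfl _ hV
  have hdi := (duality hU hV hXP hYQ E').1 hsp
  have hP0 : ∀ i, P i 0 ≠ 0 := by
    intro i hi
    obtain ⟨x, hx⟩ := (hXP (Pi.single i 1)).1 (by
      funext c
      fin_cases c
      simp [hi])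
    have h0 : x = 0 := by
      apply genU_cols ℚ m (r + b) s r (Finset.univ.erase i) (by simp [hm])
      intro i' hi'
      have := congrFun hx i'
      rw [Pi.single_eq_of_ne (Finset.ne_of_mem_erase hi')] at this
      exact this
    rw [h0] at hx
    have := congrFun hx i
    simp at this
  have hcount := count_a1 P Q E'ᶜ hdi hP0
  obtain ⟨Q', hQ', hdi'⟩ := construct_a1 (K := AlgebraicClosure (ZMod p)) (m := m)
    (n := r + b) (b := b) (by omega) E'ᶜ hcount
  refine indep_of_DI (L := AlgebraicClosure (ZMod p)) hm rfl _ Q' ?_ hQ' E E' hE hc hdi'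
  intro x hx
  have := congrFun hx ⟨0, by omega⟩
  funext c
  fin_cases c
  simpa [Matrix.mulVec, dotProduct] using this

/-- row of the rigidity matrix -/
def wrow {R : Type*} [CommRing R] {m n : ℕ} (P : Fin m → Fin 2 → R) (Q : Fin n → Fin 2 → R)
    (e : Fin m × Fin n) : (Fin m × Fin 2) ⊕ (Fin n × Fin 2) → R :=
  Sum.elim (fun x => if e.1 = x.1 then Q e.2 x.2 else 0) (fun x => if e.2 = x.1 then P e.1 x.2 else 0)

theorem DI.li {K : Type*} [Field K] {m n : ℕ} {P : Matrix (Fin m) (Fin 2) K}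
    {Q : Matrix (Fin n) (Fin 2) K} {G : Set (Fin m × Fin n)} (h : DI P Q G) :
    LinearIndependent K (fun e : G => wrow P Q e) := by
  rw [Fintype.linearIndependent_iff]
  intro g hg
  let R : Matrix (Fin m) (Fin n) K := Matrix.of fun i j => if h : (i, j) ∈ G then g ⟨(i, j), h⟩ else 0
  have hsum : ∀ z, ∑ e : Fin m × Fin n, R e.1 e.2 * wrow P Q e z = 0 := by
    intro z
    have h1 := congrFun hg z
    rw [Finset.sum_apply] at h1
    simp only [Pi.smul_apply, smul_eq_mul, Pi.zero_apply] at h1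
    let F : Fin m × Fin n → K := fun e => (if h : e ∈ G then g ⟨e, h⟩ else 0) * wrow P Q e z
    have h2 : ∑ x : G, F x = ∑ e ∈ G.toFinset, F e := Finset.sum_set_coe G
    have h3 : ∑ x : G, F x = 0 := by
      rw [← h1]
      exact Finset.sum_congr rfl fun x _ => by simp [F]
    have h4 : ∑ e ∈ G.toFinset, F e = ∑ e, F e := by
      apply Finset.sum_subset (Finset.subset_univ _)
      intro e _ he
      have he2 : e ∉ G := by simpa using he
      simp [F, he2]
    exact h4.symm.trans (h2.symm.trans h3)
  have hR := h R (fun e he => by simp [R, he]) (by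
      ext c j
      have := hsum (Sum.inr (j, c))
      rw [Fintype.sum_prod_type_right, Finset.sum_eq_single j] at this
      · rw [Matrix.mul_apply]
        simpa [wrow, mul_comm] using this
      · intro j' _ hne
        simp [wrow, hne]
      · simp) (by
      ext i c
      have := hsum (Sum.inl (i, c))
      rw [Fintype.sum_prod_type, Finset.sum_eq_single i] at this
      · rw [Matrix.mul_apply]
        simpa [wrow] using this
      · intro j' _ hne
        simp [wrow, hne]
      · simp)
  intro e
  have := congrFun (congrFun hR e.1.1) e.1.2
  simpa [R] using this

abbrev PR (m n : ℕ) := MvPolynomial ((Fin m × Fin 2) ⊕ (Fin n × Fin 2)) ℚ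

def zpoly {m n : ℕ} (e : Fin m × Fin n) : PR m n :=
  ∑ c : Fin 2, MvPolynomial.X (Sum.inl (e.1, c)) * MvPolynomial.X (Sum.inr (e.2, c))

theorem pderiv_z {m n : ℕ} (e : Fin m × Fin n) (x : (Fin m × Fin 2) ⊕ (Fin n × Fin 2)) :
    MvPolynomial.pderiv x (zpoly e) =
      wrow (fun i c => (MvPolynomial.X (Sum.inl (i, c)) : PR m n))
        (fun j c => MvPolynomial.X (Sum.inr (j, c))) e x := by
  rcases x with ⟨i, c⟩ | ⟨j, c⟩
  · by_cases h : e.1 = i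
    · fin_cases c <;> simp [zpoly, wrow, MvPolynomial.pderiv_X, Pi.single_apply, h]
    · fin_cases c <;> simp [zpoly, wrow, MvPolynomial.pderiv_X, Pi.single_apply, h]
  · by_cases h : e.2 = j
    · fin_cases c <;> simp [zpoly, wrow, MvPolynomial.pderiv_X, Pi.single_apply, h]
    · fin_cases c <;> simp [zpoly, wrow, MvPolynomial.pderiv_X, Pi.single_apply, h]

theorem chain_rule {ι σ : Type*} [Fintype ι] (z : ι → MvPolynomial σ ℚ) (x : σ)
    (f : MvPolynomial ι ℚ) :
    MvPolynomial.pderiv x (MvPolynomial.aeval z f) =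
      ∑ e, MvPolynomial.aeval z (MvPolynomial.pderiv e f) * MvPolynomial.pderiv x (z e) := by
  induction f using MvPolynomial.induction_on with
  | C a => simp [MvPolynomial.algebraMap_eq]
  | add f g hf hg => simp only [map_add, hf, hg, add_mul, Finset.sum_add_distrib]
  | mul_X f e hf =>
    simp only [map_mul, MvPolynomial.aeval_X, Derivation.leibniz, smul_eq_mul, hf, map_add,
      add_mul, Finset.sum_add_distrib, MvPolynomial.pderiv_X]
    congr 1
    · rw [Finset.sum_eq_single e]
      · simp
      · intro b _ hb
        simp [Pi.single_apply, hb.symm]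
      · simp
    · rw [Finset.mul_sum]
      exact Finset.sum_congr rfl fun i _ => by ring

theorem alg_indep_z {m n : ℕ} {K : Type*} [Field K] [Algebra ℚ K] {P : Matrix (Fin m) (Fin 2) K}
    {Q : Matrix (Fin n) (Fin 2) K} {G : Set (Fin m × Fin n)} (h : DI P Q G) :
    AlgebraicIndependent ℚ (fun e : G => (zpoly (e : Fin m × Fin n) : PR m n)) := by
  have h1 := h.li
  let φ : PR m n →+* K :=
    (MvPolynomial.aeval (R := ℚ) (Sum.elim (fun x => P x.1 x.2) (fun x => Q x.1 x.2))).toRingHom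
  have h2 := spec_li (algebraMap (PR m n) (FractionRing (PR m n))) (IsFractionRing.injective _ _) φ
    (fun (e : G) x => wrow (fun i c => (MvPolynomial.X (Sum.inl (i, c)) : PR m n))
        (fun j c => MvPolynomial.X (Sum.inr (j, c))) e x) (by
      convert h1 using 3
      rename_i e x
      rcases x with ⟨i, c⟩ | ⟨j, c⟩
      · simp only [wrow, Sum.elim_inl]
        split_ifs <;> simp [φ]
      · simp only [wrow, Sum.elim_inr]
        split_ifs <;> simp [φ])
  rw [algebraicIndependent_iff]
  have key : ∀ (k : ℕ) (f : MvPolynomial G ℚ), (∀ d : G →₀ ℕ, k ≤ d.degree → f.coeff d = 0) →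
      MvPolynomial.aeval (fun e : G => (zpoly (e : Fin m × Fin n) : PR m n)) f = 0 → f = 0 := by
    intro k
    induction k with
    | zero =>
      intro f hf _
      ext d
      exact hf d (Nat.zero_le _)
    | succ k ih =>
      intro f hf hz
      have h3 : ∀ e : G, MvPolynomial.aeval (fun e : G => (zpoly (e : Fin m × Fin n) : PR m n))
          (MvPolynomial.pderiv e f) = 0 := by
        rw [Fintype.linearIndependent_iff] at h2
        have h4 := h2 (fun e => algebraMap (PR m n) (FractionRing (PR m n))
          (MvPolynomial.aeval (fun e : G => (zpoly (e : Fin m × Fin n) : PR m n))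
          (MvPolynomial.pderiv e f))) (by
            funext x
            have := chain_rule (fun e : G => (zpoly (e : Fin m × Fin n) : PR m n)) x f
            rw [hz, map_zero] at this
            have h5 := congrArg (algebraMap (PR m n) (FractionRing (PR m n))) this
            rw [map_zero, map_sum] at h5
            rw [Finset.sum_apply, Pi.zero_apply, h5]
            refine Finset.sum_congr rfl fun e _ => ?_
            rw [map_mul, pderiv_z]
            rfl)
        intro e
        exact IsFractionRing.injective (PR m n) (FractionRing (PR m n)) ((h4 e).trans (map_zero _).symm)
      have h4 : ∀ e : G, MvPolynomial.pderiv e f = 0 := by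
        intro e
        apply ih _ _ (h3 e)
        intro d hd
        rw [MvPolynomial.coeff_pderiv, hf, zero_mul]
        rw [map_add, Finsupp.degree_single]
        omega
      have h5 : ∀ d : G →₀ ℕ, d ≠ 0 → f.coeff d = 0 := by
        intro d hd
        obtain ⟨e, he⟩ := Finsupp.ne_iff.1 hd
        have h6 := congrArg (MvPolynomial.coeff (d - Finsupp.single e 1)) (h4 e)
        rw [MvPolynomial.coeff_pderiv, MvPolynomial.coeff_zero, tsub_add_cancel_of_le] at h6
        · rcases mul_eq_zero.1 h6 with h7 | h7
          · exact h7
          · exfalso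
            exact (fun k : ℕ => (by positivity : ((k : ℚ) + 1) ≠ 0)) _ h7
        · rw [Finsupp.single_le_iff]
          exact Nat.one_le_iff_ne_zero.2 he
      have h6 : f = MvPolynomial.C (f.coeff 0) := by
        ext d
        by_cases hd : d = 0
        · simp [hd]
        · rw [h5 d hd, MvPolynomial.coeff_C, if_neg (Ne.symm hd)]
      rw [h6] at hz ⊢
      rw [MvPolynomial.aeval_C, MvPolynomial.algebraMap_eq] at hz
      simp only [map_eq_zero_iff _ (MvPolynomial.C_injective _ _)] at hz
      rw [hz, map_zero]
  intro f hf
  obtain ⟨k, hk⟩ : ∃ k : ℕ, ∀ d : G →₀ ℕ, k ≤ d.degree → f.coeff d = 0 := by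
    refine ⟨f.support.sup Finsupp.degree + 1, fun d hd => ?_⟩
    by_contra hne
    have := Finset.le_sup (f := Finsupp.degree) (MvPolynomial.mem_support_iff.2 hne)
    omega
  exact key k f hk hf

theorem lmon_li {ι L : Type*} [Fintype ι] [Field L] [Algebra ℚ L] (z : ι → L)
    (hz : AlgebraicIndependent ℚ z) :
    LinearIndependent ℚ (fun c : ι → ℤ => ∏ e, z e ^ c e) := by
  have hz0 : ∀ e, z e ≠ 0 := fun e => hz.ne_zero e
  rw [linearIndependent_iff']
  intro T a hT c hc
  let N : ℕ := ∑ c ∈ T, ∑ e, (c e).natAbs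
  have hN : ∀ c ∈ T, ∀ e, 0 ≤ c e + N := by
    intro c hc e
    have h1 : (c e).natAbs ≤ ∑ e, (c e).natAbs :=
      Finset.single_le_sum (f := fun e => (c e).natAbs) (fun _ _ => Nat.zero_le _) (Finset.mem_univ e)
    have h2 : ∑ e, (c e).natAbs ≤ N :=
      Finset.single_le_sum (f := fun c : ι → ℤ => ∑ e, (c e).natAbs) (fun _ _ => Nat.zero_le _) hc
    omega
  let d : (ι → ℤ) → (ι →₀ ℕ) := fun c => Finsupp.equivFunOnFinite.symm fun e => (c e + N).toNat
  let f : MvPolynomial ι ℚ := ∑ c ∈ T, MvPolynomial.monomial (d c) (a c)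
  have hf : MvPolynomial.aeval z f = 0 := by
    have h1 : ∀ c ∈ T, MvPolynomial.aeval z (MvPolynomial.monomial (d c) (a c)) =
        (∏ e, z e ^ N) * (a c • ∏ e, z e ^ c e) := by
      intro c hc
      rw [MvPolynomial.aeval_monomial, Algebra.smul_def, Finsupp.prod_fintype _ _ (by simp)]
      rw [mul_left_comm]
      congr 1
      rw [← Finset.prod_mul_distrib]
      refine Finset.prod_congr rfl fun e _ => ?_
      have h2 : ((d c e : ℕ) : ℤ) = N + c e := by
        simp only [d, Finsupp.equivFunOnFinite_symm_apply_apply]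
        rw [Int.toNat_of_nonneg (hN c hc e), add_comm]
      rw [← zpow_natCast, h2, zpow_add₀ (hz0 e), zpow_natCast]
    rw [map_sum, Finset.sum_congr rfl h1, ← Finset.mul_sum, hT, mul_zero]
  have h0 : f = 0 := (algebraicIndependent_iff.1 hz) f hf
  have h1 := congrArg (MvPolynomial.coeff (d c)) h0
  rw [MvPolynomial.coeff_sum, Finset.sum_eq_single c] at h1
  · simpa using h1
  · intro c' hc' hne
    rw [MvPolynomial.coeff_monomial, if_neg]
    intro heq
    apply hne
    funext e
    have := DFunLike.congr_fun heq e
    simp only [d, Finsupp.equivFunOnFinite_symm_apply_apply] at this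
    have h2 := hN c hc e
    have h3 := hN c' hc' e
    omega
  · intro h; exact absurd hc h

theorem exists_val {ι L : Type*} [Fintype ι] [Field L] [Algebra ℚ L] (z : ι → L)
    (hz : AlgebraicIndependent ℚ z) :
    ∃ B : ValuationSubring L, ∀ c : ι → ℤ, B.valuation (∏ e, z e ^ c e) = 1 → c = 0 := by
  have hz0 : ∀ e, z e ≠ 0 := fun e => hz.ne_zero e
  let ε := Fintype.equivFin ι
  let lx : (ι → ℤ) → Lex (Fin (Fintype.card ι) → ℤ) := fun c => toLex (c ∘ ε.symm)
  have lx_add : ∀ c d, lx (c + d) = lx c + lx d := fun c d => rfl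
  have lx_zero : lx 0 = 0 := rfl
  have lx_neg : ∀ c, lx (-c) = - lx c := fun c => rfl
  have lx_inj : ∀ c, lx c = 0 → c = 0 := by
    intro c hc
    funext e
    have : c (ε.symm (ε e)) = 0 := congrFun (congrArg ofLex hc) (ε e)
    rwa [ε.symm_apply_apply] at this
  let mon : (ι → ℤ) → L := fun c => ∏ e, z e ^ c e
  have mon_add : ∀ c d, mon (c + d) = mon c * mon d := by
    intro c d
    simp only [mon, Pi.add_apply, ← Finset.prod_mul_distrib]
    exact Finset.prod_congr rfl fun e _ => zpow_add₀ (hz0 e) _ _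
  have mon_zero : mon 0 = 1 := by simp [mon]
  have mon_ne : ∀ c, mon c ≠ 0 := fun c => Finset.prod_ne_zero_iff.2 fun e _ => zpow_ne_zero _ (hz0 e)
  have hli : LinearIndependent ℚ mon := lmon_li z hz
  let A0 : Submodule ℚ L := Submodule.span ℚ (mon '' {c | 0 ≤ lx c})
  let I0 : Submodule ℚ L := Submodule.span ℚ (mon '' {c | 0 < lx c})
  have hAA : A0 * A0 ≤ A0 := by
    rw [Submodule.span_mul_span, Submodule.span_le]
    rintro _ ⟨_, ⟨c, hc, rfl⟩, _, ⟨d, hd, rfl⟩, rfl⟩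
    refine Submodule.subset_span ⟨c + d, ?_, mon_add c d⟩
    show 0 ≤ lx (c + d)
    rw [lx_add]
    exact add_nonneg hc hd
  have hAI : A0 * I0 ≤ I0 := by
    rw [Submodule.span_mul_span, Submodule.span_le]
    rintro _ ⟨_, ⟨c, hc, rfl⟩, _, ⟨d, hd, rfl⟩, rfl⟩
    refine Submodule.subset_span ⟨c + d, ?_, mon_add c d⟩
    show 0 < lx (c + d)
    rw [lx_add]
    exact add_pos_of_nonneg_of_pos hc hd
  have h1A : (1 : L) ∈ A0 := Submodule.subset_span ⟨0, le_of_eq lx_zero.symm, mon_zero⟩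
  let A : Subring L :=
    { carrier := A0
      mul_mem' := fun ha hb => hAA (Submodule.mul_mem_mul ha hb)
      one_mem' := h1A
      add_mem' := fun ha hb => A0.add_mem ha hb
      zero_mem' := A0.zero_mem
      neg_mem' := fun ha => A0.neg_mem ha }
  let I : Ideal A :=
    { carrier := {a | (a : L) ∈ I0}
      add_mem' := fun ha hb => I0.add_mem ha hb
      zero_mem' := I0.zero_mem
      smul_mem' := fun a x hx => hAI (Submodule.mul_mem_mul a.2 hx) }
  have hI : I ≠ ⊤ := by
    rw [Ne, Ideal.eq_top_iff_one]
    intro h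
    have h' : (1 : L) ∈ I0 := h
    rw [← mon_zero] at h'
    exact hli.notMem_span_image (s := {c | 0 < lx c}) (x := 0) (fun h => (lt_irrefl (lx 0)) h) h'
  obtain ⟨B, hAB, hIB⟩ := Ideal.image_subset_nonunits_valuationSubring I hI
  have hpos : ∀ c, 0 < lx c → B.valuation (mon c) < 1 := by
    intro c hc
    have hcA : mon c ∈ A := Submodule.subset_span ⟨c, hc.le, rfl⟩
    have : mon c ∈ B.nonunits := hIB ⟨⟨mon c, hcA⟩, Submodule.subset_span ⟨c, hc, rfl⟩, rfl⟩
    exact (ValuationSubring.mem_nonunits_iff B).1 this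
  refine ⟨B, fun c hc => ?_⟩
  rcases lt_trichotomy (lx c) 0 with h | h | h
  · have h1 := hpos (-c) (by rw [lx_neg]; exact neg_pos.2 h)
    have h2 : mon c * mon (-c) = 1 := by rw [← mon_add, add_neg_cancel, mon_zero]
    have h3 := congrArg B.valuation h2
    rw [map_mul, map_one] at h3
    have hc' : B.valuation (mon c) = 1 := hc
    rw [hc', one_mul] at h3
    exact absurd h3 h1.ne
  · exact lx_inj c h
  · exact absurd hc (hpos c h).ne

def cr {ι V : Type*} (a b : ι → V) (A B : Finset V) : ι → ℚ := fun e =>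
  if (a e ∈ A ∧ b e ∈ B) ∨ (a e ∈ B ∧ b e ∈ A) then 1 else 0

inductive TreeCol {ι V : Type*} (a b : ι → V) : Finset V → Submodule ℚ (ι → ℚ) → Prop
  | leaf (v : V) : TreeCol a b {v} ⊥
  | node {A B : Finset V} {M N : Submodule ℚ (ι → ℚ)} : TreeCol a b A M → TreeCol a b B N →
      Disjoint A B → TreeCol a b (A ∪ B) (M ⊔ N ⊔ Submodule.span ℚ {cr a b A B})

theorem prod_zpow_sum {ι Γ : Type*} [CommGroupWithZero Γ] (s : Finset ι) (x : Γ) (hx : x ≠ 0)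
    (f : ι → ℤ) : ∏ e ∈ s, x ^ f e = x ^ (∑ e ∈ s, f e) := by
  induction s using Finset.induction_on with
  | empty => simp
  | insert e s he ih => rw [Finset.prod_insert he, Finset.sum_insert he, ih, zpow_add₀ hx]

theorem split_um {V Γ : Type*} [LinearOrderedCommGroupWithZero Γ] (d : V → V → Γ)
    (h0 : ∀ x, d x x = 0) (hs : ∀ x y, d x y = d y x) (hu : ∀ x y z, d x z ≤ max (d x y) (d y z))
    (S : Finset V) (hS : 2 ≤ S.card) :
    ∃ A B : Finset V, ∃ δ, A.Nonempty ∧ B.Nonempty ∧ Disjoint A B ∧ A ∪ B = S ∧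
      ∀ x ∈ A, ∀ y ∈ B, d x y = δ := by
  have hne : S.Nonempty := Finset.card_pos.1 (by omega)
  obtain ⟨⟨x0, y0⟩, hxy, hmax⟩ := Finset.exists_max_image (S ×ˢ S) (fun q => d q.1 q.2)
    (hne.product hne)
  rw [Finset.mem_product] at hxy
  have hmax' : ∀ x ∈ S, ∀ y ∈ S, d x y ≤ d x0 y0 := fun x hx y hy =>
    hmax (x, y) (Finset.mem_product.2 ⟨hx, hy⟩)
  by_cases hδ : d x0 y0 = 0
  · obtain ⟨u, hu1, w, hw, huw⟩ := Finset.one_lt_card.1 (show 1 < S.card by omega)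
    refine ⟨{u}, S.erase u, 0, by simp, ⟨w, by simp [hw, huw.symm]⟩, by simp, ?_, ?_⟩
    · ext x; simp only [Finset.mem_union, Finset.mem_singleton, Finset.mem_erase]
      constructor
      · rintro (rfl | h)
        · exact hu1
        · exact h.2
      · intro h; by_cases hx : x = u
        · exact Or.inl hx
        · exact Or.inr ⟨hx, h⟩
    · intro x hx y hy
      rw [Finset.mem_singleton] at hx
      subst hx
      exact le_zero_iff.1 (hδ ▸ hmax' _ hu1 _ (Finset.mem_of_mem_erase hy))
  · refine ⟨S.filter (fun x => d x x0 < d x0 y0), S.filter (fun x => ¬ d x x0 < d x0 y0), d x0 y0,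
      ⟨x0, ?_⟩, ⟨y0, ?_⟩, Finset.disjoint_filter_filter_not _ _ _, Finset.filter_union_filter_not_eq _ _, ?_⟩
    · rw [Finset.mem_filter]; exact ⟨hxy.1, by rw [h0]; exact zero_lt_iff.2 hδ⟩
    · rw [Finset.mem_filter]; exact ⟨hxy.2, by rw [hs y0 x0]; exact lt_irrefl _⟩
    · intro x hx y hy
      rw [Finset.mem_filter] at hx hy
      apply le_antisymm (hmax' x hx.1 y hy.1)
      have h1 := not_lt.1 hy.2
      have h2 := h1.trans (hu y x x0)
      rcases le_max_iff.1 h2 with h3 | h3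
      · rwa [hs x y]
      · exact absurd h3 (not_le.2 hx.2)

theorem ite_split {Γ : Type*} [CommMonoid Γ] (P1 Q1 P2 Q2 : Prop) (h : P1 → ¬ Q1) (h' : P2 → ¬ Q2)
    (x : Γ) : (if (P1 ∨ Q1) ∧ (P2 ∨ Q2) then x else 1) = (if P1 ∧ P2 then x else 1) *
      (if Q1 ∧ Q2 then x else 1) * (if (P1 ∧ Q2) ∨ (Q1 ∧ P2) then x else 1) := by
  by_cases h1 : P1 <;> by_cases h2 : P2 <;> by_cases h3 : Q1 <;> by_cases h4 : Q2 <;> simp_all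

theorem exists_tree {ι V Γ : Type*} [Fintype ι] [LinearOrderedCommGroupWithZero Γ] (a b : ι → V)
    (d : V → V → Γ)
    (h0 : ∀ x, d x x = 0) (hs : ∀ x y, d x y = d y x) (hu : ∀ x y z, d x z ≤ max (d x y) (d y z))
    (hd : ∀ e, d (a e) (b e) ≠ 0) (k : ℕ) :
    ∀ S : Finset V, S.card ≤ k → S.Nonempty → ∃ M, TreeCol a b S M ∧ ∀ c : ι → ℤ,
      (∀ f ∈ M, ∑ e, (c e : ℚ) * f e = 0) →
      ∏ e, (if a e ∈ S ∧ b e ∈ S then d (a e) (b e) ^ c e else 1) = 1 := by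
  induction k with
  | zero => intro S hS hne; exact absurd hne.card_pos (by omega)
  | succ k ih =>
    intro S hS hne
    by_cases hc : S.card = 1
    · obtain ⟨v, rfl⟩ := Finset.card_eq_one.1 hc
      refine ⟨⊥, TreeCol.leaf v, fun c _ => Finset.prod_eq_one fun e _ => ?_⟩
      rw [if_neg]
      rintro ⟨h1, h2⟩
      rw [Finset.mem_singleton] at h1 h2
      exact hd e (by rw [h1, h2, h0])
    · have := hne.card_pos
      obtain ⟨A, B, δ, hA, hB, hdis, rfl, hδ⟩ := split_um d h0 hs hu S (by omega)
      rw [Finset.card_union_of_disjoint hdis] at hS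
      have := hA.card_pos
      have := hB.card_pos
      obtain ⟨M, hM, hM2⟩ := ih A (by omega) hA
      obtain ⟨N, hN, hN2⟩ := ih B (by omega) hB
      refine ⟨_, TreeCol.node hM hN hdis, fun c hc => ?_⟩
      have e1 := hM2 c fun f hf => hc f (Submodule.mem_sup_left (Submodule.mem_sup_left hf))
      have e2 := hN2 c fun f hf => hc f (Submodule.mem_sup_left (Submodule.mem_sup_right hf))
      have e3 := hc (cr a b A B) (Submodule.mem_sup_right (Submodule.mem_span_singleton_self _))
      have e4 : ∏ e, (if (a e ∈ A ∧ b e ∈ B) ∨ (a e ∈ B ∧ b e ∈ A) then d (a e) (b e) ^ c e else 1) = 1 := by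
        have hcase : ∀ e, (a e ∈ A ∧ b e ∈ B) ∨ (a e ∈ B ∧ b e ∈ A) → d (a e) (b e) = δ := by
          rintro e (⟨h1, h2⟩ | ⟨h1, h2⟩)
          · exact hδ _ h1 _ h2
          · rw [hs]; exact hδ _ h2 _ h1
        by_cases hex : ∃ e, (a e ∈ A ∧ b e ∈ B) ∨ (a e ∈ B ∧ b e ∈ A)
        · obtain ⟨e0, he0⟩ := hex
          have hδ0 : δ ≠ 0 := hcase e0 he0 ▸ hd e0
          have e5 : ∑ e, (if (a e ∈ A ∧ b e ∈ B) ∨ (a e ∈ B ∧ b e ∈ A) then c e else 0) = 0 := by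
            have : ((∑ e, (if (a e ∈ A ∧ b e ∈ B) ∨ (a e ∈ B ∧ b e ∈ A) then c e else 0) : ℤ) : ℚ) = 0 := by
              rw [← e3]
              push_cast
              refine Finset.sum_congr rfl fun e _ => ?_
              unfold cr
              split_ifs <;> simp
            exact_mod_cast this
          refine Eq.trans (Finset.prod_congr rfl fun e _ => ?_)
            ((prod_zpow_sum Finset.univ δ hδ0 _).trans (by rw [e5, zpow_zero]))
          split_ifs with h
          · rw [hcase e h]
          · rw [zpow_zero]
        · refine Finset.prod_eq_one fun e _ => if_neg fun h => hex ⟨e, h⟩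
      have e6 : (1 : Γ) * 1 * 1 = 1 := by rw [one_mul, one_mul]
      refine Eq.trans ?_ ((congrArg₂ (· * ·) (congrArg₂ (· * ·) e1 e2) e4).trans e6)
      rw [← Finset.prod_mul_distrib, ← Finset.prod_mul_distrib]
      refine Finset.prod_congr rfl fun e _ => ?_
      have n1 : a e ∈ A → a e ∉ B := fun h => Finset.disjoint_left.1 hdis h
      have n2 : b e ∈ A → b e ∉ B := fun h => Finset.disjoint_left.1 hdis h
      simp only [Finset.mem_union]
      convert ite_split (Γ := Γ) (a e ∈ A) (a e ∈ B) (b e ∈ A) (b e ∈ B) n1 n2 (d (a e) (b e) ^ c e)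

def fv {ι V : Type*} (a b : ι → V) (v : V) : ι → ℚ := fun e =>
  (if a e = v then 1 else 0) + (if b e = v then 1 else 0)

theorem tree_top {ι V L : Type*} [Fintype ι] [Fintype V] [Nonempty V] [Field L] (a b : ι → V)
    (z : ι → L) (B : ValuationSubring L)
    (hB : ∀ c : ι → ℤ, B.valuation (∏ e, z e ^ c e) = 1 → c = 0)
    (g : V → L) (pt : V → L) (hg : ∀ v, g v ≠ 0)
    (hz : ∀ e, z e = g (a e) * g (b e) * (pt (a e) - pt (b e))) (hz0 : ∀ e, z e ≠ 0) :
    ∃ M, TreeCol a b Finset.univ M ∧ Submodule.span ℚ (Set.range (fv a b)) ⊔ M = ⊤ := by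
  obtain ⟨M, hM, hM2⟩ := exists_tree a b (fun x y => B.valuation (pt x - pt y)) (by simp)
    (fun x y => Valuation.map_sub_swap _ _ _)
    (fun x y z => by
      have := B.valuation.map_add (pt x - pt y) (pt y - pt z)
      simpa using this)
    (fun e h => hz0 e (by
      rw [map_eq_zero] at h
      rw [hz, h, mul_zero])) (Fintype.card V) Finset.univ le_rfl Finset.univ_nonempty
  refine ⟨M, hM, ?_⟩
  by_contra hne
  obtain ⟨φ, hφ, hle⟩ := Submodule.exists_le_ker_of_lt_top _ (lt_top_iff_ne_top.2 hne)
  let q : ι → ℚ := fun e => φ (Pi.single e 1)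
  have hq : ∀ f, φ f = ∑ e, q e * f e := by
    intro f
    conv_lhs => rw [← Finset.univ_sum_single f]
    rw [map_sum]
    refine Finset.sum_congr rfl fun e _ => ?_
    have : Pi.single e (f e) = f e • (Pi.single e 1 : ι → ℚ) := by
      rw [← Pi.single_smul, smul_eq_mul, mul_one]
    rw [this, map_smul, smul_eq_mul, mul_comm]
  let D : ℤ := ∏ e, ((q e).den : ℤ)
  have hD : D ≠ 0 := Finset.prod_ne_zero_iff.2 fun e _ => by exact_mod_cast (q e).den_ne_zero
  have hdiv : ∀ e, ∃ c : ℤ, (c : ℚ) = D * q e := by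
    intro e
    obtain ⟨t, ht⟩ : ((q e).den : ℤ) ∣ D := Finset.dvd_prod_of_mem _ (Finset.mem_univ e)
    refine ⟨t * (q e).num, ?_⟩
    rw [ht]
    push_cast
    have := Rat.mul_den_eq_num (q e)
    rw [← this]; ring
  choose c hc using hdiv
  have hann : ∀ f ∈ Submodule.span ℚ (Set.range (fv a b)) ⊔ M, ∑ e, (c e : ℚ) * f e = 0 := by
    intro f hf
    have h1 : φ f = 0 := hle hf
    rw [hq] at h1
    rw [← mul_zero (D : ℚ), ← h1, Finset.mul_sum]
    exact Finset.sum_congr rfl fun e _ => by rw [hc]; ring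
  have hc0 : c = 0 := by
    apply hB
    have h1 := hM2 c fun f hf => hann f (Submodule.mem_sup_right hf)
    simp only [Finset.mem_univ, and_self, if_true] at h1
    have hγ : ∀ v, B.valuation (g v) ≠ 0 := fun v => (Valuation.ne_zero_iff _).2 (hg v)
    have h2 : ∏ e, (B.valuation (g (a e)) * B.valuation (g (b e))) ^ c e = 1 := by
      have h3 : ∀ e, (B.valuation (g (a e)) * B.valuation (g (b e))) ^ c e =
          ∏ v, B.valuation (g v) ^ (c e * ((if a e = v then 1 else 0) + (if b e = v then 1 else 0))) := by
        intro e
        have h4 : ∀ v, B.valuation (g v) ^ (c e * ((if a e = v then 1 else 0) + (if b e = v then 1 else 0)))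
          = (if a e = v then B.valuation (g v) ^ c e else 1) *
            (if b e = v then B.valuation (g v) ^ c e else 1) := by
          intro v
          rw [mul_add, zpow_add₀ (hγ v)]
          congr 1 <;> split_ifs <;> simp
        rw [Finset.prod_congr rfl fun v _ => h4 v, Finset.prod_mul_distrib, Finset.prod_ite_eq,
          Finset.prod_ite_eq, if_pos (Finset.mem_univ _), if_pos (Finset.mem_univ _), mul_zpow]
      rw [Finset.prod_congr rfl fun e _ => h3 e, Finset.prod_comm]
      refine Finset.prod_eq_one fun v _ => ?_
      rw [prod_zpow_sum _ _ (hγ v)]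
      have h5 : ∑ e, c e * ((if a e = v then 1 else 0) + (if b e = v then 1 else 0)) = 0 := by
        have := hann (fv a b v) (Submodule.mem_sup_left (Submodule.subset_span ⟨v, rfl⟩))
        unfold fv at this
        exact_mod_cast this
      rw [h5, zpow_zero]
    rw [map_prod, ← one_mul (1 : B.ValueGroup)]
    nth_rewrite 1 [← h2]
    rw [← h1, ← Finset.prod_mul_distrib]
    refine Finset.prod_congr rfl fun e _ => ?_
    rw [hz e, map_zpow₀, map_mul, map_mul, mul_zpow]
  apply hφ
  ext e
  have h1 := hc e
  rw [hc0] at h1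
  have h2 : q e = 0 := by
    have : (D : ℚ) ≠ 0 := by exact_mod_cast hD
    simpa [this] using h1.symm
  simpa [q] using h2

theorem nni {U : Type*} [AddCommGroup U] [Module ℚ U] (W : Submodule ℚ U) (p q c : U)
    (h : W ⊔ Submodule.span ℚ {p + q} ⊔ Submodule.span ℚ {c} = ⊤) :
    W ⊔ Submodule.span ℚ {p} ⊔ Submodule.span ℚ {q + c} = ⊤ ∨
    W ⊔ Submodule.span ℚ {q} ⊔ Submodule.span ℚ {p + c} = ⊤ := by
  have hp : p ∈ W ⊔ Submodule.span ℚ {p + q} ⊔ Submodule.span ℚ {c} := h ▸ Submodule.mem_top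
  obtain ⟨y, hy, x3, hx3, e1⟩ := Submodule.mem_sup.1 hp
  obtain ⟨w, hw, x2, hx2, e2⟩ := Submodule.mem_sup.1 hy
  obtain ⟨a, rfl⟩ := Submodule.mem_span_singleton.1 hx2
  obtain ⟨b, rfl⟩ := Submodule.mem_span_singleton.1 hx3
  subst e2
  have fin : ∀ X : Submodule ℚ U, W ≤ X → p + q ∈ X → c ∈ X → X = ⊤ := by
    intro X h1 h2 h3
    rw [eq_top_iff, ← h]
    exact sup_le (sup_le h1 (by simpa using h2)) (by simpa using h3)
  by_cases hab : a = b
  · right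
    subst hab
    have m1 : W ≤ W ⊔ Submodule.span ℚ {q} ⊔ Submodule.span ℚ {p + c} := le_sup_left.trans le_sup_left
    have m2 : q + w ∈ W ⊔ Submodule.span ℚ {q} ⊔ Submodule.span ℚ {p + c} :=
      Submodule.add_mem _ (Submodule.mem_sup_left (Submodule.mem_sup_right (Submodule.mem_span_singleton_self _))) (m1 hw)
    have m3 : p + c - w ∈ W ⊔ Submodule.span ℚ {q} ⊔ Submodule.span ℚ {p + c} :=
      Submodule.sub_mem _ (Submodule.mem_sup_right (Submodule.mem_span_singleton_self _)) (m1 hw)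
    have hw2 : w = p - a • (p + q) - a • c := by nth_rewrite 1 [← e1]; module
    refine fin _ m1 ?_ ?_
    · have : p + q = (1 + a) • (q + w) + a • (p + c - w) := by rw [hw2]; module
      rw [this]
      exact Submodule.add_mem _ (Submodule.smul_mem _ _ m2) (Submodule.smul_mem _ _ m3)
    · have : c = (1 - a) • (p + c - w) - a • (q + w) := by rw [hw2]; module
      have m4 := Submodule.sub_mem _ (Submodule.smul_mem _ (1 - a) m3) (Submodule.smul_mem _ a m2)
      rwa [← this] at m4
  · left
    have hab' : a - b ≠ 0 := sub_ne_zero.2 hab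
    have m1 : W ≤ W ⊔ Submodule.span ℚ {p} ⊔ Submodule.span ℚ {q + c} := le_sup_left.trans le_sup_left
    have m2 : p - w ∈ W ⊔ Submodule.span ℚ {p} ⊔ Submodule.span ℚ {q + c} :=
      Submodule.sub_mem _ (Submodule.mem_sup_left (Submodule.mem_sup_right (Submodule.mem_span_singleton_self _))) (m1 hw)
    have m3 : q + c + w ∈ W ⊔ Submodule.span ℚ {p} ⊔ Submodule.span ℚ {q + c} :=
      Submodule.add_mem _ (Submodule.mem_sup_right (Submodule.mem_span_singleton_self _)) (m1 hw)
    have hw2 : w = p - a • (p + q) - b • c := by nth_rewrite 1 [← e1]; module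
    refine fin _ m1 ?_ ?_
    · rw [← Submodule.smul_mem_iff _ hab']
      have : (a - b) • (p + q) = (1 - b) • (p - w) - b • (q + c + w) := by rw [hw2]; module
      rw [this]
      exact Submodule.sub_mem _ (Submodule.smul_mem _ _ m2) (Submodule.smul_mem _ _ m3)
    · rw [← Submodule.smul_mem_iff _ hab']
      have : (a - b) • c = a • (q + c + w) - (1 - a) • (p - w) := by rw [hw2]; module
      rw [this]
      exact Submodule.sub_mem _ (Submodule.smul_mem _ _ m3) (Submodule.smul_mem _ _ m2)

theorem cr_comm {ι V : Type*} (a b : ι → V) (A B : Finset V) : cr a b A B = cr a b B A := by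
  funext e
  exact if_congr or_comm rfl rfl

theorem cr_union {ι V : Type*} (a b : ι → V) (A C D : Finset V) (h1 : Disjoint A C)
    (h2 : Disjoint A D) (h3 : Disjoint C D) : cr a b A (C ∪ D) = cr a b A C + cr a b A D := by
  funext e
  rw [Finset.disjoint_left] at h1 h2 h3
  have n1 := @h1 (a e)
  have n2 := @h2 (a e)
  have n3 := @h3 (a e)
  have n4 := @h1 (b e)
  have n5 := @h2 (b e)
  have n6 := @h3 (b e)
  simp only [cr, Pi.add_apply, Finset.mem_union]
  by_cases m1 : a e ∈ A <;> by_cases m2 : a e ∈ C <;> by_cases m3 : a e ∈ D <;>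
  by_cases m4 : b e ∈ A <;> by_cases m5 : b e ∈ C <;> by_cases m6 : b e ∈ D <;> simp_all

inductive CatCol {ι V : Type*} (a b : ι → V) : Finset V → Submodule ℚ (ι → ℚ) → Prop
  | leaf (v : V) : CatCol a b {v} ⊥
  | snoc {A : Finset V} {M : Submodule ℚ (ι → ℚ)} (v : V) : CatCol a b A M → v ∉ A →
      CatCol a b (insert v A) (M ⊔ Submodule.span ℚ {cr a b {v} A})

theorem cat_inner {ι V : Type*} (a b : ι → V) (k : ℕ)
    (ih : ∀ S M W, S.card ≤ k → TreeCol a b S M → W ⊔ M = ⊤ → ∃ M', CatCol a b S M' ∧ W ⊔ M' = ⊤)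
    (B : Finset V) (N : Submodule ℚ (ι → ℚ)) (hB : TreeCol a b B N) :
    ∀ A M W, TreeCol a b A M → Disjoint A B → A.card + B.card ≤ k + 1 →
      W ⊔ (M ⊔ N ⊔ Submodule.span ℚ {cr a b A B}) = ⊤ →
      ∃ M', CatCol a b (A ∪ B) M' ∧ W ⊔ M' = ⊤ := by
  induction hB with
  | leaf v =>
    intro A M W hA hd hc hW
    rw [Finset.card_singleton] at hc
    obtain ⟨M', h1, h2⟩ := ih A M (W ⊔ Submodule.span ℚ {cr a b {v} A}) (by omega) hA (by
      rw [← hW, cr_comm a b A {v}]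
      simp only [sup_bot_eq]
      ac_rfl)
    refine ⟨M' ⊔ Submodule.span ℚ {cr a b {v} A}, ?_, ?_⟩
    · rw [Finset.union_comm, ← Finset.insert_eq]
      exact CatCol.snoc v h1 (by simpa using hd)
    · rw [← h2]; ac_rfl
  | @node C D NC ND hC hD hCD ihC ihD =>
    intro A M W hA hd hc hW
    rw [Finset.disjoint_union_right] at hd
    rw [Finset.card_union_of_disjoint hCD] at hc
    rw [cr_union a b A C D hd.1 hd.2 hCD] at hW
    rcases nni (W ⊔ M ⊔ NC ⊔ ND) (cr a b A C) (cr a b A D) (cr a b C D) (by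
      rw [← hW]; ac_rfl) with h | h
    · obtain ⟨M', h1, h2⟩ := ihD (A ∪ C) _ W (TreeCol.node hA hC hd.1)
        (Finset.disjoint_union_left.2 ⟨hd.2, hCD⟩) (by
          rw [Finset.card_union_of_disjoint hd.1]; omega) (by
          rw [← h, cr_comm a b (A ∪ C) D, cr_union a b D A C hd.2.symm hCD.symm hd.1,
            cr_comm a b D A, cr_comm a b D C]
          ac_rfl)
      exact ⟨M', by rwa [← Finset.union_assoc], h2⟩
    · obtain ⟨M', h1, h2⟩ := ihC (A ∪ D) _ W (TreeCol.node hA hD hd.2)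
        (Finset.disjoint_union_left.2 ⟨hd.1, hCD.symm⟩) (by
          rw [Finset.card_union_of_disjoint hd.2]; omega) (by
          rw [← h, cr_comm a b (A ∪ D) C, cr_union a b C A D hd.1.symm hCD hd.2,
            cr_comm a b C A]
          ac_rfl)
      exact ⟨M', by rwa [Finset.union_comm C D, ← Finset.union_assoc], h2⟩

theorem tree_cat {ι V : Type*} (a b : ι → V) (k : ℕ) :
    ∀ S M W, S.card ≤ k → TreeCol a b S M → W ⊔ M = ⊤ → ∃ M', CatCol a b S M' ∧ W ⊔ M' = ⊤ := by
  induction k with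
  | zero =>
    intro S M W hS hT hW
    cases hT with
    | leaf v => exact ⟨⊥, CatCol.leaf v, hW⟩
    | @node A B M N hA hB hd =>
      refine cat_inner a b 0 ?_ B N hB A M W hA hd ?_ hW
      · intro S M W h1 h2
        exfalso
        have : ∀ S M, TreeCol a b S M → S.Nonempty := by
          intro S M h
          induction h with
          | leaf v => simp
          | node _ _ _ h _ => exact h.mono Finset.subset_union_left
        have := (this S M h2).card_pos
        omega
      · rw [Finset.card_union_of_disjoint hd] at hS; omega
  | succ k ih =>
    intro S M W hS hT hW
    cases hT with
    | leaf v => exact ⟨⊥, CatCol.leaf v, hW⟩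
    | @node A B M N hA hB hd =>
      rw [Finset.card_union_of_disjoint hd] at hS
      exact cat_inner a b k ih B N hB A M W hA hd hS hW

theorem cat_ord {ι V : Type*} (a b : ι → V) (S : Finset V) (M : Submodule ℚ (ι → ℚ))
    (h : CatCol a b S M) : ∃ ord : V → ℕ, Set.InjOn ord S ∧ (∀ v ∈ S, ord v < S.card) ∧
      M ≤ Submodule.span ℚ ((fun v => cr a b {v} (S.filter (fun u => ord u < ord v))) '' S) := by
  induction h with
  | leaf v => exact ⟨fun _ => 0, by simp, by simp, bot_le⟩
  | @snoc A M v hA hv ih =>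
    obtain ⟨ord, h1, h2, h3⟩ := ih
    have hne : ∀ u ∈ A, u ≠ v := fun u hu h => hv (h ▸ hu)
    have hu1 : ∀ u ∈ A, Function.update ord v A.card u = ord u := fun u hu =>
      Function.update_of_ne (hne u hu) _ _
    refine ⟨Function.update ord v A.card, ?_, ?_, sup_le (h3.trans (Submodule.span_mono ?_)) ?_⟩
    · intro x hx y hy hxy
      rw [Finset.mem_coe, Finset.mem_insert] at hx hy
      rcases hx with rfl | hx <;> rcases hy with rfl | hy
      · rfl
      · rw [hu1 y hy, Function.update_self] at hxy
        have := h2 y hy; omega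
      · rw [hu1 x hx, Function.update_self] at hxy
        have := h2 x hx; omega
      · rw [hu1 x hx, hu1 y hy] at hxy
        exact h1 hx hy hxy
    · intro u hu
      rw [Finset.card_insert_of_notMem hv]
      rcases Finset.mem_insert.1 hu with rfl | hu
      · rw [Function.update_self]; omega
      · rw [hu1 u hu]; have := h2 u hu; omega
    · rintro _ ⟨u, hu, rfl⟩
      refine ⟨u, Finset.mem_coe.2 (Finset.mem_insert_of_mem hu), ?_⟩
      simp only
      congr 1
      ext x
      rw [Finset.mem_filter, Finset.mem_filter, Finset.mem_insert, hu1 u hu]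
      constructor
      · rintro ⟨rfl | hx, h⟩
        · rw [Function.update_self] at h
          have := h2 u hu; omega
        · exact ⟨hx, by rwa [hu1 x hx] at h⟩
      · rintro ⟨hx, h⟩
        exact ⟨Or.inr hx, by rwa [hu1 x hx]⟩
    · rw [Submodule.span_singleton_le_iff_mem]
      refine Submodule.subset_span ⟨v, by simp, ?_⟩
      simp only
      congr 1
      ext x
      rw [Finset.mem_filter, Finset.mem_insert, Function.update_self]
      constructor
      · rintro ⟨rfl | hx, h⟩
        · rw [Function.update_self] at h; omega
        · exact hx
      · intro hx
        exact ⟨Or.inr hx, by rw [hu1 x hx]; exact h2 x hx⟩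

/-- the combinatorial outcome -/
theorem exists_ord {ι V L : Type*} [Fintype ι] [Fintype V] [Nonempty V] [Field L] (a b : ι → V)
    (hab : ∀ e, a e ≠ b e)
    (z : ι → L) (B : ValuationSubring L)
    (hB : ∀ c : ι → ℤ, B.valuation (∏ e, z e ^ c e) = 1 → c = 0)
    (g : V → L) (pt : V → L) (hg : ∀ v, g v ≠ 0)
    (hz : ∀ e, z e = g (a e) * g (b e) * (pt (a e) - pt (b e))) (hz0 : ∀ e, z e ≠ 0) :
    ∃ ord : V → ℕ, Function.Injective ord ∧ ∀ f : ι → ℚ, ∃ x y : V → ℚ, ∀ e, f e =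
      x (if ord (a e) < ord (b e) then b e else a e) + y (if ord (a e) < ord (b e) then a e else b e) := by
  obtain ⟨M0, hM0, hW0⟩ := tree_top a b z B hB g pt hg hz hz0
  obtain ⟨M, hM, hW⟩ := tree_cat a b _ _ _ _ le_rfl hM0 hW0
  obtain ⟨ord, h1, -, h3⟩ := cat_ord a b _ _ hM
  have hinj : Function.Injective ord := fun x y h => h1 (by simp) (by simp) h
  refine ⟨ord, hinj, ?_⟩
  let tp : ι → V := fun e => if ord (a e) < ord (b e) then b e else a e
  let bt : ι → V := fun e => if ord (a e) < ord (b e) then a e else b e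
  let X : Submodule ℚ (ι → ℚ) :=
    { carrier := {f | ∃ x y : V → ℚ, ∀ e, f e = x (tp e) + y (bt e)}
      add_mem' := by
        rintro f g ⟨x, y, h⟩ ⟨x', y', h'⟩
        refine ⟨x + x', y + y', fun e => ?_⟩
        simp only [Pi.add_apply, h e, h' e]; ring
      zero_mem' := ⟨0, 0, by simp⟩
      smul_mem' := by
        rintro c f ⟨x, y, h⟩
        refine ⟨c • x, c • y, fun e => ?_⟩
        simp only [Pi.smul_apply, h e, smul_eq_mul]; ring }
  have hX : X = ⊤ := by
    rw [eq_top_iff, ← hW]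
    refine sup_le ?_ (h3.trans ?_)
    · rw [Submodule.span_le]
      rintro _ ⟨v, rfl⟩
      refine ⟨fun u => if u = v then 1 else 0, fun u => if u = v then 1 else 0, fun e => ?_⟩
      simp only [fv, tp, bt]
      split_ifs <;> simp_all
    · rw [Submodule.span_le]
      rintro _ ⟨v, -, rfl⟩
      refine ⟨fun u => if u = v then 1 else 0, 0, fun e => ?_⟩
      have hne : ord (a e) ≠ ord (b e) := fun h => hab e (hinj h)
      simp only [cr, tp, Finset.mem_singleton, Finset.mem_filter, Finset.mem_univ, true_and,
        Pi.zero_apply, add_zero]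
      by_cases hlt : ord (a e) < ord (b e)
      · refine if_congr ?_ rfl rfl
        rw [if_pos hlt]
        constructor
        · rintro (⟨h4, h5⟩ | ⟨h4, h5⟩)
          · rw [← h4] at h5; omega
          · exact h5
        · intro h; exact Or.inr ⟨h ▸ hlt, h⟩
      · refine if_congr ?_ rfl rfl
        rw [if_neg hlt]
        constructor
        · rintro (⟨h4, h5⟩ | ⟨h4, h5⟩)
          · exact h4
          · rw [← h5] at h4; omega
        · intro h; exact Or.inl ⟨h, by rw [← h]; omega⟩
  intro f
  have : f ∈ X := hX ▸ Submodule.mem_top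
  exact this

theorem forest_zero {ι V K : Type*} [Fintype ι] [Field K] (tp bt : ι → V)
    (h : ∀ f : ι → ℚ, ∃ x y : V → ℚ, ∀ e, f e = x (tp e) + y (bt e)) (c : ι → K)
    (h1 : ∀ v, ∑ e, (if tp e = v then c e else 0) = 0)
    (h2 : ∀ v, ∑ e, (if bt e = v then c e else 0) = 0) : c = 0 := by
  by_contra hc
  let S : Finset ι := Finset.univ.filter fun e => c e ≠ 0
  have hS : ∀ e, e ∈ S ↔ c e ≠ 0 := fun e => by simp [S]
  obtain ⟨e0, he0⟩ := Function.ne_iff.1 hc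
  have he0S : e0 ∈ S := (hS e0).2 he0
  have key : ∀ q : ι → V, (∀ v, ∑ e, (if q e = v then c e else 0) = 0) →
      2 * (S.image q).card ≤ S.card := by
    intro q hq
    rw [Finset.card_eq_sum_card_image q S, mul_comm, ← smul_eq_mul]
    refine Finset.card_nsmul_le_sum _ _ _ fun v hv => ?_
    obtain ⟨e, he, rfl⟩ := Finset.mem_image.1 hv
    by_contra hlt
    have hle : (S.filter fun x => q x = q e).card ≤ 1 := by omega
    rw [Finset.card_le_one] at hle
    have := hq (q e)
    rw [Finset.sum_eq_single e] at this
    · rw [if_pos rfl] at this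
      exact (hS e).1 he this
    · intro e' _ hne
      split_ifs with hqe
      · by_contra hce
        exact hne (hle e' (Finset.mem_filter.2 ⟨(hS e').2 hce, hqe⟩) e (Finset.mem_filter.2 ⟨he, rfl⟩))
      · rfl
    · simp
  have k1 := key tp h1
  have k2 := key bt h2
  let Φ : ((S.image tp → ℚ) × (S.image bt → ℚ)) →ₗ[ℚ] (S → ℚ) :=
    { toFun := fun xy e => xy.1 ⟨tp e, Finset.mem_image_of_mem _ e.2⟩ +
        xy.2 ⟨bt e, Finset.mem_image_of_mem _ e.2⟩
      map_add' := by intro x y; funext e; simp; ring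
      map_smul' := by intro x y; funext e; simp; ring }
  have hsurj : Function.Surjective Φ := by
    intro f
    obtain ⟨x, y, hxy⟩ := h fun e => if he : e ∈ S then f ⟨e, he⟩ else 0
    refine ⟨(fun v => x v, fun v => y v), ?_⟩
    funext e
    have := hxy e
    rw [dif_pos e.2] at this
    exact this.symm
  have d1 : Module.finrank ℚ ((S.image tp → ℚ) × (S.image bt → ℚ)) =
      (S.image tp).card + (S.image bt).card := by
    rw [Module.finrank_prod, Module.finrank_fintype_fun_eq_card, Module.finrank_fintype_fun_eq_card,
      Fintype.card_coe, Fintype.card_coe]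
  have d2 : Module.finrank ℚ (S → ℚ) = S.card := by
    rw [Module.finrank_fintype_fun_eq_card, Fintype.card_coe]
  have d3 := LinearMap.finrank_le_finrank_of_surjective hsurj
  have hinj : Function.Injective Φ :=
    (LinearMap.injective_iff_surjective_of_finrank_eq_finrank (by omega)).2 hsurj
  have hz : Φ (fun _ => 1, fun _ => -1) = Φ 0 := by
    funext e
    simp [Φ]
  have := congrFun (congrArg Prod.fst (hinj hz)) ⟨tp e0, Finset.mem_image_of_mem _ he0S⟩
  simp at this

theorem sum_G {K : Type*} [Field K] {m n : ℕ} (G : Set (Fin m × Fin n)) (f : Fin m × Fin n → K)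
    (hf : ∀ e, e ∉ G → f e = 0) : ∑ e : G, f e = ∑ e, f e := by
  have h2 : ∑ x : G, f x = ∑ e ∈ G.toFinset, f e := Finset.sum_set_coe G
  rw [h2]
  apply Finset.sum_subset (Finset.subset_univ _)
  intro e _ he
  exact hf e (by simpa using he)

def xpt (F : Type*) [Field F] {V : Type*} (ord : V → ℕ) (v : V) : FractionRing (Polynomial F) :=
  (algebraMap (Polynomial F) (FractionRing (Polynomial F)) Polynomial.X ^ ord v)⁻¹

theorem T_ne (F : Type*) [Field F] :
    algebraMap (Polynomial F) (FractionRing (Polynomial F)) Polynomial.X ≠ 0 := by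
  rw [Ne, FaithfulSMul.algebraMap_eq_zero_iff]
  exact Polynomial.X_ne_zero

theorem xpt_inj (F : Type*) [Field F] {V : Type*} (ord : V → ℕ) (h : Function.Injective ord) :
    Function.Injective (xpt F ord) := by
  intro x y hxy
  unfold xpt at hxy
  rw [inv_inj, ← map_pow, ← map_pow] at hxy
  have h1 := IsFractionRing.injective (Polynomial F) (FractionRing (Polynomial F)) hxy
  have h2 := congrArg Polynomial.natDegree h1
  rw [Polynomial.natDegree_X_pow, Polynomial.natDegree_X_pow] at h2
  exact h h2

theorem xpt_mul (F : Type*) [Field F] {V : Type*} (ord : V → ℕ) (x y : V) (h : ord y ≤ ord x) :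
    xpt F ord x * algebraMap (Polynomial F) (FractionRing (Polynomial F)) Polynomial.X ^ (ord x - ord y)
      = xpt F ord y := by
  have h0 := T_ne F
  unfold xpt
  rw [pow_sub₀ _ h0 h]
  field_simp

theorem construct_22 (F : Type*) [Field F] {m n : ℕ} (G : Set (Fin m × Fin n))
    (ord : Fin m ⊕ Fin n → ℕ) (tp bt : G → Fin m ⊕ Fin n)
    (htb : ∀ e : G, (tp e = Sum.inr e.1.2 ∧ bt e = Sum.inl e.1.1) ∨
      (tp e = Sum.inl e.1.1 ∧ bt e = Sum.inr e.1.2))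
    (hlt : ∀ e : G, ord (bt e) < ord (tp e))
    (hf : ∀ f : G → ℚ, ∃ x y : Fin m ⊕ Fin n → ℚ, ∀ e, f e = x (tp e) + y (bt e)) :
    DI (Matrix.of fun (i : Fin m) (c : Fin 2) => if c = 0 then 1 else xpt F ord (Sum.inl i))
      (Matrix.of fun (j : Fin n) (c : Fin 2) => if c = 0 then 1 else xpt F ord (Sum.inr j)) G := by
  let ψ := algebraMap (Polynomial F) (FractionRing (Polynomial F))
  let w : G → (Fin m ⊕ Fin n) × Bool → Polynomial F := fun e vb =>
    (if (if vb.2 then tp e else bt e) = vb.1 then 1 else 0) +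
    (if (if vb.2 then bt e else tp e) = vb.1 then Polynomial.X ^ (ord (tp e) - ord (bt e)) else 0)
  have hli : LinearIndependent (FractionRing (Polynomial F)) (fun e k => ψ (w e k)) := by
    refine spec_li ψ (IsFractionRing.injective _ _) (Polynomial.evalRingHom 0) w ?_
    rw [Fintype.linearIndependent_iff]
    intro c hc
    have hev : ∀ e vb, Polynomial.evalRingHom (0 : F) (w e vb) =
        if (if vb.2 then tp e else bt e) = vb.1 then 1 else 0 := by
      intro e vb
      have h1 : ord (tp e) - ord (bt e) ≠ 0 := by have := hlt e; omega
      have h2 : Polynomial.eval (0 : F)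
          (if (if vb.2 then bt e else tp e) = vb.1 then Polynomial.X ^ (ord (tp e) - ord (bt e)) else 0) = 0 := by
        split_ifs <;> simp [h1]
      simp only [w, Polynomial.coe_evalRingHom, Polynomial.eval_add]
      rw [h2, add_zero]
      split_ifs <;> simp
    have hc' : ∀ vb : (Fin m ⊕ Fin n) × Bool, ∑ e, c e * (if (if vb.2 then tp e else bt e) = vb.1 then 1 else 0) = 0 := by
      intro vb
      have := congrFun hc vb
      rw [Finset.sum_apply] at this
      refine Eq.trans (Finset.sum_congr rfl fun e _ => ?_) this
      rw [Pi.smul_apply, hev, smul_eq_mul]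
    have h0 : c = 0 := by
      apply forest_zero tp bt hf
      · intro v
        refine Eq.trans (Finset.sum_congr rfl fun e _ => ?_) (hc' (v, true))
        simp only [if_true, Bool.false_eq_true, if_false]
        split_ifs <;> simp
      · intro v
        refine Eq.trans (Finset.sum_congr rfl fun e _ => ?_) (hc' (v, false))
        simp only [if_true, Bool.false_eq_true, if_false]
        split_ifs <;> simp
    intro e
    rw [h0]; rfl
  intro R hR h1 h2
  have hS : ∀ e : G, R e.1.1 e.1.2 * xpt F ord (tp e) = 0 := by
    refine Fintype.linearIndependent_iff.1 hli (fun e => R e.1.1 e.1.2 * xpt F ord (tp e)) ?_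
    funext vb
    obtain ⟨v, bb⟩ := vb
    rw [Finset.sum_apply, Pi.zero_apply]
    have A1 : ∀ i, ∑ j, R i j = 0 := by
      intro i
      have := congrFun (congrFun h2 i) 0
      simpa [Matrix.mul_apply] using this
    have A2 : ∀ i, ∑ j, R i j * xpt F ord (Sum.inr j) = 0 := by
      intro i
      have := congrFun (congrFun h2 i) 1
      simpa [Matrix.mul_apply] using this
    have B1 : ∀ j, ∑ i, R i j = 0 := by
      intro j
      have := congrFun (congrFun h1 0) j
      simpa [Matrix.mul_apply] using this
    have B2 : ∀ j, ∑ i, R i j * xpt F ord (Sum.inl i) = 0 := by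
      intro j
      have := congrFun (congrFun h1 1) j
      simpa [Matrix.mul_apply, mul_comm] using this
    have C1 : ∑ e : G, R e.1.1 e.1.2 * ((if Sum.inl e.1.1 = v then 1 else 0) +
        (if Sum.inr e.1.2 = v then 1 else 0)) = 0 := by
      rw [sum_G G (fun e => R e.1 e.2 * ((if Sum.inl e.1 = v then 1 else 0) +
        (if Sum.inr e.2 = v then 1 else 0))) (fun e he => by rw [hR e he, zero_mul])]
      rcases v with i | j
      · rw [Fintype.sum_prod_type, Finset.sum_eq_single i]
        · simpa using A1 i
        · intro b _ hb; simp [hb]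
        · simp
      · rw [Fintype.sum_prod_type_right, Finset.sum_eq_single j]
        · simpa using B1 j
        · intro b _ hb; simp [hb]
        · simp
    have C2 : ∑ e : G, R e.1.1 e.1.2 * ((if Sum.inl e.1.1 = v then xpt F ord (Sum.inr e.1.2) else 0) +
        (if Sum.inr e.1.2 = v then xpt F ord (Sum.inl e.1.1) else 0)) = 0 := by
      rw [sum_G G (fun e => R e.1 e.2 * ((if Sum.inl e.1 = v then xpt F ord (Sum.inr e.2) else 0) +
        (if Sum.inr e.2 = v then xpt F ord (Sum.inl e.1) else 0))) (fun e he => by rw [hR e he, zero_mul])]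
      rcases v with i | j
      · rw [Fintype.sum_prod_type, Finset.sum_eq_single i]
        · simpa using A2 i
        · intro b _ hb; simp [hb]
        · simp
      · rw [Fintype.sum_prod_type_right, Finset.sum_eq_single j]
        · simpa using B2 j
        · intro b _ hb; simp [hb]
        · simp
    have hψ : ∀ e : G, ∀ (P1 P2 : Prop) [Decidable P1] [Decidable P2], xpt F ord (tp e) *
        ψ ((if P1 then 1 else 0) + (if P2 then Polynomial.X ^ (ord (tp e) - ord (bt e)) else 0)) =
        (if P1 then xpt F ord (tp e) else 0) + (if P2 then xpt F ord (bt e) else 0) := by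
      intro e P1 P2 _ _
      rw [map_add, mul_add]
      congr 1
      · split_ifs <;> simp [ψ]
      · split_ifs
        · rw [map_pow]; exact xpt_mul F ord _ _ (hlt e).le
        · simp
    have hw : ∀ (e : G) (vb : (Fin m ⊕ Fin n) × Bool), xpt F ord (tp e) * ψ (w e vb) =
        (if (if vb.2 then tp e else bt e) = vb.1 then xpt F ord (tp e) else 0) +
        (if (if vb.2 then bt e else tp e) = vb.1 then xpt F ord (bt e) else 0) :=
      fun e vb => hψ e _ _
    cases bb
    · rw [← C2]
      refine Finset.sum_congr rfl fun e _ => ?_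
      rw [Pi.smul_apply, smul_eq_mul, mul_assoc, hw]
      congr 1
      rcases htb e with ⟨ht, hb⟩ | ⟨ht, hb⟩
      · simp [ht, hb]
      · simp [ht, hb, add_comm]
    · rw [← mul_zero (xpt F ord v), ← C1, Finset.mul_sum]
      refine Finset.sum_congr rfl fun e _ => ?_
      rw [Pi.smul_apply, smul_eq_mul, mul_assoc, hw, mul_left_comm]
      congr 1
      rw [mul_add]
      rcases htb e with ⟨ht, hb⟩ | ⟨ht, hb⟩
      · rw [add_comm]
        congr 1 <;> simp only [ht, hb, if_true, Bool.true_eq_false, if_false] <;> split_ifs with hh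
        · rw [← hh, mul_one]
        · simp
        · rw [← hh, mul_one]
        · simp
      · congr 1 <;> simp only [ht, hb, if_true, Bool.true_eq_false, if_false] <;> split_ifs with hh
        · rw [← hh, mul_one]
        · simp
        · rw [← hh, mul_one]
        · simp
  ext i j
  by_cases he : (i, j) ∈ G
  · have := hS ⟨(i, j), he⟩
    rcases mul_eq_zero.1 this with h | h
    · exact h
    · exfalso
      unfold xpt at h
      exact inv_ne_zero (pow_ne_zero _ (T_ne F)) h
  · exact hR (i, j) he

theorem minj_two {K : Type*} [Field K] {m : ℕ} (x : Fin m → K) (hx : Function.Injective x)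
    (hm : 2 ≤ m) : MInj (Matrix.of fun (i : Fin m) (c : Fin 2) => if c = 0 then 1 else x i) := by
  intro y hy
  have h1 := congrFun hy ⟨0, by omega⟩
  have h2 := congrFun hy ⟨1, by omega⟩
  simp only [Matrix.mulVec, dotProduct, Fin.sum_univ_two, Matrix.of_apply, Pi.zero_apply] at h1 h2
  simp at h1 h2
  have hne : x ⟨0, by omega⟩ - x ⟨1, by omega⟩ ≠ 0 := by
    rw [sub_ne_zero]
    intro h
    have := hx h
    simp at this
  have h3 : (x ⟨0, by omega⟩ - x ⟨1, by omega⟩) * y 1 = 0 := by linear_combination h1 - h2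
  have h4 : y 1 = 0 := by simpa [hne] using h3
  have h5 : y 0 = 0 := by simpa [h4] using h1
  funext c
  fin_cases c
  · exact h5
  · exact h4

theorem ord_22 {m n : ℕ} (hm : 0 < m) {K : Type*} [Field K] [Algebra ℚ K] {P : Matrix (Fin m) (Fin 2) K}
    {Q : Matrix (Fin n) (Fin 2) K} {G : Set (Fin m × Fin n)} (h : DI P Q G) :
    ∃ ord : Fin m ⊕ Fin n → ℕ, Function.Injective ord ∧ ∀ f : G → ℚ, ∃ x y : Fin m ⊕ Fin n → ℚ,
      ∀ e : G, f e = x (if ord (Sum.inl e.1.1) < ord (Sum.inr e.1.2) then Sum.inr e.1.2 else Sum.inl e.1.1) +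
        y (if ord (Sum.inl e.1.1) < ord (Sum.inr e.1.2) then Sum.inl e.1.1 else Sum.inr e.1.2) := by
  have : Nonempty (Fin m ⊕ Fin n) := ⟨Sum.inl ⟨0, hm⟩⟩
  have hz := alg_indep_z h
  have hz2 : AlgebraicIndependent ℚ
      (fun e : G => algebraMap (PR m n) (FractionRing (PR m n)) (zpoly (e : Fin m × Fin n))) := by
    exact hz.map' (f := IsScalarTower.toAlgHom ℚ (PR m n) (FractionRing (PR m n)))
      (IsFractionRing.injective _ _)
  obtain ⟨B, hB⟩ := exists_val _ hz2
  let X : (Fin m × Fin 2) ⊕ (Fin n × Fin 2) → FractionRing (PR m n) := fun x =>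
    algebraMap (PR m n) (FractionRing (PR m n)) (MvPolynomial.X x)
  have hX : ∀ x, X x ≠ 0 := by
    intro x
    simp only [X]
    rw [Ne, FaithfulSMul.algebraMap_eq_zero_iff]
    exact MvPolynomial.X_ne_zero x
  refine exists_ord (fun e : G => (Sum.inl e.1.1 : Fin m ⊕ Fin n)) (fun e : G => Sum.inr e.1.2)
    (fun e => by simp) _ B hB
    (Sum.elim (fun i => X (Sum.inl (i, 1))) (fun j => X (Sum.inr (j, 0))))
    (Sum.elim (fun i => X (Sum.inl (i, 0)) / X (Sum.inl (i, 1)))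
      (fun j => - X (Sum.inr (j, 1)) / X (Sum.inr (j, 0)))) ?_ ?_ ?_
  · rintro (i | j)
    · exact hX _
    · exact hX _
  · intro e
    simp only [Sum.elim_inl, Sum.elim_inr, zpoly, Fin.sum_univ_two, map_add, map_mul]
    have h1 := hX (Sum.inl (e.1.1, 1))
    have h2 := hX (Sum.inr (e.1.2, 0))
    field_simp
    simp only [X]
    ring
  · exact fun e => hz2.ne_zero e

theorem case_22 (p : ℕ) [Fact p.Prime] (m n s r : ℕ) (hm : m = s + 2) (hn : n = r + 2)
    (E : Set (Fin m × Fin n)) (h : TensorIndep ℚ m n s r E) : TensorIndep (ZMod p) m n s r E := by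
  obtain ⟨E', hE, hc, hsp⟩ := extend_basis ℚ m n s r (by omega) (by omega) E h
  have hU := genU_minj ℚ m n s r (by omega)
  have hV := genV_minj ℚ m n s r (by omega)
  obtain ⟨P, hP, hXP⟩ := exists_P_of_X (a := 2) hm _ hU
  obtain ⟨Q, hQ, hYQ⟩ := exists_P_of_X (a := 2) hn _ hV
  have hdi := (duality hU hV hXP hYQ E').1 hsp
  obtain ⟨ord, hinj, hf⟩ := ord_22 (by omega) hdi
  have hdi' := construct_22 (ZMod p) E'ᶜ ord _ _ (fun e => by
    by_cases hlt : ord (Sum.inl e.1.1) < ord (Sum.inr e.1.2)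
    · exact Or.inl ⟨if_pos hlt, if_pos hlt⟩
    · exact Or.inr ⟨if_neg hlt, if_neg hlt⟩) (fun e => by
    by_cases hlt : ord (Sum.inl e.1.1) < ord (Sum.inr e.1.2)
    · simp only [if_pos hlt]; exact hlt
    · simp only [if_neg hlt]
      have : ord (Sum.inl e.1.1) ≠ ord (Sum.inr e.1.2) := fun h => by simpa using hinj h
      omega) hf
  exact indep_of_DI (L := FractionRing (Polynomial (ZMod p))) hm hn _ _
    (minj_two (fun i => xpt (ZMod p) ord (Sum.inl i)) ((xpt_inj _ ord hinj).comp Sum.inl_injective) (by omega))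
    (minj_two (fun i => xpt (ZMod p) ord (Sum.inr i)) ((xpt_inj _ ord hinj).comp Sum.inr_injective) (by omega))
    E E' hE hc hdi'

theorem case_a0 (p : ℕ) [Fact p.Prime] (m n r : ℕ) (hr : r ≤ n)
    (E : Set (Fin m × Fin n)) (h : TensorIndep ℚ m n m r E) : TensorIndep (ZMod p) m n m r E := by
  let j : Fin m × Fin n → Fin (m + 1) × Fin n := fun e => (e.1.castSucc, e.2)
  have hj : Function.Injective j := by
    rintro ⟨a, b⟩ ⟨c, d⟩ h
    simp only [j, Prod.mk.injEq, Fin.castSucc_inj] at h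
    exact Prod.ext h.1 h.2
  have h1 : TensorIndep ℚ (m + 1) n m r (j '' E) := by
    apply indep_of_special (L := TField ℚ m n m r)
      (fun i k => if hi : (i : ℕ) < m then genU ℚ m n m r ⟨i, hi⟩ k else 0) (genV ℚ m n m r)
    have h2 : LinearIndependent (TField ℚ m n m r) (fun e : E => tvec ℚ m n m r e) := h
    let ε := Equiv.Set.image j E hj
    rw [← linearIndependent_equiv ε]
    have key : (fun e : E => tvec ℚ m n m r e) = (fun e : j '' E => tv
        (fun (i : Fin (m + 1)) k => if hi : (i : ℕ) < m then genU ℚ m n m r ⟨i, hi⟩ k else 0) (genV ℚ m n m r) e) ∘ ε := by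
      funext e kl
      have hj2 : ((ε e : j '' E) : Fin (m + 1) × Fin n) = j e := rfl
      rw [Function.comp_apply, hj2]
      simp [tv, j, tvec, genU, genV]
    rw [← key]
    exact h2
  have h3 := case_a1 p (m + 1) n m r rfl hr _ h1
  apply indep_of_special (L := TField (ZMod p) (m + 1) n m r)
    (fun i k => genU (ZMod p) (m + 1) n m r i.castSucc k) (genV (ZMod p) (m + 1) n m r)
  have h4 : LinearIndependent (TField (ZMod p) (m + 1) n m r)
    (fun e : j '' E => tvec (ZMod p) (m + 1) n m r e) := h3
  exact h4.comp (fun e : E => ⟨j e, e, e.2, rfl⟩) (fun a b hab => by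
    apply Subtype.ext
    apply hj
    exact congrArg Subtype.val hab)

def UU {K : Type*} [Field K] {m s : ℕ} (u : Fin m → Fin s → K) (A : Finset (Fin m)) :
    Submodule K (Fin s → K) := Submodule.span K (u '' A)

def Gen {K : Type*} [Field K] {m s : ℕ} (u : Fin m → Fin s → K) : Prop :=
  ∀ A : Finset (Fin m), A.card ≤ s → LinearIndependent K (fun i : A => u i)

theorem UU_mono {K : Type*} [Field K] {m s : ℕ} (u : Fin m → Fin s → K) {A B : Finset (Fin m)}
    (h : A ⊆ B) : UU u A ≤ UU u B := Submodule.span_mono (Set.image_mono (by exact_mod_cast h))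

theorem UU_mem {K : Type*} [Field K] {m s : ℕ} (u : Fin m → Fin s → K) {A : Finset (Fin m)} {i : Fin m}
    (h : i ∈ A) : u i ∈ UU u A := Submodule.subset_span ⟨i, by exact_mod_cast h, rfl⟩

theorem finrank_UU {K : Type*} [Field K] {m s : ℕ} {u : Fin m → Fin s → K} (hu : Gen u)
    (A : Finset (Fin m)) (hA : A.card ≤ s) : Module.finrank K (UU u A) = A.card := by
  have h1 : UU u A = Submodule.span K (Set.range fun i : A => u i) := by
    unfold UU
    rw [Set.image_eq_range]
    rfl
  rw [h1, finrank_span_eq_card (hu A hA), Fintype.card_coe]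

theorem not_mem_UU {K : Type*} [Field K] {m s : ℕ} {u : Fin m → Fin s → K} (hu : Gen u)
    (A : Finset (Fin m)) (hA : A.card + 1 ≤ s) (i : Fin m) (hi : u i ∈ UU u A) : i ∈ A := by
  by_contra hn
  have h1 := finrank_UU hu (insert i A) (by rw [Finset.card_insert_of_notMem hn]; exact hA)
  have h2 : UU u (insert i A) ≤ UU u A := by
    unfold UU
    rw [Submodule.span_le]
    rintro _ ⟨j, hj, rfl⟩
    rcases Finset.mem_insert.1 (Finset.mem_coe.1 hj) with rfl | hj
    · exact hi
    · exact UU_mem u hj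
  have h3 := Submodule.finrank_mono h2
  rw [h1, finrank_UU hu A (by omega), Finset.card_insert_of_notMem hn] at h3
  omega

theorem UU_top {K : Type*} [Field K] {m s : ℕ} {u : Fin m → Fin s → K} (hu : Gen u)
    (A : Finset (Fin m)) (hA : A.card = s) : UU u A = ⊤ := by
  apply Submodule.eq_top_of_finrank_eq
  rw [finrank_UU hu A hA.le, hA]
  simp

theorem exists_above {K V : Type*} [Field K] [AddCommGroup V] [Module K V] [FiniteDimensional K V] (k : ℕ) :
    ∀ W : Submodule K V, Module.finrank K W + k ≤ Module.finrank K V →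
      ∃ V' : Submodule K V, W ≤ V' ∧ Module.finrank K V' = Module.finrank K W + k := by
  induction k with
  | zero => exact fun W _ => ⟨W, le_rfl, rfl⟩
  | succ k ih =>
    intro W hW
    obtain ⟨V', h1, h2⟩ := ih W (by omega)
    have hne : V' ≠ ⊤ := by
      intro h
      rw [h, finrank_top] at h2
      omega
    obtain ⟨x, -, hx⟩ := SetLike.exists_of_lt (lt_top_iff_ne_top.2 hne)
    refine ⟨V' ⊔ Submodule.span K {x}, h1.trans le_sup_left, ?_⟩
    have h3 := Submodule.finrank_sup_add_finrank_inf_eq V' (Submodule.span K {x})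
    have hx0 : x ≠ 0 := fun h => hx (h ▸ V'.zero_mem)
    have h4 : V' ⊓ Submodule.span K {x} = ⊥ := by
      rw [Submodule.eq_bot_iff]
      rintro z ⟨hz1, hz2⟩
      rw [SetLike.mem_coe, Submodule.mem_span_singleton] at hz2
      obtain ⟨a, rfl⟩ := hz2
      by_cases ha : a = 0
      · rw [ha, zero_smul]
      · exact absurd ((Submodule.smul_mem_iff _ ha).1 hz1) hx
    rw [h4, finrank_bot, finrank_span_singleton hx0] at h3
    omega

/-- hyperplane case -/
theorem transport_hyp {K K' : Type*} [Field K] [Field K'] {m s : ℕ} {u : Fin m → Fin s → K}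
    {u' : Fin m → Fin s → K'} (hu : Gen u) (hu' : Gen u') (V : Submodule K (Fin s → K))
    (hV : Module.finrank K V + 1 = s) :
    ∃ V' : Submodule K' (Fin s → K'), Module.finrank K' V' = Module.finrank K V ∧
      ∀ A : Finset (Fin m), A.card ≤ s →
        Module.finrank K (UU u A ⊓ V : Submodule K (Fin s → K)) ≤
          Module.finrank K' (UU u' A ⊓ V' : Submodule K' (Fin s → K')) := by
  let I : Finset (Fin m) := Finset.univ.filter fun i => u i ∈ V
  have hI : I.card + 1 ≤ s := by
    by_contra hlt
    obtain ⟨J, hJ, hJc⟩ := Finset.exists_subset_card_eq (show s ≤ I.card by omega)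
    have h1 : UU u J ≤ V := by
      unfold UU
      rw [Submodule.span_le]
      rintro _ ⟨j, hj, rfl⟩
      exact (Finset.mem_filter.1 (hJ hj)).2
    have h2 := Submodule.finrank_mono h1
    rw [finrank_UU hu J hJc.le] at h2
    omega
  obtain ⟨V', hV', hV'2⟩ : ∃ V' : Submodule K' (Fin s → K'), UU u' I ≤ V' ∧
      Module.finrank K' V' = Module.finrank K V := by
    have h0 := finrank_UU hu' I (by omega)
    obtain ⟨V', h1, h2⟩ := exists_above (Module.finrank K V - I.card) (UU u' I)
      (by rw [h0, Module.finrank_fintype_fun_eq_card, Fintype.card_fin]; omega)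
    exact ⟨V', h1, by rw [h2, h0]; omega⟩
  refine ⟨V', hV'2, fun A hA => ?_⟩
  have hfA := finrank_UU hu A hA
  have hfA' := finrank_UU hu' A hA
  have h1 : Module.finrank K (UU u A ⊓ V : Submodule K (Fin s → K)) ≤ A.card :=
    hfA ▸ Submodule.finrank_mono inf_le_left
  by_cases h2 : Module.finrank K (UU u A ⊓ V : Submodule K (Fin s → K)) = A.card
  · have h3 : UU u A ⊓ V = UU u A := Submodule.eq_of_le_of_finrank_eq inf_le_left (by rw [h2, hfA])
    have h4 : UU u A ≤ V := inf_eq_left.1 h3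
    have h5 : A ⊆ I := fun i hi => Finset.mem_filter.2 ⟨Finset.mem_univ _, h4 (UU_mem u hi)⟩
    have h6 : UU u' A ⊓ V' = UU u' A := inf_eq_left.2 ((UU_mono u' h5).trans hV')
    rw [h6, hfA', h2]
  · have h3 := Submodule.finrank_sup_add_finrank_inf_eq (UU u' A) V'
    have h4 := Submodule.finrank_le (UU u' A ⊔ V')
    rw [Module.finrank_fintype_fun_eq_card, Fintype.card_fin] at h4
    omega

theorem transport_line {K K' : Type*} [Field K] [Field K'] {m : ℕ} {u : Fin m → Fin 3 → K}
    {u' : Fin m → Fin 3 → K'} (hu : Gen u) (hu' : Gen u')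
    (hc : ∀ A B C : Finset (Fin m), A.card = 2 → B.card = 2 → C.card = 2 → Disjoint A B →
      Disjoint A C → Disjoint B C → ∀ x, x ∈ UU u A → x ∈ UU u B → x ∈ UU u C → x = 0)
    (x : Fin 3 → K) (hx : x ≠ 0) :
    ∃ y : Fin 3 → K', y ≠ 0 ∧ ∀ A : Finset (Fin m), A.card ≤ 3 → x ∈ UU u A → y ∈ UU u' A := by
  by_cases h1 : ∃ i, x ∈ UU u {i}
  · obtain ⟨i, hi⟩ := h1
    have hui : u i ∈ Submodule.span K {x} := by
      unfold UU at hi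
      rw [Finset.coe_singleton, Set.image_singleton, Submodule.mem_span_singleton] at hi
      obtain ⟨a, ha⟩ := hi
      have ha0 : a ≠ 0 := by
        rintro rfl
        exact hx (by rw [← ha, zero_smul])
      rw [Submodule.mem_span_singleton]
      exact ⟨a⁻¹, by rw [← ha, smul_smul, inv_mul_cancel₀ ha0, one_smul]⟩
    refine ⟨u' i, (hu' {i} (by simp)).ne_zero ⟨i, by simp⟩, fun A hA hxA => ?_⟩
    by_cases hA3 : A.card = 3
    · rw [UU_top hu' A hA3]; trivial
    · exact UU_mem u' (not_mem_UU hu A (by omega) i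
        ((Submodule.span_singleton_le_iff_mem _ _).2 hxA hui))
  · have hpair : ∀ A : Finset (Fin m), A.card ≤ 3 → x ∈ UU u A → A.card = 2 ∨ A.card = 3 := by
      intro A hA hxA
      by_contra hcon
      have : A.card = 0 ∨ A.card = 1 := by omega
      rcases this with h0 | h0
      · rw [Finset.card_eq_zero] at h0
        subst h0
        apply hx
        simpa [UU] using hxA
      · obtain ⟨i, rfl⟩ := Finset.card_eq_one.1 h0
        exact h1 ⟨i, hxA⟩
    have hdisj : ∀ A B : Finset (Fin m), A.card = 2 → B.card = 2 → x ∈ UU u A → x ∈ UU u B → A ≠ B →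
        Disjoint A B := by
      intro A B hA hB hxA hxB hne
      by_contra hnd
      rw [Finset.not_disjoint_iff] at hnd
      obtain ⟨i, hiA, hiB⟩ := hnd
      have hint : (A ∩ B).card = 1 := by
        have h2 : 0 < (A ∩ B).card := Finset.card_pos.2 ⟨i, Finset.mem_inter.2 ⟨hiA, hiB⟩⟩
        have h3 : (A ∩ B).card ≠ 2 := by
          intro h4
          have h5 : A ∩ B = A := Finset.eq_of_subset_of_card_le Finset.inter_subset_left (by omega)
          have h6 : A ∩ B = B := Finset.eq_of_subset_of_card_le Finset.inter_subset_right (by omega)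
          exact hne (h5.symm.trans h6)
        have h4 := Finset.card_le_card (Finset.inter_subset_left (s₁ := A) (s₂ := B))
        omega
      have hun : (A ∪ B).card = 3 := by
        have := Finset.card_union_add_card_inter A B
        omega
      have hs := Submodule.finrank_sup_add_finrank_inf_eq (UU u A) (UU u B)
      have hsup : UU u A ⊔ UU u B = UU u (A ∪ B) := by
        unfold UU
        rw [← Submodule.span_union, ← Set.image_union, Finset.coe_union]
      rw [hsup, finrank_UU hu _ hun.le, finrank_UU hu A (by omega), finrank_UU hu B (by omega)] at hs
      have hle : UU u {i} ≤ UU u A ⊓ UU u B :=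
        le_inf (UU_mono u (by simpa using hiA)) (UU_mono u (by simpa using hiB))
      have heq : UU u {i} = UU u A ⊓ UU u B := by
        apply Submodule.eq_of_le_of_finrank_eq hle
        rw [finrank_UU hu {i} (by simp), Finset.card_singleton]
        omega
      exact h1 ⟨i, heq ▸ ⟨hxA, hxB⟩⟩
    have hAB : ∀ A B : Finset (Fin m), A.card = 2 → B.card = 2 →
        ∃ y, y ≠ 0 ∧ y ∈ UU u' A ∧ y ∈ UU u' B := by
      intro A B hA hB
      have hs := Submodule.finrank_sup_add_finrank_inf_eq (UU u' A) (UU u' B)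
      have h4 := Submodule.finrank_le (UU u' A ⊔ UU u' B)
      rw [Module.finrank_fintype_fun_eq_card, Fintype.card_fin] at h4
      rw [finrank_UU hu' A (by omega), finrank_UU hu' B (by omega)] at hs
      have h5 : UU u' A ⊓ UU u' B ≠ ⊥ := by
        intro h6
        rw [h6, finrank_bot] at hs
        omega
      obtain ⟨y, hy, hy0⟩ := Submodule.exists_mem_ne_zero_of_ne_bot h5
      exact ⟨y, hy0, hy.1, hy.2⟩
    by_cases hex : ∃ A : Finset (Fin m), A.card = 2 ∧ x ∈ UU u A
    · obtain ⟨A, hA, hxA⟩ := hex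
      obtain ⟨B, hB, hxB, hall⟩ : ∃ B : Finset (Fin m), B.card = 2 ∧ x ∈ UU u B ∧
          ∀ C : Finset (Fin m), C.card = 2 → x ∈ UU u C → C = A ∨ C = B := by
        by_cases hex2 : ∃ B : Finset (Fin m), B.card = 2 ∧ x ∈ UU u B ∧ B ≠ A
        · obtain ⟨B, hB, hxB, hne⟩ := hex2
          refine ⟨B, hB, hxB, fun C hC hxC => ?_⟩
          by_contra hcon
          rw [not_or] at hcon
          exact hx (hc A B C hA hB hC (hdisj A B hA hB hxA hxB hne.symm)
            (hdisj A C hA hC hxA hxC (Ne.symm hcon.1)) (hdisj B C hB hC hxB hxC (Ne.symm hcon.2))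
            x hxA hxB hxC)
        · refine ⟨A, hA, hxA, fun C hC hxC => ?_⟩
          by_contra hcon
          exact hex2 ⟨C, hC, hxC, fun h => hcon (Or.inl h)⟩
      obtain ⟨y, hy, hyA, hyB⟩ := hAB A B hA hB
      refine ⟨y, hy, fun C hC hxC => ?_⟩
      rcases hpair C hC hxC with h | h
      · rcases hall C h hxC with rfl | rfl
        · exact hyA
        · exact hyB
      · rw [UU_top hu' C h]; trivial
    · refine ⟨Pi.single 0 1, by simp, fun C hC hxC => ?_⟩
      rcases hpair C hC hxC with h | h
      · exact absurd ⟨C, h, hxC⟩ hex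
      · rw [UU_top hu' C h]; trivial

theorem transport {K K' : Type*} [Field K] [Field K'] {m s : ℕ} (hs : s ≤ 3) {u : Fin m → Fin s → K}
    {u' : Fin m → Fin s → K'} (hu : Gen u) (hu' : Gen u')
    (hc : s = 3 → ∀ A B C : Finset (Fin m), A.card = 2 → B.card = 2 → C.card = 2 → Disjoint A B →
      Disjoint A C → Disjoint B C → ∀ x, x ∈ UU u A → x ∈ UU u B → x ∈ UU u C → x = 0)
    (V : Submodule K (Fin s → K)) :
    ∃ V' : Submodule K' (Fin s → K'), Module.finrank K' V' = Module.finrank K V ∧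
      ∀ A : Finset (Fin m), A.card ≤ s →
        Module.finrank K (UU u A ⊓ V : Submodule K (Fin s → K)) ≤
          Module.finrank K' (UU u' A ⊓ V' : Submodule K' (Fin s → K')) := by
  have hle := Submodule.finrank_le V
  rw [Module.finrank_fintype_fun_eq_card, Fintype.card_fin] at hle
  have hcases : Module.finrank K V = 0 ∨ Module.finrank K V = s ∨ Module.finrank K V + 1 = s ∨
      (s = 3 ∧ Module.finrank K V = 1) := by omega
  rcases hcases with h | h | h | ⟨h3, h⟩
  · refine ⟨⊥, by rw [h, finrank_bot], fun A _ => ?_⟩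
    rw [Submodule.finrank_eq_zero] at h
    rw [h, inf_bot_eq, finrank_bot]
    exact Nat.zero_le _
  · refine ⟨⊤, by rw [h]; simp, fun A hA => ?_⟩
    rw [inf_top_eq, finrank_UU hu' A hA, ← finrank_UU hu A hA]
    exact Submodule.finrank_mono inf_le_left
  · exact transport_hyp hu hu' V h
  · subst h3
    have hne : V ≠ ⊥ := by
      rintro rfl
      rw [finrank_bot] at h
      omega
    obtain ⟨x, hxV, hx⟩ := Submodule.exists_mem_ne_zero_of_ne_bot hne
    have hVx : V = Submodule.span K {x} := by
      symm
      apply Submodule.eq_of_le_of_finrank_eq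
      · rwa [Submodule.span_singleton_le_iff_mem]
      · rw [finrank_span_singleton hx, h]
    obtain ⟨y, hy, hA⟩ := transport_line hu hu' (hc rfl) x hx
    refine ⟨Submodule.span K' {y}, by rw [finrank_span_singleton hy, h], fun A hAc => ?_⟩
    by_cases hxA : x ∈ UU u A
    · have h1 : UU u' A ⊓ Submodule.span K' {y} = Submodule.span K' {y} :=
        inf_eq_right.2 ((Submodule.span_singleton_le_iff_mem _ _).2 (hA A hAc hxA))
      rw [h1, finrank_span_singleton hy, ← h]
      exact Submodule.finrank_mono inf_le_right
    · have h1 : UU u A ⊓ V = ⊥ := by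
        rw [Submodule.eq_bot_iff]
        rintro z ⟨hz1, hz2⟩
        rw [hVx, SetLike.mem_coe, Submodule.mem_span_singleton] at hz2
        obtain ⟨a, rfl⟩ := hz2
        by_cases ha : a = 0
        · rw [ha, zero_smul]
        · exact absurd ((Submodule.smul_mem_iff _ ha).1 hz1) hxA
      rw [h1, finrank_bot]
      exact Nat.zero_le _

theorem conc (F : Type*) [Field F] (m n r : ℕ) (A B C : Finset (Fin m)) (hA : A.card = 2)
    (hB : B.card = 2) (hC : C.card = 2) (hAB : Disjoint A B) (hAC : Disjoint A C)
    (hBC : Disjoint B C) (x : Fin 3 → TField F m n 3 r) (hxA : x ∈ UU (genU F m n 3 r) A)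
    (hxB : x ∈ UU (genU F m n 3 r) B) (hxC : x ∈ UU (genU F m n 3 r) C) : x = 0 := by
  obtain ⟨a0, a1, ha, rfl⟩ := Finset.card_eq_two.1 hA
  obtain ⟨b0, b1, hb, rfl⟩ := Finset.card_eq_two.1 hB
  obtain ⟨c0, c1, hc, rfl⟩ := Finset.card_eq_two.1 hC
  simp only [UU, Finset.coe_insert, Finset.coe_singleton, Set.image_insert_eq, Set.image_singleton,
    Submodule.mem_span_pair] at hxA hxB hxC
  obtain ⟨α0, α1, hα⟩ := hxA
  obtain ⟨β0, β1, hβ⟩ := hxB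
  obtain ⟨γ0, γ1, hγ⟩ := hxC
  simp only [Finset.disjoint_insert_left, Finset.disjoint_singleton_left, Finset.mem_insert,
    Finset.mem_singleton, not_or] at hAB hAC hBC
  let q : Fin 3 × Fin 2 → Fin m := fun t => (![![a0, a1], ![b0, b1], ![c0, c1]] : Fin 3 → Fin 2 → Fin m) t.1 t.2
  have hq : Function.Injective q := by
    rintro ⟨t, e⟩ ⟨t', e'⟩ h
    obtain ⟨⟨h1, h2⟩, h3, h4⟩ := hAB
    obtain ⟨⟨h5, h6⟩, h7, h8⟩ := hAC
    obtain ⟨⟨h9, h10⟩, h11, h12⟩ := hBC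
    fin_cases t <;> fin_cases e <;> fin_cases t' <;> fin_cases e' <;> simp_all [q]
  let sp : Fin 3 × Fin 2 → Fin 3 → F := fun t k => if k = t.1 + Fin.castSucc t.2 then 1 else 0
  let σ : Fin 3 → Fin 2 → ℤ := ![![1, 0], ![-1, 1], ![0, -1]]
  let φ : MvPolynomial ((Fin m × Fin 3) ⊕ (Fin n × Fin r)) F →+* F :=
    (MvPolynomial.aeval (R := F) (Sum.elim
      (fun x => Function.extend q sp 0 x.1 x.2) (fun x => 0))).toRingHom
  have key := spec_li (algebraMap (MvPolynomial ((Fin m × Fin 3) ⊕ (Fin n × Fin r)) F)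
    (TField F m n 3 r)) (IsFractionRing.injective _ _) φ
    (fun (t : Fin 3 × Fin 2) (ck : Fin 2 × Fin 3) => ((σ t.1 ck.1 : ℤ) :
      MvPolynomial ((Fin m × Fin 3) ⊕ (Fin n × Fin r)) F) * MvPolynomial.X (Sum.inl (q t, ck.2))) (by
    have h1 : (fun (t : Fin 3 × Fin 2) (ck : Fin 2 × Fin 3) => φ (((σ t.1 ck.1 : ℤ) :
      MvPolynomial ((Fin m × Fin 3) ⊕ (Fin n × Fin r)) F) * MvPolynomial.X (Sum.inl (q t, ck.2)))) =
      fun (t : Fin 3 × Fin 2) (ck : Fin 2 × Fin 3) => ((σ t.1 ck.1 : ℤ) : F) * sp t ck.2 := by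
      funext t ck
      rw [map_mul, map_intCast]
      congr 1
      have : φ (MvPolynomial.X (Sum.inl (q t, ck.2))) = Function.extend q sp 0 (q t) ck.2 := by
        simp [φ]
      rw [this, hq.extend_apply]
    rw [h1, Fintype.linearIndependent_iff]
    intro g hg
    have e := fun c k => congrFun hg (c, k)
    have e00 := e 0 0
    have e01 := e 0 1
    have e02 := e 0 2
    have e10 := e 1 0
    have e11 := e 1 1
    have e12 := e 1 2
    simp [Fintype.sum_prod_type, Fin.sum_univ_succ, σ, sp, Fin.ext_iff, Fin.val_add] at e00 e01 e02 e10 e11 e12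
    rintro ⟨t, ε⟩
    fin_cases t <;> fin_cases ε <;> simp_all)
  rw [Fintype.linearIndependent_iff] at key
  have h2 := key (fun t => (![![α0, α1], ![β0, β1], ![γ0, γ1]] : Fin 3 → Fin 2 → TField F m n 3 r) t.1 t.2) (by
    funext ⟨c, k⟩
    have hα := congrFun hα k
    have hβ := congrFun hβ k
    have hγ := congrFun hγ k
    simp only [Pi.add_apply, Pi.smul_apply, smul_eq_mul, genU] at hα hβ hγ
    simp only [Fintype.sum_prod_type, Finset.sum_apply, Pi.smul_apply, smul_eq_mul, map_mul, map_intCast, Fin.sum_univ_three, Fin.sum_univ_two]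
    fin_cases c <;> simp [σ, q]
    · linear_combination hα - hβ
    · linear_combination hβ - hγ)
  have h3 := h2 (0, 0)
  have h4 := h2 (0, 1)
  simp at h3 h4
  rw [← hα, h3, h4]
  simp

def col {m n : ℕ} (E : Set (Fin m × Fin n)) (j : Fin n) : Finset (Fin m) :=
  Finset.univ.filter fun i => (i, j) ∈ E

theorem mem_col {m n : ℕ} (E : Set (Fin m × Fin n)) (i : Fin m) (j : Fin n) :
    i ∈ col E j ↔ (i, j) ∈ E := by simp [col]

theorem mem_UU_exists {K : Type*} [Field K] {m s : ℕ} (u : Fin m → Fin s → K) (A : Finset (Fin m))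
    (x : Fin s → K) (hx : x ∈ UU u A) :
    ∃ c : Fin m → K, (∀ i, i ∉ A → c i = 0) ∧ x = ∑ i, c i • u i := by
  unfold UU at hx
  induction hx using Submodule.span_induction with
  | mem x hx =>
    obtain ⟨i, hi, rfl⟩ := hx
    refine ⟨Pi.single i 1, fun k hk => ?_, ?_⟩
    · rw [Pi.single_eq_of_ne]
      rintro rfl
      exact hk hi
    · rw [Finset.sum_eq_single i]
      · simp
      · intro b _ hb
        simp [Pi.single_eq_of_ne hb]
      · simp
  | zero => exact ⟨0, by simp, by simp⟩
  | add x y _ _ h1 h2 =>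
    obtain ⟨c, hc, rfl⟩ := h1
    obtain ⟨d, hd, rfl⟩ := h2
    exact ⟨c + d, fun i hi => by simp [hc i hi, hd i hi], by simp [add_smul, Finset.sum_add_distrib]⟩
  | smul a x _ h1 =>
    obtain ⟨c, hc, rfl⟩ := h1
    exact ⟨a • c, fun i hi => by simp [hc i hi], by simp [Finset.smul_sum, smul_smul]⟩

theorem sum_mem_UU {K : Type*} [Field K] {m s : ℕ} (u : Fin m → Fin s → K) (A : Finset (Fin m))
    (c : Fin m → K) (hc : ∀ i, i ∉ A → c i = 0) : ∑ i, c i • u i ∈ UU u A := by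
  refine Submodule.sum_mem _ fun i _ => ?_
  by_cases hi : i ∈ A
  · exact Submodule.smul_mem _ _ (UU_mem u hi)
  · rw [hc i hi, zero_smul]
    exact Submodule.zero_mem _

theorem li_iff {K : Type*} [Field K] {m n s r : ℕ} (u : Fin m → Fin s → K) (v : Fin n → Fin r → K)
    (E : Set (Fin m × Fin n)) : LinearIndependent K (fun e : E => tv u v e) ↔
      ∀ c : Fin m → Fin n → K, (∀ i j, (i, j) ∉ E → c i j = 0) →
        (∀ l, ∑ j, v j l • ∑ i, c i j • u i = 0) → ∀ i j, c i j = 0 := by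
  have hsum : ∀ (c : Fin m → Fin n → K), (∀ i j, (i, j) ∉ E → c i j = 0) → ∀ k l,
      (∑ e : E, c e.1.1 e.1.2 • tv u v e.1) (k, l) = (∑ j, v j l • ∑ i, c i j • u i) k := by
    intro c hc k l
    have h1 : ∑ e : E, c e.1.1 e.1.2 • tv u v e.1 = ∑ e : Fin m × Fin n, c e.1 e.2 • tv u v e := by
      rw [← Finset.sum_subset (Finset.subset_univ E.toFinset)]
      · rw [← Finset.sum_coe_sort E.toFinset]
        refine Fintype.sum_equiv (Equiv.subtypeEquivRight (by simp)) _ _ (fun e => rfl)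
      · intro e _ he
        rw [hc e.1 e.2 (by simpa using he), zero_smul]
    rw [h1, Fintype.sum_prod_type_right]
    simp only [Finset.sum_apply, Pi.smul_apply, smul_eq_mul, tv, Finset.mul_sum]
    refine Finset.sum_congr rfl fun j _ => Finset.sum_congr rfl fun i _ => by ring
  rw [Fintype.linearIndependent_iff]
  constructor
  · intro h c hc h2 i j
    by_cases hij : (i, j) ∈ E
    · refine h (fun e => c e.1.1 e.1.2) ?_ ⟨(i, j), hij⟩
      funext ⟨k, l⟩
      rw [hsum c hc, h2]
      rfl
    · exact hc i j hij
  · intro h g hg e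
    have h1 := h (fun i j => if h : (i, j) ∈ E then g ⟨(i, j), h⟩ else 0)
      (fun i j hij => dif_neg hij) (fun l => by
        funext k
        rw [← hsum _ (fun i j hij => dif_neg hij)]
        have h3 : ∑ e : E, (if h : (e.1.1, e.1.2) ∈ E then g ⟨(e.1.1, e.1.2), h⟩ else 0) • tv u v e.1
          = ∑ e : E, g e • tv u v e.1 := by
          refine Finset.sum_congr rfl fun e _ => ?_
          rw [dif_pos e.2]
        rw [h3, hg]
        rfl) e.1.1 e.1.2
    rwa [dif_pos e.2] at h1

theorem col_card {K : Type*} [Field K] {m n s r : ℕ} (u : Fin m → Fin s → K) (v : Fin n → Fin r → K)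
    (E : Set (Fin m × Fin n)) (h : LinearIndependent K (fun e : E => tv u v e)) (j : Fin n) :
    (col E j).card ≤ s := by
  have h1 : LinearIndependent K (fun i : col E j => u i) := by
    have h2 : LinearIndependent K (fun i : col E j => tv u v (i.1, j)) :=
      h.comp (fun i : col E j => (⟨(i.1, j), (mem_col E _ _).1 i.2⟩ : E))
        (fun a b hab => Subtype.ext (congrArg (fun z : E => z.1.1) hab))
    let f : (Fin s → K) →ₗ[K] (Fin s × Fin r → K) :=
      { toFun := fun x kl => x kl.1 * v j kl.2
        map_add' := fun x y => by funext kl; simp [add_mul]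
        map_smul' := fun a x => by funext kl; simp [mul_assoc] }
    exact LinearIndependent.of_comp f h2
  have h3 := h1.fintype_card_le_finrank
  simpa using h3

def Psi {K X : Type*} [Field K] [AddCommGroup X] [Module K X] {n r : ℕ} (v : Fin n → Fin r → K)
    (U : Fin n → Submodule K X) : (∀ j, U j) →ₗ[K] (Fin r → X) :=
  LinearMap.pi fun l => ∑ j, v j l • ((U j).subtype ∘ₗ LinearMap.proj j)

theorem Psi_apply {K X : Type*} [Field K] [AddCommGroup X] [Module K X] {n r : ℕ} (v : Fin n → Fin r → K)
    (U : Fin n → Submodule K X) (z : ∀ j, U j) (l : Fin r) : Psi v U z l = ∑ j, v j l • (z j : X) := by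
  simp [Psi]

theorem T1 {K : Type*} [Field K] {m n s r : ℕ} (u : Fin m → Fin s → K) (v : Fin n → Fin r → K)
    (E : Set (Fin m × Fin n)) (h : LinearIndependent K (fun e : E => tv u v e))
    (V : Submodule K (Fin s → K)) :
    ∑ j, Module.finrank K (UU u (col E j) ⊓ V : Submodule K (Fin s → K)) ≤ r * Module.finrank K V := by
  rw [li_iff] at h
  let Φ : (∀ j, (UU u (col E j) ⊓ V : Submodule K (Fin s → K))) →ₗ[K] (Fin r → V) :=
    LinearMap.pi fun l => ∑ j, v j l • (Submodule.inclusion inf_le_right ∘ₗ LinearMap.proj j)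
  have hΦ : ∀ z l, (Φ z l : Fin s → K) = ∑ j, v j l • (z j : Fin s → K) := by
    intro z l
    simp [Φ]
  have hinj : Function.Injective Φ := by
    rw [← LinearMap.ker_eq_bot, LinearMap.ker_eq_bot']
    intro z hz
    choose c hc1 hc2 using fun j => mem_UU_exists u (col E j) (z j) (z j).2.1
    have := h (fun i j => c j i) (fun i j hij => hc1 j i (by rwa [mem_col])) (fun l => by
      have h1 := hΦ z l
      rw [hz] at h1
      simp_rw [← hc2]
      exact h1.symm)
    funext j
    apply Subtype.ext
    rw [hc2]
    simp [this]
  have := LinearMap.finrank_le_finrank_of_injective hinj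
  rw [Module.finrank_pi_fintype, Module.finrank_pi_fintype] at this
  simpa using this

theorem deriv_lemma {F K : Type*} [Field F] [Field K] [Algebra F K] {m n s r : ℕ}
    (u : Fin m → Fin s → K) (v : Fin n → Fin r → K)
    (hgen : ∀ b : Set (Fin m × Fin n), TensorIndep F m n s r b → LinearIndependent K (fun e : b => tv u v e))
    (E : Set (Fin m × Fin n))
    (c : Fin m → Fin n → K) (hc : ∀ i j, (i, j) ∉ E → c i j = 0)
    (hrel : ∀ k l, ∑ j, ∑ i, c i j * u i k * v j l = 0)
    (j0 : Fin n) (w : Fin r → K) :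
    (fun kl : Fin s × Fin r => (∑ i, c i j0 * u i kl.1) * w kl.2) ∈
      Submodule.span K (tv u v '' E) := by
  by_contra hcon
  let y : Fin s × Fin r → K := fun kl => (∑ i, c i j0 * u i kl.1) * w kl.2
  obtain ⟨b, hbE, -, hbs, hbli⟩ := exists_linearIndepOn_extension (K := K) (v := tv u v)
    (s := ∅) (t := E) (by simp) (by simp)
  have hbli' : LinearIndependent K (fun e : b => tv u v e) := hbli
  have hspan : Submodule.span K (tv u v '' E) = Submodule.span K (tv u v '' b) :=
    le_antisymm (Submodule.span_le.2 hbs) (Submodule.span_mono (Set.image_mono hbE))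
  have hopt : LinearIndependent K (fun o : Option b => o.elim y (fun e => tv u v e)) := by
    rw [linearIndependent_option]
    refine ⟨hbli', ?_⟩
    have : Set.range ((fun o : Option b => o.elim y (fun e => tv u v e)) ∘ some) = tv u v '' b := by
      rw [Set.image_eq_range]; rfl
    show y ∉ _
    erw [this, ← hspan]
    exact hcon
  let L := FractionRing (Polynomial K)
  let ψ : Polynomial K →+* L := algebraMap (Polynomial K) L
  have hψ : Function.Injective ψ := IsFractionRing.injective _ _
  let u2 : Fin m → Fin s → L := fun i k => ψ (Polynomial.C (u i k))
  let pv : Fin n → Fin r → Polynomial K := fun j l =>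
    Polynomial.C (v j l) + (if j = j0 then Polynomial.X * Polynomial.C (w l) else 0)
  let v2 : Fin n → Fin r → L := fun j l => ψ (pv j l)
  have hL := spec_li ψ hψ (Polynomial.evalRingHom (0 : K))
    (fun (o : Option b) (kl : Fin s × Fin r) => o.elim (Polynomial.C (y kl))
      (fun e => Polynomial.C (u e.1.1 kl.1) * pv e.1.2 kl.2)) (by
    convert hopt using 1
    funext o kl
    rcases o with _ | e
    · simp
    · simp only [Option.elim, tv, pv, Polynomial.coe_evalRingHom]
      split_ifs <;> simp)
  have hX : ψ Polynomial.X ≠ 0 := fun h => Polynomial.X_ne_zero (hψ (h.trans (map_zero ψ).symm))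
  have hmem : ∀ o : Option b, (fun kl : Fin s × Fin r => ψ (o.elim (Polynomial.C (y kl))
      (fun e => Polynomial.C (u e.1.1 kl.1) * pv e.1.2 kl.2))) ∈ Submodule.span L (tv u2 v2 '' E) := by
    rintro (_ | e)
    · have h1 : (ψ Polynomial.X) • (fun kl : Fin s × Fin r => ψ (Polynomial.C (y kl))) =
          ∑ j, ∑ i, ψ (Polynomial.C (c i j)) • tv u2 v2 (i, j) := by
        funext kl
        simp only [Pi.smul_apply, smul_eq_mul, Finset.sum_apply, tv, u2, v2, ← map_mul, ← map_sum]
        congr 1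
        have h2 := congrArg (Polynomial.C (R := K)) (hrel kl.1 kl.2)
        have h3 : ∑ j, ∑ i, Polynomial.C (c i j) * (Polynomial.C (u i kl.1) * pv j kl.2) =
            Polynomial.C (∑ j, ∑ i, c i j * u i kl.1 * v j kl.2) +
            ∑ j, if j = j0 then (∑ i, Polynomial.C (c i j) * Polynomial.C (u i kl.1)) *
              (Polynomial.X * Polynomial.C (w kl.2)) else 0 := by
          simp only [map_sum, map_mul]
          rw [← Finset.sum_add_distrib]
          refine Finset.sum_congr rfl fun j _ => ?_
          simp only [pv]
          split_ifs
          · rw [Finset.sum_mul, ← Finset.sum_add_distrib]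
            refine Finset.sum_congr rfl fun i _ => by ring
          · rw [add_zero, add_zero]
            refine Finset.sum_congr rfl fun i _ => by ring
        rw [h3, h2, map_zero, zero_add, Finset.sum_ite_eq' Finset.univ j0, if_pos (Finset.mem_univ _)]
        simp only [y, map_mul, map_sum]
        change _ * ((∑ i, Polynomial.C (c i j0) * Polynomial.C (u i kl.1)) * _) = _
        ring
      have h4 : ∑ j, ∑ i, ψ (Polynomial.C (c i j)) • tv u2 v2 (i, j) ∈
          Submodule.span L (tv u2 v2 '' E) := by
        refine Submodule.sum_mem _ fun j _ => Submodule.sum_mem _ fun i _ => ?_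
        by_cases hij : (i, j) ∈ E
        · exact Submodule.smul_mem _ _ (Submodule.subset_span ⟨_, hij, rfl⟩)
        · rw [hc i j hij, map_zero, map_zero, zero_smul]
          exact Submodule.zero_mem _
      rw [← h1] at h4
      exact (Submodule.smul_mem_iff _ hX).1 h4
    · refine Submodule.subset_span ⟨e.1, hbE e.2, ?_⟩
      funext kl
      simp [tv, u2, v2]
  obtain ⟨b', hbE', -, hbs', hbli'2⟩ := exists_linearIndepOn_extension (K := L) (v := tv u2 v2)
    (s := ∅) (t := E) (by simp) (by simp)
  have hbl : LinearIndependent L (fun e : b' => tv u2 v2 e) := hbli'2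
  let _ : Algebra F L := ((ψ.comp Polynomial.C).comp (algebraMap F K)).toAlgebra
  have hind : LinearIndependent K (fun e : b' => tv u v e) := hgen b' (indep_of_special (F := F) u2 v2 b' hbl)
  have c1 : Fintype.card (Option b) ≤ Fintype.card b' := by
    rw [← finrank_span_eq_card hbl, ← finrank_span_eq_card hL]
    apply Submodule.finrank_mono
    rw [Submodule.span_le]
    rintro _ ⟨o, rfl⟩
    have h5 := Submodule.span_le.2 hbs' (hmem o)
    rw [Set.image_eq_range] at h5
    exact h5
  have c2 : Fintype.card b' ≤ Fintype.card b := by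
    rw [← finrank_span_eq_card hind, ← finrank_span_eq_card hbli']
    apply Submodule.finrank_mono
    rw [Submodule.span_le]
    rintro _ ⟨e, rfl⟩
    have h5 := hbs ⟨e.1, hbE' e.2, rfl⟩
    rw [Set.image_eq_range] at h5
    exact h5
  rw [Fintype.card_option] at c1
  omega

theorem gen_zero {K M : Type*} [Field K] [AddCommGroup M] [Module K M] {n r : ℕ}
    {v : Fin n → Fin r → K} (hv : Gen v) (J : Finset (Fin n)) (hJ : J.card ≤ r) (z : Fin n → M)
    (hz : ∀ j, j ∉ J → z j = 0) (h : ∀ l, ∑ j, v j l • z j = 0) : ∀ j, z j = 0 := by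
  intro j
  by_cases hj : j ∈ J
  · rw [← Module.forall_dual_apply_eq_zero_iff K]
    intro f
    have h1 := Fintype.linearIndependent_iff.1 (hv J hJ) (fun i => f (z i)) (by
      funext l
      have h2 := congrArg f (h l)
      rw [map_sum, map_zero] at h2
      rw [Finset.sum_apply, Finset.sum_coe_sort J (fun i => (f (z i) • v i) l), Pi.zero_apply, ← h2]
      rw [← Finset.sum_subset (Finset.subset_univ J)]
      · refine Finset.sum_congr rfl fun i _ => ?_
        simp [mul_comm]
      · intro i _ hi
        rw [hz i hi, smul_zero, map_zero]) ⟨j, hj⟩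
    exact h1
  · exact hz j hj

/-- surjectivity plus a nonzero kernel element gives a violation -/
theorem viol {K : Type*} [Field K] {n s r : ℕ} (v : Fin n → Fin r → K)
    (U : Fin n → Submodule K (Fin s → K)) (V : Submodule K (Fin s → K)) (x : Fin n → Fin s → K)
    (hxU : ∀ j, x j ∈ U j) (hxV : ∀ j, x j ∈ V) (hx : ∃ j, x j ≠ 0) (hrel : ∀ l, ∑ j, v j l • x j = 0)
    (hsurj : ∀ y ∈ V, ∀ w : Fin r → K, (fun l => w l • y) ∈ LinearMap.range (Psi v fun j => U j ⊓ V)) :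
    r * Module.finrank K V < ∑ j, Module.finrank K (U j ⊓ V : Submodule K (Fin s → K)) := by
  let P := Psi v fun j => U j ⊓ V
  have h1 : ∀ f : Fin r → V, (fun l => (f l : Fin s → K)) ∈ LinearMap.range P := by
    intro f
    have h2 : (fun l => (f l : Fin s → K)) = ∑ l0, fun l => (Pi.single l0 1 : Fin r → K) l • (f l0 : Fin s → K) := by
      funext l
      rw [Finset.sum_apply, Finset.sum_eq_single l]
      · simp
      · intro b _ hb
        rw [Pi.single_eq_of_ne hb.symm, zero_smul]
      · simp
    rw [h2]
    exact Submodule.sum_mem _ fun l0 _ => hsurj _ (f l0).2 _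
  let g : (Fin r → V) →ₗ[K] LinearMap.range P :=
    LinearMap.codRestrict _ (LinearMap.pi fun l => V.subtype ∘ₗ LinearMap.proj l) h1
  have hg : Function.Injective g := by
    intro a b hab
    funext l
    apply Subtype.ext
    exact congrFun (congrArg Subtype.val hab) l
  have h3 := LinearMap.finrank_le_finrank_of_injective hg
  have h4 := LinearMap.finrank_range_add_finrank_ker P
  rw [Module.finrank_pi_fintype] at h3 h4
  simp only [Finset.sum_const, Finset.card_univ, Fintype.card_fin, smul_eq_mul] at h3
  have h5 : 0 < Module.finrank K (LinearMap.ker P) := by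
    rw [Module.finrank_pos_iff_exists_ne_zero]
    refine ⟨⟨fun j => ⟨x j, hxU j, hxV j⟩, ?_⟩, ?_⟩
    · rw [LinearMap.mem_ker]
      funext l
      rw [Psi_apply]
      exact hrel l
    · intro h
      obtain ⟨j, hj⟩ := hx
      exact hj (congrArg Subtype.val (congrFun (congrArg Subtype.val h) j))
  omega

theorem T2_aux {K : Type*} [Field K] {n s r : ℕ} (hs : s ≤ 3) {v : Fin n → Fin r → K} (hv : Gen v)
    (U : Fin n → Submodule K (Fin s → K)) (x : Fin n → Fin s → K)
    (hxU : ∀ j, x j ∈ U j) (hx : ∃ j, x j ≠ 0) (hrel : ∀ l, ∑ j, v j l • x j = 0)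
    (H : ∀ y ∈ Submodule.span K (Set.range x), ∀ w : Fin r → K,
      (fun l => w l • y) ∈ LinearMap.range (Psi v U)) :
    ∃ V : Submodule K (Fin s → K),
      r * Module.finrank K V < ∑ j, Module.finrank K (U j ⊓ V : Submodule K (Fin s → K)) := by
  let V1 := Submodule.span K (Set.range x)
  have hxV : ∀ j, x j ∈ V1 := fun j => Submodule.subset_span ⟨j, rfl⟩
  have htop : (∀ y, ∀ w : Fin r → K, (fun l => w l • y) ∈ LinearMap.range (Psi v U)) →
      r * Module.finrank K (⊤ : Submodule K (Fin s → K)) <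
        ∑ j, Module.finrank K (U j ⊓ ⊤ : Submodule K (Fin s → K)) := by
    intro h
    apply viol v U ⊤ x hxU (fun _ => trivial) hx hrel
    intro y _ w
    obtain ⟨z, hz⟩ := h y w
    refine ⟨fun j => ⟨z j, (z j).2, trivial⟩, ?_⟩
    rw [← hz]
    funext l
    rw [Psi_apply, Psi_apply]
  have hle := Submodule.finrank_le V1
  rw [Module.finrank_fintype_fun_eq_card, Fintype.card_fin] at hle
  have hpos : Module.finrank K V1 ≠ 0 := by
    intro h
    rw [Submodule.finrank_eq_zero] at h
    obtain ⟨j, hj⟩ := hx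
    have := hxV j
    rw [h, Submodule.mem_bot] at this
    exact hj this
  have hcases : Module.finrank K V1 = 1 ∨ Module.finrank K V1 = s ∨ Module.finrank K V1 + 1 = s := by omega
  rcases hcases with h | h | h
  · refine ⟨V1, ?_⟩
    let J : Finset (Fin n) := Finset.univ.filter fun j => x j ≠ 0
    have hJ : r < J.card := by
      by_contra hcon
      obtain ⟨j, hj⟩ := hx
      exact hj (gen_zero hv J (by omega) x (fun j hj => by simpa [J] using hj) hrel j)
    rw [h, mul_one]
    refine hJ.trans_le ?_
    rw [Finset.card_eq_sum_ones]
    calc ∑ j ∈ J, 1 ≤ ∑ j ∈ J, Module.finrank K (U j ⊓ V1 : Submodule K (Fin s → K)) := by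
          refine Finset.sum_le_sum fun j hj => ?_
          rw [Nat.succ_le_iff, Module.finrank_pos_iff_exists_ne_zero]
          refine ⟨⟨x j, hxU j, hxV j⟩, fun h0 => (Finset.mem_filter.1 hj).2 (congrArg Subtype.val h0)⟩
      _ ≤ _ := Finset.sum_le_sum_of_subset (Finset.subset_univ _)
  · refine ⟨⊤, htop ?_⟩
    have hV : V1 = ⊤ := Submodule.eq_top_of_finrank_eq (by rw [h]; simp)
    intro y w
    exact H y (by change y ∈ V1; rw [hV]; trivial) w
  · let J : Finset (Fin n) := Finset.univ.filter fun j => ¬ U j ≤ V1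
    by_cases hJ : J.card ≤ r
    · refine ⟨V1, viol v U V1 x hxU hxV hx hrel ?_⟩
      intro y hy w
      obtain ⟨z, hz⟩ := H y hy w
      have h1 := gen_zero hv J hJ (fun j => V1.mkQ (z j)) (fun j hj => by
        rw [Submodule.mkQ_apply, Submodule.Quotient.mk_eq_zero]
        have h2 : U j ≤ V1 := by simpa [J] using hj
        exact h2 (z j).2) (fun l => by
        have h2 := congrFun hz l
        rw [Psi_apply] at h2
        have h3 := congrArg V1.mkQ h2
        rw [map_sum] at h3
        simp only [map_smul] at h3
        rw [h3, (Submodule.Quotient.mk_eq_zero V1 (x := y)).2 hy |> fun h => (h : V1.mkQ y = 0), smul_zero])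
      refine ⟨fun j => ⟨z j, (z j).2, ?_⟩, ?_⟩
      · exact (Submodule.Quotient.mk_eq_zero V1).1 (h1 j)
      · rw [← hz]
        funext l
        rw [Psi_apply, Psi_apply]
    · refine ⟨⊤, htop ?_⟩
      obtain ⟨J0, hJ0, hJ0c⟩ := Finset.exists_subset_card_eq (show r ≤ J.card by omega)
      intro y w
      have hw : w ∈ UU v J0 := by rw [UU_top hv J0 hJ0c]; trivial
      obtain ⟨b, hb, rfl⟩ := mem_UU_exists v J0 w hw
      have h1 : (fun l => (∑ j, b j • v j) l • y) = ∑ j, fun l => (b j • v j) l • y := by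
        funext l
        rw [Finset.sum_apply, Finset.sum_apply, Finset.sum_smul]
      rw [h1]
      refine Submodule.sum_mem _ fun j _ => ?_
      by_cases hj : j ∈ J0
      · have hUj : ¬ U j ≤ V1 := (Finset.mem_filter.1 (hJ0 hj)).2
        obtain ⟨q, hqU, hqV⟩ := SetLike.not_le_iff_exists.1 hUj
        have hsup : V1 ⊔ Submodule.span K {q} = ⊤ := by
          apply Submodule.eq_top_of_finrank_eq
          have h2 : V1 < V1 ⊔ Submodule.span K {q} := by
            refine lt_of_le_of_ne le_sup_left fun he => hqV ?_
            rw [he]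
            exact Submodule.mem_sup_right (Submodule.mem_span_singleton_self q)
          have h3 := Submodule.finrank_lt_finrank_of_lt h2
          have h4 := Submodule.finrank_le (V1 ⊔ Submodule.span K {q})
          rw [Module.finrank_fintype_fun_eq_card, Fintype.card_fin] at h4 ⊢
          omega
        have hy : y ∈ V1 ⊔ Submodule.span K {q} := by rw [hsup]; trivial
        obtain ⟨y1, hy1, y2, hy2, rfl⟩ := Submodule.mem_sup.1 hy
        obtain ⟨t, rfl⟩ := Submodule.mem_span_singleton.1 hy2
        have h5 : (fun l => (b j • v j) l • (y1 + t • q)) =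
            (fun l => (b j • v j) l • y1) + fun l => (b j • v j) l • (t • q) := by
          funext l
          simp [smul_add]
        rw [h5]
        refine Submodule.add_mem _ (H y1 hy1 _) ⟨Pi.single j ⟨(b j * t) • q, Submodule.smul_mem _ _ hqU⟩, ?_⟩
        funext l
        rw [Psi_apply, Finset.sum_eq_single j]
        · rw [Pi.single_eq_same]
          simp only [Pi.smul_apply, smul_eq_mul, smul_smul]
          congr 1
          ring
        · intro i _ hi
          rw [Pi.single_eq_of_ne hi]
          simp
        · simp
      · rw [hb j hj]
        convert Submodule.zero_mem _ using 1
        funext l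
        simp

theorem span_to_range {K : Type*} [Field K] {m n s r : ℕ} (u : Fin m → Fin s → K)
    (v : Fin n → Fin r → K) (E : Set (Fin m × Fin n)) (Y : Fin s × Fin r → K)
    (hY : Y ∈ Submodule.span K (tv u v '' E)) :
    (fun l k => Y (k, l)) ∈ LinearMap.range (Psi v fun j => UU u (col E j)) := by
  induction hY using Submodule.span_induction with
  | mem Y hY =>
    obtain ⟨⟨i, j⟩, hij, rfl⟩ := hY
    refine ⟨Pi.single j ⟨u i, UU_mem u ((mem_col E i j).2 hij)⟩, ?_⟩
    funext l
    rw [Psi_apply, Finset.sum_eq_single j]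
    · rw [Pi.single_eq_same]
      funext k
      simp [tv, mul_comm]
    · intro b _ hb
      rw [Pi.single_eq_of_ne hb]
      simp
    · simp
  | zero => exact Submodule.zero_mem _
  | add x y _ _ h1 h2 => exact Submodule.add_mem _ h1 h2
  | smul a x _ h1 => exact Submodule.smul_mem _ a h1

theorem T2 {F K : Type*} [Field F] [Field K] [Algebra F K] {m n s r : ℕ} (hs : s ≤ 3)
    (u : Fin m → Fin s → K) (v : Fin n → Fin r → K) (hu : Gen u) (hv : Gen v)
    (hgen : ∀ b : Set (Fin m × Fin n), TensorIndep F m n s r b → LinearIndependent K (fun e : b => tv u v e))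
    (E : Set (Fin m × Fin n)) (hE : ¬ LinearIndependent K (fun e : E => tv u v e))
    (hcol : ∀ j, (col E j).card ≤ s) :
    ∃ V : Submodule K (Fin s → K), r * Module.finrank K V <
      ∑ j, Module.finrank K (UU u (col E j) ⊓ V : Submodule K (Fin s → K)) := by
  rw [li_iff] at hE
  push Not at hE
  obtain ⟨c, hc, hrel, i0, j0, hne⟩ := hE
  let x : Fin n → Fin s → K := fun j => ∑ i, c i j • u i
  refine T2_aux hs hv (fun j => UU u (col E j)) x
    (fun j => sum_mem_UU u _ _ fun i hi => hc i j (by rwa [← mem_col])) ⟨j0, fun h0 => hne ?_⟩ hrel ?_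
  · have hmem : i0 ∈ col E j0 := by
      rw [mem_col]
      by_contra h
      exact hne (hc _ _ h)
    refine Fintype.linearIndependent_iff.1 (hu (col E j0) (hcol j0)) (fun i => c i j0) ?_ ⟨i0, hmem⟩
    rw [Finset.sum_coe_sort (col E j0) (fun i => c i j0 • u i), ← h0]
    refine Finset.sum_subset (Finset.subset_univ _) fun i _ hi => ?_
    rw [hc i j0 (by rwa [← mem_col]), zero_smul]
  · intro y hy w
    induction hy using Submodule.span_induction with
    | mem y hy =>
      obtain ⟨j, rfl⟩ := hy
      have h1 := span_to_range u v E _ (deriv_lemma (F := F) u v hgen E c hc (by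
        intro k l
        have h2 := congrFun (hrel l) k
        simp only [Finset.sum_apply, Pi.smul_apply, smul_eq_mul, Finset.mul_sum, Pi.zero_apply] at h2
        rw [← h2]
        refine Finset.sum_congr rfl fun j _ => Finset.sum_congr rfl fun i _ => by ring) j w)
      convert h1 using 1
      funext l k
      simp [x, mul_comm]
    | zero =>
      convert Submodule.zero_mem _ using 1
      funext l
      simp
    | add a b _ _ h1 h2 =>
      convert Submodule.add_mem _ h1 h2 using 1
      funext l
      simp
    | smul t a _ h1 =>
      convert Submodule.smul_mem _ t h1 using 1
      funext l
      simp [smul_smul, mul_comm]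

theorem case_s3 (p : ℕ) [Fact p.Prime] (m n s r : ℕ) (hs : s ≤ 3) (E : Set (Fin m × Fin n))
    (h : TensorIndep ℚ m n s r E) : TensorIndep (ZMod p) m n s r E := by
  by_contra hcon
  have hu : Gen (genU (ZMod p) m n s r) := fun A hA => genU_li _ m n s r A hA
  have hv : Gen (genV (ZMod p) m n s r) := fun A hA => genV_li _ m n s r A hA
  have hu' : Gen (genU ℚ m n s r) := fun A hA => genU_li _ m n s r A hA
  have hcol : ∀ j, (col E j).card ≤ s := col_card (genU ℚ m n s r) (genV ℚ m n s r) E h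
  obtain ⟨V, hV⟩ := T2 (F := ZMod p) hs (genU (ZMod p) m n s r) (genV (ZMod p) m n s r) hu hv
    (fun b hb => hb) E hcon hcol
  obtain ⟨V', hV'1, hV'2⟩ := transport hs hu hu' (by
    rintro rfl
    exact conc (ZMod p) m n r) V
  have h1 := T1 (genU ℚ m n s r) (genV ℚ m n s r) E h V'
  rw [hV'1] at h1
  have h2 := Finset.sum_le_sum fun j (_ : j ∈ Finset.univ) => hV'2 (col E j) (hcol j)
  omega

theorem char_independence (p : ℕ) [Fact p.Prime] (m n s r : ℕ) (hs : s ≤ m) (hr : r ≤ n)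
    (h : s ≤ 3 ∨ m - s ≤ 1 ∨ (m - s = 2 ∧ n - r = 2)) (E : Set (Fin m × Fin n)) :
    TensorIndep (ZMod p) m n s r E ↔ TensorIndep ℚ m n s r E := by
  constructor
  · exact easy_dir p m n s r E
  · intro hE
    rcases h with h | h | ⟨h1, h2⟩
    · exact case_s3 p m n s r h E hE
    · have h' : m = s ∨ m = s + 1 := by omega
      rcases h' with h' | h'
      · subst h'
        exact case_a0 p m n r hr E hE
      · exact case_a1 p m n s r h' hr E hE
    · exact case_22 p m n s r (by omega) (by omega) E hE
end
end

section
/- Let m, n ≥ 2 and let F be any field. If a bipartite graph G ⊆ [m]×[n] admits an orientation of its edges with no directed cycles and no alternating cycles, then the complement ([m]×[n]) ∖ G is spanning in the tensor matroid T_{m,n}(m−2, n−2, F) (equivalently, G is independent in the dual of T_{m,n}(m−2, n−2, F)). -/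
open scoped Classical

noncomputable section

/-- A cycle of length `2k` in a bipartite graph `G ⊆ [m]×[n]`: distinct `i_1,…,i_k ∈ [m]`
and distinct `j_1,…,j_k ∈ [n]` such that every edge `(i_t, j_t)` and `(i_{t+1}, j_t)`
(indices mod `k`) lies in `G`. -/
def IsCycle {m n : ℕ} (G : Set (Fin m × Fin n)) (k : ℕ)
    (i : ZMod k → Fin m) (j : ZMod k → Fin n) : Prop :=
  2 ≤ k ∧ Function.Injective i ∧ Function.Injective j ∧
    (∀ t, (i t, j t) ∈ G) ∧ (∀ t, (i (t + 1), j t) ∈ G)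

/-- An orientation of the edges of `G` is a map `o` assigning to each edge a direction;
`o e = true` means the edge `e` is oriented from its `[m]`-endpoint to its `[n]`-endpoint.
The orientation is good if no cycle of `G` is directed (all edges oriented in the
direction of some traversal) and no cycle of `G` is alternating (every vertex of the
cycle is a source or a sink for the two incident cycle edges). -/
def GoodOrientation {m n : ℕ} (G : Set (Fin m × Fin n)) (o : Fin m × Fin n → Bool) : Prop :=
  ∀ (k : ℕ) (i : ZMod k → Fin m) (j : ZMod k → Fin n), IsCycle G k i j →
    (¬ ((∀ t, o (i t, j t) = true ∧ o (i (t + 1), j t) = false) ∨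
        (∀ t, o (i t, j t) = false ∧ o (i (t + 1), j t) = true))) ∧
    (¬ (∀ t, o (i t, j t) = o (i (t + 1), j t) ∧ o (i t, j t) = o (i t, j (t - 1))))

theorem cyc_aux {α β : Type*} (P Q : α → β → Prop) (k : ℕ) (hk : 2 ≤ k) (a : ℕ → α) (b : ℕ → β)
    (hP : ∀ t, P (a t) (b t)) (hQ : ∀ t, Q (a (t+1)) (b t))
    (ha : ∀ s t, s < t → t < k → a s ≠ a t) (hb : ∀ s t, s < t → t < k → b s ≠ b t)
    (hc : Q (a 0) (b (k-1))) :
    ∃ (i : ZMod k → α) (j : ZMod k → β), Function.Injective i ∧ Function.Injective j ∧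
      ∀ t, P (i t) (j t) ∧ Q (i (t+1)) (j t) := by
  have : NeZero k := ⟨by omega⟩
  have : Fact (1 < k) := ⟨by omega⟩
  refine ⟨fun t => a t.val, fun t => b t.val, ?_, ?_, ?_⟩
  · intro x y hxy
    apply ZMod.val_injective k
    rcases lt_trichotomy x.val y.val with h | h | h
    · exact absurd hxy (ha _ _ h (ZMod.val_lt y))
    · exact h
    · exact absurd hxy.symm (ha _ _ h (ZMod.val_lt x))
  · intro x y hxy
    apply ZMod.val_injective k
    rcases lt_trichotomy x.val y.val with h | h | h
    · exact absurd hxy (hb _ _ h (ZMod.val_lt y))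
    · exact h
    · exact absurd hxy.symm (hb _ _ h (ZMod.val_lt x))
  · intro t
    refine ⟨hP _, ?_⟩
    have h1 : (t+1).val = (t.val + 1) % k := by rw [ZMod.val_add, ZMod.val_one]
    have h2 := ZMod.val_lt t
    by_cases h : t.val + 1 = k
    · have h3 : (t+1).val = 0 := by rw [h1, h, Nat.mod_self]
      have h4 : t.val = k - 1 := by omega
      simp only [h3, h4]; exact hc
    · have h3 : (t+1).val = t.val + 1 := by rw [h1, Nat.mod_eq_of_lt]; omega
      simp only [h3]; exact hQ _

theorem cyc_exists {α β : Type*} [Finite α] (P Q : α → β → Prop) (a : ℕ → α) (b : ℕ → β)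
    (hP : ∀ t, P (a t) (b t)) (hQ : ∀ t, Q (a (t+1)) (b t))
    (ha : ∀ t, a t ≠ a (t+1)) (hb : ∀ t, b t ≠ b (t+1)) :
    ∃ (k : ℕ) (i : ZMod k → α) (j : ZMod k → β), 2 ≤ k ∧
      Function.Injective i ∧ Function.Injective j ∧
      ∀ t, P (i t) (j t) ∧ Q (i (t+1)) (j t) := by
  have hex : ∃ k, 0 < k ∧ ∃ s, a s = a (s+k) ∨ b s = b (s+k) := by
    obtain ⟨x, y, hxy, he⟩ := Finite.exists_ne_map_eq_of_infinite a
    rcases lt_or_gt_of_ne hxy with h | h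
    · exact ⟨y - x, by omega, x, Or.inl (by rw [he]; congr 1; omega)⟩
    · exact ⟨x - y, by omega, y, Or.inl (by rw [← he]; congr 1; omega)⟩
  obtain ⟨hk0, s, hs⟩ := Nat.find_spec hex
  have hmin : ∀ l, l < Nat.find hex → ¬ (0 < l ∧ ∃ s, a s = a (s+l) ∨ b s = b (s+l)) :=
    fun l hl => Nat.find_min hex hl
  generalize Nat.find hex = k at *
  have hk : 2 ≤ k := by
    by_contra hlt
    have : k = 1 := by omega
    subst this
    rcases hs with h | h
    · exact ha _ h
    · exact hb _ h
  have hda : ∀ s t, s < t → t - s < k → a s ≠ a t := by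
    intro s t hst htk he
    exact hmin (t - s) htk ⟨by omega, s, Or.inl (by rw [he]; congr 1; omega)⟩
  have hdb : ∀ s t, s < t → t - s < k → b s ≠ b t := by
    intro s t hst htk he
    exact hmin (t - s) htk ⟨by omega, s, Or.inr (by rw [he]; congr 1; omega)⟩
  refine ⟨k, ?_⟩
  rcases hs with h | h
  · obtain ⟨i, j, h1⟩ := cyc_aux P Q k hk (fun t => a (s+t)) (fun t => b (s+t))
      (fun t => hP _) (fun t => hQ (s+t))
      (fun x y hx hy => hda _ _ (by omega) (by omega))
      (fun x y hx hy => hdb _ _ (by omega) (by omega)) (by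
        have := hQ (s + (k-1))
        rw [show s + (k-1) + 1 = s + k by omega, ← h] at this
        exact this)
    exact ⟨i, j, hk, h1⟩
  · obtain ⟨i, j, h1⟩ := cyc_aux P Q k hk (fun t => a (s+1+t)) (fun t => b (s+1+t))
      (fun t => hP _) (fun t => hQ (s+1+t))
      (fun x y hx hy => hda _ _ (by omega) (by omega))
      (fun x y hx hy => hdb _ _ (by omega) (by omega)) (by
        have := hQ s
        rw [h] at this
        simp only [show s + 1 + (k-1) = s + k by omega]
        exact this)
    exact ⟨i, j, hk, h1⟩

/-- The relation of the orientation. -/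
def orel {m n : ℕ} (G : Set (Fin m × Fin n)) (o : Fin m × Fin n → Bool) :
    Fin m ⊕ Fin n → Fin m ⊕ Fin n → Prop
  | Sum.inl i, Sum.inr j => (i, j) ∈ G ∧ o (i, j) = true
  | Sum.inr j, Sum.inl i => (i, j) ∈ G ∧ o (i, j) = false
  | _, _ => False

theorem orel_wf {m n : ℕ} (G : Set (Fin m × Fin n)) (o : Fin m × Fin n → Bool)
    (h : GoodOrientation G o) : WellFounded (fun x y => orel G o y x) := by
  rw [WellFounded.wellFounded_iff_has_min]
  by_contra hcon
  push Not at hcon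
  obtain ⟨S, hne, hS⟩ := hcon
  have hf : ∀ i : Fin m, ∃ j : Fin n, Sum.inl i ∈ S → Sum.inr j ∈ S ∧ (i,j) ∈ G ∧ o (i,j) = true := by
    intro i
    by_cases hi : Sum.inl i ∈ S
    · obtain ⟨x, hx, hr⟩ := hS _ hi
      rcases x with x | x
      · exact absurd hr (by simp [orel])
      · exact ⟨x, fun _ => ⟨hx, hr⟩⟩
    · obtain ⟨x, hx⟩ := hne
      rcases x with x | x
      · obtain ⟨y, hy, hr⟩ := hS _ hx
        rcases y with y | y
        · exact absurd hr (by simp [orel])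
        · exact ⟨y, fun h => absurd h hi⟩
      · exact ⟨x, fun h => absurd h hi⟩
  have hg : ∀ j : Fin n, ∃ i : Fin m, Sum.inr j ∈ S → Sum.inl i ∈ S ∧ (i,j) ∈ G ∧ o (i,j) = false := by
    intro i
    by_cases hi : Sum.inr i ∈ S
    · obtain ⟨x, hx, hr⟩ := hS _ hi
      rcases x with x | x
      · exact ⟨x, fun _ => ⟨hx, hr⟩⟩
      · exact absurd hr (by simp [orel])
    · obtain ⟨x, hx⟩ := hne
      rcases x with x | x
      · exact ⟨x, fun h => absurd h hi⟩
      · obtain ⟨y, hy, hr⟩ := hS _ hx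
        rcases y with y | y
        · exact ⟨y, fun h => absurd h hi⟩
        · exact absurd hr (by simp [orel])
  choose f hf using hf
  choose g hg using hg
  have hi0 : ∃ i0 : Fin m, Sum.inl i0 ∈ S := by
    obtain ⟨x, hx⟩ := hne
    rcases x with x | x
    · exact ⟨x, hx⟩
    · exact ⟨g x, (hg x hx).1⟩
  obtain ⟨i0, hi0⟩ := hi0
  let a : ℕ → Fin m := fun t => (fun i => g (f i))^[t] i0
  have hasucc : ∀ t, a (t+1) = g (f (a t)) := fun t => Function.iterate_succ_apply' _ _ _
  have haS : ∀ t, Sum.inl (a t) ∈ S := by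
    intro t
    induction t with
    | zero => exact hi0
    | succ t ih => rw [hasucc]; exact (hg _ (hf _ ih).1).1
  have hP : ∀ t, (a t, f (a t)) ∈ G ∧ o (a t, f (a t)) = true := fun t => (hf _ (haS t)).2
  have hQ : ∀ t, (a (t+1), f (a t)) ∈ G ∧ o (a (t+1), f (a t)) = false := by
    intro t
    rw [hasucc]
    exact (hg _ (hf _ (haS t)).1).2
  obtain ⟨k, i, j, hk, hi, hj, hc⟩ := cyc_exists (fun i j => (i,j) ∈ G ∧ o (i,j) = true)
    (fun i j => (i,j) ∈ G ∧ o (i,j) = false) a (fun t => f (a t)) hP hQ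
    (by
      intro t he
      have h1 := (hP t).2
      have h2 := (hQ t).2
      rw [← he, h1] at h2
      exact absurd h2 (by simp))
    (by
      intro t he
      have h1 := (hP (t+1)).2
      have h2 := (hQ t).2
      rw [← he, h2] at h1
      exact absurd h1 (by simp))
  exact (h k i j ⟨hk, hi, hj, fun t => (hc t).1.1, fun t => (hc t).2.1⟩).1
    (Or.inl fun t => ⟨(hc t).1.2, (hc t).2.2⟩)

theorem exists_weight {m n : ℕ} (G : Set (Fin m × Fin n)) (o : Fin m × Fin n → Bool)
    (h : GoodOrientation G o) : ∃ (p : Fin m → ℕ) (q : Fin n → ℕ),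
      ∀ i j, (i,j) ∈ G → (o (i,j) = true → q j < p i) ∧ (o (i,j) = false → p i < q j) := by
  have wf := (orel_wf G o h).transGen
  set R := Relation.TransGen (fun x y => orel G o y x) with hR
  let w : Fin m ⊕ Fin n → ℕ := fun v => (Finset.univ.filter (fun u => R u v)).card
  have hw : ∀ u v, orel G o v u → w u < w v := by
    intro u v huv
    have huv' : R u v := Relation.TransGen.single huv
    apply Finset.card_lt_card
    rw [Finset.ssubset_iff_of_subset]
    · refine ⟨u, by simpa using huv', ?_⟩
      simp only [Finset.mem_filter, Finset.mem_univ, true_and]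
      intro hh
      exact wf.irrefl.irrefl u hh
    · intro x hx
      simp only [Finset.mem_filter, Finset.mem_univ, true_and] at hx ⊢
      exact hx.trans huv'
  exact ⟨fun i => w (Sum.inl i), fun j => w (Sum.inr j), fun i j hij =>
    ⟨fun ho => hw _ _ ⟨hij, ho⟩, fun ho => hw _ _ ⟨hij, ho⟩⟩⟩

theorem forest_zero_s14 {m n : ℕ} {F : Type*} [Field F] (G : Set (Fin m × Fin n))
    (o : Fin m × Fin n → Bool) (h : GoodOrientation G o) (c : Bool)
    (N : Fin m → Fin n → F) (hN : ∀ i j, N i j ≠ 0 → (i,j) ∈ G ∧ o (i,j) = c)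
    (hr : ∀ i, ∑ j, N i j = 0) (hcol : ∀ j, ∑ i, N i j = 0) : ∀ i j, N i j = 0 := by
  by_contra hcon
  push Not at hcon
  obtain ⟨i0, j0, h0⟩ := hcon
  have hi' : ∀ i j, N i j ≠ 0 → ∃ i', i' ≠ i ∧ N i' j ≠ 0 := by
    intro i j hij
    by_contra hh
    push Not at hh
    apply hij
    rw [← hcol j, Finset.sum_eq_single i (fun b _ hb => hh b hb) (by simp)]
  have hj' : ∀ i j, N i j ≠ 0 → ∃ j', j' ≠ j ∧ N i j' ≠ 0 := by
    intro i j hij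
    by_contra hh
    push Not at hh
    apply hij
    rw [← hr i, Finset.sum_eq_single j (fun b _ hb => hh b hb) (by simp)]
  have hstep : ∀ e : {e : Fin m × Fin n // N e.1 e.2 ≠ 0},
      ∃ e' : {e : Fin m × Fin n // N e.1 e.2 ≠ 0}, e'.1.1 ≠ e.1.1 ∧ e'.1.2 ≠ e.1.2 ∧
        N e'.1.1 e.1.2 ≠ 0 := by
    rintro ⟨⟨i, j⟩, he⟩
    obtain ⟨i', h1, h2⟩ := hi' i j he
    obtain ⟨j', h3, h4⟩ := hj' i' j h2
    exact ⟨⟨(i', j'), h4⟩, h1, h3, h2⟩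
  choose f hf using hstep
  let e : ℕ → {e : Fin m × Fin n // N e.1 e.2 ≠ 0} := fun t => f^[t] ⟨(i0, j0), h0⟩
  have hsucc : ∀ t, e (t+1) = f (e t) := fun t => Function.iterate_succ_apply' _ _ _
  obtain ⟨k, i, j, hk, hi, hj, hc⟩ := cyc_exists (fun i j => N i j ≠ 0)
    (fun i j => N i j ≠ 0) (fun t => (e t).1.1) (fun t => (e t).1.2) (fun t => (e t).2)
    (fun t => by simp only [hsucc]; exact (hf _).2.2)
    (fun t => by simp only [hsucc]; exact (hf _).1.symm)
    (fun t => by simp only [hsucc]; exact (hf _).2.1.symm)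
  refine (h k i j ⟨hk, hi, hj, fun t => (hN _ _ (hc t).1).1, fun t => (hN _ _ (hc t).2).1⟩).2 ?_
  intro t
  have h3 := (hc (t-1)).2
  rw [sub_add_cancel] at h3
  rw [(hN _ _ (hc t).1).2, (hN _ _ (hc t).2).2, (hN _ _ h3).2]
  simp

/-- The polynomial system. -/
def PSys {m n : ℕ} {F : Type*} [Field F] (G : Set (Fin m × Fin n)) (p : Fin m → ℕ) (q : Fin n → ℕ)
    (N : Fin m → Fin n → Polynomial F) : Prop :=
  (∀ i j, (i,j) ∉ G → N i j = 0) ∧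
  (∀ i, ∑ j, Polynomial.X ^ (q j - p i) * N i j = 0) ∧
  (∀ i, ∑ j, Polynomial.X ^ (p i - q j) * N i j = 0) ∧
  (∀ j, ∑ i, Polynomial.X ^ (q j - p i) * N i j = 0) ∧
  (∀ j, ∑ i, Polynomial.X ^ (p i - q j) * N i j = 0)

theorem psys_dvd {m n : ℕ} {F : Type*} [Field F] (G : Set (Fin m × Fin n))
    (o : Fin m × Fin n → Bool) (h : GoodOrientation G o) (p : Fin m → ℕ) (q : Fin n → ℕ)
    (hpq : ∀ i j, (i,j) ∈ G → (o (i,j) = true → q j < p i) ∧ (o (i,j) = false → p i < q j))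
    (N : Fin m → Fin n → Polynomial F) (hN : PSys G p q N) : ∀ i j, Polynomial.X ∣ N i j := by
  obtain ⟨h0, h1, h2, h3, h4⟩ := hN
  have e1 : ∀ i j, Polynomial.eval 0 (Polynomial.X ^ (q j - p i) * N i j) =
      if (i,j) ∈ G ∧ o (i,j) = true then Polynomial.eval 0 (N i j) else 0 := by
    intro i j
    by_cases hG : (i,j) ∈ G
    · have := hpq i j hG
      cases ho : o (i,j)
      · have h5 := this.2 ho
        have h6 : q j - p i ≠ 0 := by omega
        simp [h6]
      · have h5 := this.1 ho
        have h6 : q j - p i = 0 := by omega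
        simp [h6, hG]
    · simp [h0 i j hG]
  have e2 : ∀ i j, Polynomial.eval 0 (Polynomial.X ^ (p i - q j) * N i j) =
      if (i,j) ∈ G ∧ o (i,j) = false then Polynomial.eval 0 (N i j) else 0 := by
    intro i j
    by_cases hG : (i,j) ∈ G
    · have := hpq i j hG
      cases ho : o (i,j)
      · have h5 := this.2 ho
        have h6 : p i - q j = 0 := by omega
        simp [h6, hG]
      · have h5 := this.1 ho
        have h6 : p i - q j ≠ 0 := by omega
        simp [h6]
    · simp [h0 i j hG]
  have z1 := forest_zero_s14 G o h true
    (fun i j => if (i,j) ∈ G ∧ o (i,j) = true then Polynomial.eval 0 (N i j) else 0)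
    (fun i j hh => by by_contra hn; simp [hn] at hh)
    (fun i => by
      have := congrArg (Polynomial.eval 0) (h1 i)
      simpa only [Polynomial.eval_finsetSum, e1, Polynomial.eval_zero] using this)
    (fun j => by
      have := congrArg (Polynomial.eval 0) (h3 j)
      simpa only [Polynomial.eval_finsetSum, e1, Polynomial.eval_zero] using this)
  have z2 := forest_zero_s14 G o h false
    (fun i j => if (i,j) ∈ G ∧ o (i,j) = false then Polynomial.eval 0 (N i j) else 0)
    (fun i j hh => by by_contra hn; simp [hn] at hh)
    (fun i => by
      have := congrArg (Polynomial.eval 0) (h2 i)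
      simpa only [Polynomial.eval_finsetSum, e2, Polynomial.eval_zero] using this)
    (fun j => by
      have := congrArg (Polynomial.eval 0) (h4 j)
      simpa only [Polynomial.eval_finsetSum, e2, Polynomial.eval_zero] using this)
  intro i j
  by_cases hG : (i,j) ∈ G
  · rw [Polynomial.X_dvd_iff, Polynomial.coeff_zero_eq_eval_zero]
    cases ho : o (i,j)
    · simpa [hG, ho] using z2 i j
    · simpa [hG, ho] using z1 i j
  · simp [h0 i j hG]

theorem psys_zero {m n : ℕ} {F : Type*} [Field F] (G : Set (Fin m × Fin n))
    (o : Fin m × Fin n → Bool) (h : GoodOrientation G o) (p : Fin m → ℕ) (q : Fin n → ℕ)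
    (hpq : ∀ i j, (i,j) ∈ G → (o (i,j) = true → q j < p i) ∧ (o (i,j) = false → p i < q j))
    (N : Fin m → Fin n → Polynomial F) (hN : PSys G p q N) : ∀ i j, N i j = 0 := by
  have key : ∀ k : ℕ, ∀ N : Fin m → Fin n → Polynomial F, PSys G p q N →
      ∀ i j, Polynomial.X ^ k ∣ N i j := by
    intro k
    induction k with
    | zero => intro N _ i j; simp
    | succ k ih =>
      intro N hN
      have hd := psys_dvd G o h p q hpq N hN
      choose N' hN' using hd
      have hX : (Polynomial.X : Polynomial F) ≠ 0 := Polynomial.X_ne_zero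
      have hs : PSys G p q N' := by
        obtain ⟨h0, h1, h2, h3, h4⟩ := hN
        simp only [hN', mul_left_comm _ (Polynomial.X : Polynomial F), ← Finset.mul_sum,
          mul_eq_zero, hX, false_or] at h0 h1 h2 h3 h4
        exact ⟨h0, h1, h2, h3, h4⟩
      intro i j
      rw [hN', pow_succ']
      exact mul_dvd_mul_left _ (ih N' hs i j)
  intro i j
  by_contra hne
  have h1 := Polynomial.natDegree_le_of_dvd (key ((N i j).natDegree + 1) N hN i j) hne
  rw [Polynomial.natDegree_X_pow] at h1
  omega

theorem lsys_zero {m n : ℕ} {F : Type*} [Field F] (G : Set (Fin m × Fin n))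
    (o : Fin m × Fin n → Bool) (h : GoodOrientation G o) (p : Fin m → ℕ) (q : Fin n → ℕ)
    (hpq : ∀ i j, (i,j) ∈ G → (o (i,j) = true → q j < p i) ∧ (o (i,j) = false → p i < q j))
    (T : FractionRing (Polynomial F))
    (hT : T = algebraMap (Polynomial F) (FractionRing (Polynomial F)) Polynomial.X)
    (M : Fin m → Fin n → FractionRing (Polynomial F))
    (h0 : ∀ i j, (i,j) ∉ G → M i j = 0)
    (h1 : ∀ i, ∑ j, M i j = 0) (h2 : ∀ i, ∑ j, (T ^ q j)⁻¹ * M i j = 0)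
    (h3 : ∀ j, ∑ i, M i j = 0) (h4 : ∀ j, ∑ i, T ^ p i * M i j = 0) : ∀ i j, M i j = 0 := by
  have hT0 : T ≠ 0 := by
    rw [hT]
    simp
  let N : Fin m → Fin n → FractionRing (Polynomial F) := fun i j => (T ^ (q j - p i))⁻¹ * M i j
  obtain ⟨b, hb⟩ := IsLocalization.exist_integer_multiples_of_finite
    (nonZeroDivisors (Polynomial F)) (fun e : Fin m × Fin n => N e.1 e.2)
  have hb0 : algebraMap (Polynomial F) (FractionRing (Polynomial F)) b ≠ 0 := by
    simp
  have hb' : ∀ i j, ∃ x : Polynomial F, algebraMap _ (FractionRing (Polynomial F)) x =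
      algebraMap _ (FractionRing (Polynomial F)) (b : Polynomial F) * N i j := by
    intro i j
    obtain ⟨x, hx⟩ := hb (i,j)
    exact ⟨x, by rw [hx, Algebra.smul_def]⟩
  choose N' hN' using hb'
  set B := algebraMap (Polynomial F) (FractionRing (Polynomial F)) b with hB
  have hinj := IsFractionRing.injective (Polynomial F) (FractionRing (Polynomial F))
  have q1 : ∀ i j, T ^ (q j - p i) * (B * N i j) = B * M i j := by
    intro i j
    simp only [N]
    field_simp
  have hpow : ∀ i j, T ^ (p i - q j) * T ^ q j = T ^ (q j - p i) * T ^ p i := by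
    intro i j
    rw [← pow_add, ← pow_add]; congr 1; omega
  have q2 : ∀ i j, T ^ (p i - q j) * (B * N i j) = B * T ^ p i * ((T ^ q j)⁻¹ * M i j) := by
    intro i j
    simp only [N]
    have := hpow i j
    field_simp
    linear_combination M i j * this
  have hs : PSys G p q N' := by
    refine ⟨?_, ?_, ?_, ?_, ?_⟩
    · intro i j hij
      apply hinj
      rw [hN', map_zero]
      simp [N, h0 i j hij]
    · intro i
      apply hinj
      simp only [map_sum, map_mul, map_pow, hN', ← hT, q1, map_zero]
      rw [← Finset.mul_sum, h1, mul_zero]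
    · intro i
      apply hinj
      simp only [map_sum, map_mul, map_pow, hN', ← hT, q2, map_zero]
      rw [← Finset.mul_sum, h2, mul_zero]
    · intro j
      apply hinj
      simp only [map_sum, map_mul, map_pow, hN', ← hT, q1, map_zero]
      rw [← Finset.mul_sum, h3, mul_zero]
    · intro j
      apply hinj
      simp only [map_sum, map_mul, map_pow, hN', ← hT, q2, map_zero]
      have : ∀ i, B * T ^ p i * ((T ^ q j)⁻¹ * M i j) = B * (T ^ q j)⁻¹ * (T ^ p i * M i j) := by
        intro i; ring
      simp only [this]
      rw [← Finset.mul_sum, h4, mul_zero]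
  have hz := psys_zero G o h p q hpq N' hs
  intro i j
  have h5 := hN' i j
  rw [hz, map_zero] at h5
  have h6 := q1 i j
  rw [← h5, mul_zero] at h6
  exact (mul_eq_zero.1 h6.symm).resolve_left hb0

theorem exists_kernel {L : Type*} [Field L] (m : ℕ) (c : Fin m → L) :
    ∃ u : Fin (m-2) → Fin m → L, LinearIndependent L u ∧
      ∀ k, ∑ i, u k i = 0 ∧ ∑ i, c i * u k i = 0 := by
  let P : (Fin m → L) →ₗ[L] L × L :=
    LinearMap.prod (∑ i, LinearMap.proj i) (∑ i, c i • LinearMap.proj i)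
  have hr := LinearMap.finrank_range_add_finrank_ker P
  have h2 : Module.finrank L (LinearMap.range P) ≤ 2 := by
    refine (Submodule.finrank_le _).trans ?_
    simp
  have h3 : m - 2 ≤ Module.finrank L (LinearMap.ker P) := by
    simp at hr
    omega
  let bs := Module.finBasis L (LinearMap.ker P)
  refine ⟨fun k => (bs (Fin.castLE h3 k)).1, ?_, ?_⟩
  · have := bs.linearIndependent.comp _ (Fin.castLE_injective h3)
    exact this.map' (LinearMap.ker P).subtype (Submodule.ker_subtype _)
  · intro k
    have hmem := (bs (Fin.castLE h3 k)).2
    beta_reduce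
    generalize (bs (Fin.castLE h3 k)).1 = x at hmem ⊢
    rw [LinearMap.mem_ker] at hmem
    simpa [P, Prod.ext_iff] using hmem

theorem span_special {m n : ℕ} {F : Type*} [Field F] (G : Set (Fin m × Fin n))
    (h : ∃ o : Fin m × Fin n → Bool, GoodOrientation G o) :
    ∃ (u : Fin (m-2) → Fin m → FractionRing (Polynomial F))
      (v : Fin (n-2) → Fin n → FractionRing (Polynomial F)),
      Submodule.span (FractionRing (Polynomial F))
        ((fun (e : Fin m × Fin n) (kl : Fin (m-2) × Fin (n-2)) => u kl.1 e.1 * v kl.2 e.2) '' Gᶜ)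
        = ⊤ := by
  obtain ⟨o, ho⟩ := h
  obtain ⟨p, q, hpq⟩ := exists_weight G o ho
  let T : FractionRing (Polynomial F) := algebraMap (Polynomial F) _ Polynomial.X
  obtain ⟨u, hu, hu'⟩ := exists_kernel m (fun i => T ^ p i)
  obtain ⟨v, hv, hv'⟩ := exists_kernel n (fun j => (T ^ q j)⁻¹)
  refine ⟨u, v, ?_⟩
  by_contra hne
  obtain ⟨f, hf0, hf⟩ := Submodule.exists_le_ker_of_lt_top _ (lt_top_iff_ne_top.2 hne)
  let A : Fin (m-2) → Fin (n-2) → FractionRing (Polynomial F) := fun k l => f (Pi.single (k,l) 1)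
  have hfA : ∀ x, f x = ∑ k, ∑ l, x (k,l) * A k l := by
    intro x
    rw [← Fintype.sum_prod_type' (f := fun k l => x (k,l) * A k l)]
    conv_lhs => rw [pi_eq_sum_univ' x]
    simp [A, Pi.single]
  let M : Fin m → Fin n → FractionRing (Polynomial F) :=
    fun i j => ∑ k, ∑ l, u k i * v l j * A k l
  have hM0 : ∀ i j, M i j = 0 := by
    refine lsys_zero G o ho p q hpq T rfl M ?_ ?_ ?_ ?_ ?_
    · intro i j hij
      have : f (fun kl => u kl.1 i * v kl.2 j) = 0 := 
        hf (Submodule.subset_span ⟨(i,j), hij, rfl⟩)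
      rw [hfA] at this
      exact this
    · intro i
      have : ∑ j, M i j = ∑ k, ∑ l, u k i * A k l * ∑ j, v l j := by
        simp only [M, Finset.mul_sum]
        rw [Finset.sum_comm]
        refine Finset.sum_congr rfl fun k _ => ?_
        rw [Finset.sum_comm]
        refine Finset.sum_congr rfl fun l _ => Finset.sum_congr rfl fun j _ => by ring
      rw [this]
      simp [(hv' _).1]
    · intro i
      have : ∑ j, (T ^ q j)⁻¹ * M i j = ∑ k, ∑ l, u k i * A k l * ∑ j, (T ^ q j)⁻¹ * v l j := by
        simp only [M, Finset.mul_sum]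
        rw [Finset.sum_comm]
        refine Finset.sum_congr rfl fun k _ => ?_
        rw [Finset.sum_comm]
        refine Finset.sum_congr rfl fun l _ => Finset.sum_congr rfl fun j _ => by ring
      rw [this]
      simp only [(hv' _).2, mul_zero, Finset.sum_const_zero]
    · intro j
      have : ∑ i, M i j = ∑ k, ∑ l, v l j * A k l * ∑ i, u k i := by
        simp only [M, Finset.mul_sum]
        rw [Finset.sum_comm]
        refine Finset.sum_congr rfl fun k _ => ?_
        rw [Finset.sum_comm]
        refine Finset.sum_congr rfl fun l _ => Finset.sum_congr rfl fun j _ => by ring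
      rw [this]
      simp [(hu' _).1]
    · intro j
      have : ∑ i, T ^ p i * M i j = ∑ k, ∑ l, v l j * A k l * ∑ i, T ^ p i * u k i := by
        simp only [M, Finset.mul_sum]
        rw [Finset.sum_comm]
        refine Finset.sum_congr rfl fun k _ => ?_
        rw [Finset.sum_comm]
        refine Finset.sum_congr rfl fun l _ => Finset.sum_congr rfl fun j _ => by ring
      rw [this]
      simp only [(hu' _).2, mul_zero, Finset.sum_const_zero]
  have hA1 : ∀ j k, ∑ l, v l j * A k l = 0 := by
    intro j
    apply Fintype.linearIndependent_iff.1 hu (fun k => ∑ l, v l j * A k l)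
    ext i
    rw [Finset.sum_apply]
    simp only [Pi.smul_apply, smul_eq_mul, Pi.zero_apply]
    rw [← hM0 i j]
    refine Finset.sum_congr rfl fun k _ => ?_
    rw [Finset.sum_mul]
    refine Finset.sum_congr rfl fun l _ => by ring
  have hA : ∀ k l, A k l = 0 := by
    intro k
    apply Fintype.linearIndependent_iff.1 hv (fun l => A k l)
    ext j
    rw [Finset.sum_apply]
    simp only [Pi.smul_apply, smul_eq_mul, Pi.zero_apply]
    rw [← hA1 j k]
    refine Finset.sum_congr rfl fun l _ => by ring
  apply hf0
  refine LinearMap.ext fun x => ?_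
  rw [hfA]
  simp [hA]

theorem span_transfer {R K L ι κ : Type*} [CommRing R] [IsDomain R] [Field K] [Algebra R K]
    [IsFractionRing R K] [Field L] (φ : R →+* L) [Fintype κ]
    (W : ι → κ → R) (E : Set ι)
    (h : Submodule.span L ((fun e k => φ (W e k)) '' E) = ⊤) :
    Submodule.span K ((fun e k => algebraMap R K (W e k)) '' E) = ⊤ := by
  obtain ⟨s, hsE, hspan, hli⟩ := exists_linearIndependent L ((fun e k => φ (W e k)) '' E)
  rw [h] at hspan
  let bs : Module.Basis s L (κ → L) := Module.Basis.mk hli (by simp [hspan])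
  let σ : κ ≃ s := (Pi.basisFun L κ).indexEquiv bs
  have hg : ∀ k : κ, ∃ e ∈ E, (fun l => φ (W e l)) = (σ k : κ → L) := fun k => hsE (σ k).2
  choose g hgE hg using hg
  let D : Matrix κ κ R := Matrix.of fun k l => W (g k) l
  have hD : φ D.det ≠ 0 := by
    rw [RingHom.map_det]
    have : LinearIndependent L (φ.mapMatrix D).row := by
      have h1 := hli.comp σ σ.injective
      have h2 : (φ.mapMatrix D).row = Subtype.val ∘ σ := by
        ext k l
        exact congrFun (hg k) l
      rw [h2]
      exact h1
    rw [Matrix.linearIndependent_rows_iff_isUnit, Matrix.isUnit_iff_isUnit_det] at this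
    exact this.ne_zero
  have hD' : D.det ≠ 0 := fun h0 => hD (by rw [h0, map_zero])
  have hK : LinearIndependent K ((algebraMap R K).mapMatrix D).row := by
    rw [Matrix.linearIndependent_rows_iff_isUnit, Matrix.isUnit_iff_isUnit_det, ← RingHom.map_det,
      isUnit_iff_ne_zero]
    intro h0
    exact hD' (IsFractionRing.injective R K (by rw [h0, map_zero]))
  have htop := hK.span_eq_top_of_card_eq_finrank' (by simp)
  rw [eq_top_iff, ← htop]
  apply Submodule.span_mono
  rintro _ ⟨k, rfl⟩
  exact ⟨g k, hgE k, rfl⟩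

theorem orientation_implies_spanning (F : Type*) [Field F] (m n : ℕ) (hm : 2 ≤ m) (hn : 2 ≤ n)
    (G : Set (Fin m × Fin n)) (h : ∃ o : Fin m × Fin n → Bool, GoodOrientation G o) :
    TensorSpanning F m n (m - 2) (n - 2) Gᶜ := by
  obtain ⟨u, v, huv⟩ := span_special (F := F) G h
  let φ : MvPolynomial ((Fin m × Fin (m-2)) ⊕ (Fin n × Fin (n-2))) F →+*
      FractionRing (Polynomial F) :=
    (MvPolynomial.aeval (Sum.elim (fun x => u x.2 x.1) (fun x => v x.2 x.1))).toRingHom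
  have := span_transfer (K := TField F m n (m-2) (n-2)) φ
    (fun (e : Fin m × Fin n) (kl : Fin (m-2) × Fin (n-2)) =>
      MvPolynomial.X (Sum.inl (e.1, kl.1)) * MvPolynomial.X (Sum.inr (e.2, kl.2))) Gᶜ (by
      rw [← huv]
      congr 2
      ext e kl
      simp [φ])
  unfold TensorSpanning
  rw [← this]
  congr 2
  ext e kl
  simp [tvec]
end
end
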